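/- arXiv:1112.6064 — 2 statements merged into one kernel-verified Lean document; each statement's English description precedes it below -/
import Mathlib

section
/- Let N≥1 and let K:[0,T]×ℝ^N×ℝ^N→[0,∞) satisfy the weak-(*)-kernel condition for parameters 0<α<2, 0<ζ≤∞, 0≤ω<α, 1≤Λ<∞ (and, when α≥1, α−1<ν<1, 0<s₀≤∞, 0≤τ<∞ with ν+ω<min{N,α}). Then for every f ∈ C²(ℝ^N)∩L¹(ℝ^N) with f and its first and second derivatives bounded, and every t∈[0,T]: ∫_{ℝ^N} T^K_t(f)(x) dx = 0. -/
/-!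
Write `T_ε f (x) = ∫_{|x-y| ≥ ε} (f x - f y) K(x,y) dy` at a fixed time, so that `T f` is the
pointwise limit of `T_ε f`. If `T f` is not integrable, its Bochner integral is `0` by convention.
Otherwise `∫ T f = lim_R ∫ T f · φ(·/R)` for a smooth bump function `φ` with `φ 0 = 1`, and
it suffices to show that these pairings tend to `0`.

For fixed `ε`, Fubini and the symmetry of `K` give `∫ T_ε f · φ_R = ∫ f · T_ε φ_R`
(`truncated_symm`). A second order Taylor expansion on `|z| < r₀` gives, uniformly in `x` and `ε`,
`|T_ε g| ≤ B₂ ∫_{|z|<r₀} |z|² J + B₁ C + ∫_{|z|≥r₀} min(2B₀, B₁|z|) J` (`truncated_bound`), where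
`J(z) = Λ (1 + |z|^ω) |z|^{-N-α}` and `B₀, B₁, B₂` bound `g` and its first two derivatives. With
`g = f` this allows `ε → 0` under the integral; with `g = φ_R`, where `B₁ = O(1/R)` and
`B₂ = O(1/R²)`, it bounds `|∫ f · T_ε φ_R|` by `‖f‖₁ η(R)` with `η(R) → 0` (`mean_zero_of_bounds`).

The constant `C` bounds the first moments `∫_{ε≤|z|<r₀} K(x,x+z) z dz`. For `α < 1` it exists
because `|z| J` is integrable near `0` (`shell_moment_bound_of_lt_one`). For `α ≥ 1` it comes from
polar coordinates and the cancellation condition, as `∫_0 s^{ν-α} ds < ∞` (`shell_moment_bound`).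

Polar coordinates in Mathlib use the cone measure `Measure.toSphere`, while the cancellation
condition uses the Hausdorff measure `μH[N-1]` on the sphere. The former is a finite multiple of
the latter (`toSphere_eq_smul_hausdorff`), because both are finite and rotation invariant and such
measures on the sphere are unique up to a factor (`measure_unique_of_invariant`).
-/

open MeasureTheory Filter Set
open scoped ENNReal NNReal

noncomputable section

/-- The principal value integral statement `T^K_t f x = L`, i.e.
`lim_{ε→0⁺} ∫_{|x−y|≥ε} [f(x)−f(y)] K(t,x,y) dy = L`. -/
def HasPVIntegral (N : ℕ)
    (K : ℝ → EuclideanSpace ℝ (Fin N) → EuclideanSpace ℝ (Fin N) → ℝ) (t : ℝ)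
    (f : EuclideanSpace ℝ (Fin N) → ℝ) (x : EuclideanSpace ℝ (Fin N)) (L : ℝ) : Prop :=
  Filter.Tendsto (fun ε : ℝ =>
      ∫ y in {y : EuclideanSpace ℝ (Fin N) | ε ≤ ‖x - y‖}, (f x - f y) * K t x y)
    (nhdsWithin 0 (Set.Ioi 0)) (nhds L)

/-- The associated function `k(t,x,z) := K(t,x,x+z)·|z|^{N+α}`. -/
def kAssoc (N : ℕ) (α : ℝ)
    (K : ℝ → EuclideanSpace ℝ (Fin N) → EuclideanSpace ℝ (Fin N) → ℝ)
    (t : ℝ) (x z : EuclideanSpace ℝ (Fin N)) : ℝ :=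
  K t x (x + z) * ‖z‖ ^ ((N : ℝ) + α)

/-- The vector-valued integral `∫_{S^{N−1}} g(σ)·σ dσ` over the unit sphere,
with respect to the (N−1)-dimensional Hausdorff (surface) measure. -/
def sphereVecInt (N : ℕ) (g : EuclideanSpace ℝ (Fin N) → ℝ) : EuclideanSpace ℝ (Fin N) :=
  ∫ σ in Metric.sphere (0 : EuclideanSpace ℝ (Fin N)) 1, g σ • σ ∂(μH[(N : ℝ) - 1])

/-- The weak-(*)-kernel condition on the time interval `[0,T]` (with `T ∈ (0,∞]`). -/
structure WeakStarKernel (N : ℕ) (T : ℝ≥0∞)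
    (K : ℝ → EuclideanSpace ℝ (Fin N) → EuclideanSpace ℝ (Fin N) → ℝ)
    (α : ℝ) (ζ : ℝ≥0∞) (ω Λ ν : ℝ) (s₀ : ℝ≥0∞) (τ : ℝ) : Prop where
  measurable : Measurable fun p : ℝ × EuclideanSpace ℝ (Fin N) × EuclideanSpace ℝ (Fin N) =>
    K p.1 p.2.1 p.2.2
  nonneg : ∀ t x y, 0 ≤ K t x y
  symm : ∀ t x y, 0 ≤ t → ENNReal.ofReal t ≤ T → K t x y = K t y x
  lower : ∀ t x y, 0 ≤ t → ENNReal.ofReal t ≤ T → x ≠ y → ENNReal.ofReal ‖x - y‖ ≤ ζ →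
    Λ⁻¹ ≤ K t x y * ‖x - y‖ ^ ((N : ℝ) + α)
  upper : ∀ t x y, 0 ≤ t → ENNReal.ofReal t ≤ T → x ≠ y →
    K t x y * ‖x - y‖ ^ ((N : ℝ) + α) ≤ Λ * (1 + ‖x - y‖ ^ ω)
  cancel : 1 ≤ α → ∀ t x (s : ℝ), 0 ≤ t → ENNReal.ofReal t ≤ T → 0 < s →
    ENNReal.ofReal s < s₀ →
    ‖sphereVecInt N (fun σ => kAssoc N α K t x (s • σ))‖ ≤ τ * s ^ ν

/-- The (*)-kernel condition on the time interval `[0,T]` (with `T ∈ (0,∞]`):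
as the weak condition, but with the local Hölder continuity of `k` replacing
the cancellation condition when `α ≥ 1`. -/
structure StarKernel (N : ℕ) (T : ℝ≥0∞)
    (K : ℝ → EuclideanSpace ℝ (Fin N) → EuclideanSpace ℝ (Fin N) → ℝ)
    (α : ℝ) (ζ : ℝ≥0∞) (ω Λ ν : ℝ) (s₀ : ℝ≥0∞) (τ : ℝ) : Prop where
  measurable : Measurable fun p : ℝ × EuclideanSpace ℝ (Fin N) × EuclideanSpace ℝ (Fin N) =>
    K p.1 p.2.1 p.2.2
  nonneg : ∀ t x y, 0 ≤ K t x y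
  symm : ∀ t x y, 0 ≤ t → ENNReal.ofReal t ≤ T → K t x y = K t y x
  lower : ∀ t x y, 0 ≤ t → ENNReal.ofReal t ≤ T → x ≠ y → ENNReal.ofReal ‖x - y‖ ≤ ζ →
    Λ⁻¹ ≤ K t x y * ‖x - y‖ ^ ((N : ℝ) + α)
  upper : ∀ t x y, 0 ≤ t → ENNReal.ofReal t ≤ T → x ≠ y →
    K t x y * ‖x - y‖ ^ ((N : ℝ) + α) ≤ Λ * (1 + ‖x - y‖ ^ ω)
  holder : 1 ≤ α → ∀ t x z z', 0 ≤ t → ENNReal.ofReal t ≤ T →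
    ENNReal.ofReal ‖z - z'‖ ≤ s₀ → ENNReal.ofReal ‖z‖ ≤ s₀ →
    |kAssoc N α K t x z - kAssoc N α K t x z'| ≤ τ * ‖z - z'‖ ^ ν

/-- `f : ℝ^N → F` together with all of its derivatives is smooth and bounded,
i.e. `f ∈ C^∞(overline{ℝ^N})`. -/
def SmoothBounded {X F : Type*} [NormedAddCommGroup X] [NormedSpace ℝ X]
    [NormedAddCommGroup F] [NormedSpace ℝ F] (f : X → F) : Prop :=
  ContDiff ℝ (⊤ : ℕ∞) f ∧ ∀ n : ℕ, ∃ C : ℝ, ∀ x, ‖iteratedFDeriv ℝ n f x‖ ≤ C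

/-- `sup_x ‖f x‖` as an extended real number (the `L^∞`-norm for continuous `f`). -/
def supENorm {X F : Type*} [NormedAddCommGroup F] (f : X → F) : ℝ≥0∞ :=
  ⨆ x, ENNReal.ofReal ‖f x‖

/-- The Hölder seminorm `[f]_{C^β} = sup_{x≠y} ‖f x − f y‖/‖x−y‖^β`
as an extended real number. -/
def holderSemiENorm {X F : Type*} [NormedAddCommGroup X] [NormedAddCommGroup F]
    (β : ℝ) (f : X → F) : ℝ≥0∞ :=
  ⨆ x, ⨆ y, ENNReal.ofReal (‖f x - f y‖ / ‖x - y‖ ^ β)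

/-- The Hölder norm `‖f‖_{C^β} = ‖f‖_{L^∞} + [f]_{C^β}` as an extended real number. -/
def holderENorm {X F : Type*} [NormedAddCommGroup X] [NormedAddCommGroup F]
    (β : ℝ) (f : X → F) : ℝ≥0∞ :=
  supENorm f + holderSemiENorm β f

/-- `w` is a (pointwise/classical) solution of `∂ₜ w + T^K_t(w(t,·)) = 0` on `[0,T)×ℝ^N`. -/
def IsLinSolution (N : ℕ) (T : ℝ≥0∞)
    (K : ℝ → EuclideanSpace ℝ (Fin N) → EuclideanSpace ℝ (Fin N) → ℝ)
    (w : ℝ → EuclideanSpace ℝ (Fin N) → ℝ) : Prop :=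
  ∀ t x, 0 ≤ t → ENNReal.ofReal t < T →
    ∃ L : ℝ, HasPVIntegral N K t (w t) x L ∧
      HasDerivWithinAt (fun s => w s x) (-L) (Set.Ici 0) t

/-- `w(t,x)` is smooth on `[0,T)×ℝ^N`. -/
def SmoothOnDomain (N : ℕ) (T : ℝ≥0∞) (w : ℝ → EuclideanSpace ℝ (Fin N) → ℝ) : Prop :=
  ContDiffOn ℝ (⊤ : ℕ∞) (fun p : ℝ × EuclideanSpace ℝ (Fin N) => w p.1 p.2)
    {p : ℝ × EuclideanSpace ℝ (Fin N) | 0 ≤ p.1 ∧ ENNReal.ofReal p.1 < T}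

/-- `w ∈ L^∞(0,T;(L¹∩L^∞)(ℝ^N))`. -/
def BddL1Linfty (N : ℕ) (T : ℝ≥0∞) (w : ℝ → EuclideanSpace ℝ (Fin N) → ℝ) : Prop :=
  ∃ C : ℝ, ∀ t, 0 ≤ t → ENNReal.ofReal t < T →
    (∫⁻ x, ENNReal.ofReal |w t x| ≤ ENNReal.ofReal C) ∧ ∀ x, |w t x| ≤ C

/-- The class `𝒰_r` of test functions (for fixed constants `γ` and `A`). -/
def MemU (N : ℕ) (γ A : ℝ) (r : ℝ) (φ : EuclideanSpace ℝ (Fin N) → ℝ) : Prop :=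
  Measurable φ ∧ Integrable φ ∧ (∫ x, φ x) = 0 ∧
    (∃ x₀ : EuclideanSpace ℝ (Fin N),
      ∫⁻ x, ENNReal.ofReal (|φ x| * ‖x - x₀‖ ^ γ) ≤ ENNReal.ofReal (r ^ γ)) ∧
    (∀ x, |φ x| ≤ A / r ^ (N : ℝ)) ∧ (∫⁻ x, ENNReal.ofReal |φ x|) ≤ 1

/-- `φ` is (the restriction to `ℝ^N` of) a Schwartz function. -/
def IsSchwartz (N : ℕ) (φ : EuclideanSpace ℝ (Fin N) → ℝ) : Prop :=
  ∃ ψ : SchwartzMap (EuclideanSpace ℝ (Fin N)) ℝ, ⇑ψ = φ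

/-- The volume of the unit ball in `ℝ^N`. -/
def ballVol (N : ℕ) : ℝ := (volume (Metric.ball (0 : EuclideanSpace ℝ (Fin N)) 1)).toReal

/-- The special radius `ζ₀ := max{(8/V_N)^{1/N}, 2·11^{1/γ}}`. -/
def zeta0 (N : ℕ) (γ : ℝ) : ℝ :=
  max ((8 / ballVol N) ^ (N : ℝ)⁻¹) (2 * 11 ^ γ⁻¹)

/-! ### The surface measure of the unit sphere -/

/-- By compactness it is enough to work locally. Near `p` the sphere is the image, under the inverse
stereographic projection from `-p`, of a bounded piece of the hyperplane orthogonal to `p`; this map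
is locally Lipschitz, and `μH[N-1]` on the hyperplane is a Haar measure. -/
theorem hausdorff_sphere_lt_top (N : ℕ) (hN : 1 ≤ N) :
    (μH[(N : ℝ) - 1] : Measure (EuclideanSpace ℝ (Fin N)))
      (Metric.sphere (0 : EuclideanSpace ℝ (Fin N)) 1) < ∞ := by
  refine (isCompact_sphere (0 : EuclideanSpace ℝ (Fin N)) 1).measure_lt_top_of_nhdsWithin ?_
  intro p hp
  have hp1 : ‖p‖ = 1 := by simpa using hp
  set v : EuclideanSpace ℝ (Fin N) := -p with hvdef
  have hv : ‖v‖ = 1 := by simp [v, hp1]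
  have hv0 : v ≠ 0 := by intro h; simp [h] at hv
  obtain ⟨n, rfl⟩ : ∃ n, N = n + 1 := ⟨N - 1, by omega⟩
  have hfr : Module.finrank ℝ (ℝ ∙ v)ᗮ = n := by
    have : Fact (Module.finrank ℝ (EuclideanSpace ℝ (Fin (n + 1))) = n + 1) := ⟨by simp⟩
    exact Submodule.finrank_orthogonal_span_singleton hv0
  set σ : (ℝ ∙ v)ᗮ → EuclideanSpace ℝ (Fin (n + 1)) := fun w => stereoInvFunAux v w with hσ
  have hσd : ContDiff ℝ 1 σ :=
    contDiff_stereoInvFunAux.comp (ℝ ∙ v)ᗮ.subtypeL.contDiff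
  obtain ⟨C, U, hU, hLip⟩ := (hσd.contDiffAt (x := 0)).exists_lipschitzOnWith
  set V := U ∩ Metric.closedBall 0 1 with hV
  have hVn : V ∈ nhds (0 : (ℝ ∙ v)ᗮ) := inter_mem hU (Metric.closedBall_mem_nhds _ one_pos)
  have hVf : (μH[(n : ℝ)] : Measure (ℝ ∙ v)ᗮ) V < ∞ := by
    have : (μH[(Module.finrank ℝ (ℝ ∙ v)ᗮ : ℝ)] : Measure (ℝ ∙ v)ᗮ) V < ∞ :=
      (measure_mono inter_subset_right).trans_lt (isCompact_closedBall _ _).measure_lt_top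
    rwa [hfr] at this
  refine ⟨σ '' V, ?_, ?_⟩
  · have hcont : ContinuousAt (stereoToFun v) p := by
      refine (continuousOn_stereoToFun (v := v)).continuousAt ?_
      refine IsOpen.mem_nhds ?_ ?_
      · exact isOpen_ne_fun (by fun_prop) continuous_const
      · simp [v, hp1]; norm_num
    have h0 : stereoToFun v p = 0 := by
      have : (ℝ ∙ v)ᗮ.orthogonalProjectionOnto p = 0 := by
        rw [Submodule.orthogonalProjectionOnto_eq_zero_iff]
        rw [Submodule.orthogonal_orthogonal]
        exact Submodule.mem_span_singleton.2 ⟨-1, by simp [v]⟩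
      rw [stereoToFun_apply, this, smul_zero]
    have hev : ∀ᶠ y in nhds p, stereoToFun v y ∈ V := by
      apply hcont.eventually_mem; rwa [h0]
    have hev2 : ∀ᶠ y in nhds p, y ≠ v := by
      refine isOpen_ne.mem_nhds ?_
      intro h
      have : p = -p := h
      have h2 : p = 0 := by
        have h3 : (2 : ℝ) • p = 0 := by
          rw [two_smul]; nth_rewrite 1 [this]; exact neg_add_cancel p
        simpa using h3
      simp [h2] at hp1
    filter_upwards [mem_nhdsWithin_of_mem_nhds hev, mem_nhdsWithin_of_mem_nhds hev2,
      self_mem_nhdsWithin] with y hy hyv hyS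
    refine ⟨_, hy, ?_⟩
    have := stereo_left_inv hv (x := ⟨y, hyS⟩) (by simpa using hyv)
    exact congrArg Subtype.val this
  · have h := (hLip.mono (inter_subset_left : V ⊆ U)).hausdorffMeasure_image_le (d := (n : ℝ))
      (by positivity)
    have hn : ((n + 1 : ℕ) : ℝ) - 1 = n := by push_cast; ring
    rw [hn]
    exact h.trans_lt (ENNReal.mul_lt_top (by simp) hVf)

/-- The orthogonal projection onto a hyperplane does not increase `μH[N-1]`, and the projection of the
sphere contains the unit ball of the hyperplane, which has positive measure. -/
theorem hausdorff_sphere_ne_zero (N : ℕ) (hN : 1 ≤ N) :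
    (μH[(N : ℝ) - 1] : Measure (EuclideanSpace ℝ (Fin N)))
      (Metric.sphere (0 : EuclideanSpace ℝ (Fin N)) 1) ≠ 0 := by
  obtain ⟨n, rfl⟩ : ∃ n, N = n + 1 := ⟨N - 1, by omega⟩
  have hn : ((n + 1 : ℕ) : ℝ) - 1 = n := by push_cast; ring
  rw [hn]
  set v : EuclideanSpace ℝ (Fin (n + 1)) := EuclideanSpace.single 0 1 with hvdef
  have hv : ‖v‖ = 1 := by simp [v]
  have hv0 : v ≠ 0 := by intro h; simp [h] at hv
  have hfr : Module.finrank ℝ (ℝ ∙ v)ᗮ = n := by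
    have : Fact (Module.finrank ℝ (EuclideanSpace ℝ (Fin (n + 1))) = n + 1) := ⟨by simp⟩
    exact Submodule.finrank_orthogonal_span_singleton hv0
  intro h0
  have hle := hausdorffMeasure_orthogonalProjectionOnto_le (𝕜 := ℝ) (ℝ ∙ v)ᗮ (n : ℝ)
    (Metric.sphere 0 1) (by positivity)
  rw [h0] at hle
  have hball : (μH[(n : ℝ)] : Measure (ℝ ∙ v)ᗮ) (Metric.ball 0 1) ≠ 0 := by
    have : (μH[(Module.finrank ℝ (ℝ ∙ v)ᗮ : ℝ)] : Measure (ℝ ∙ v)ᗮ) (Metric.ball 0 1) ≠ 0 :=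
      (Metric.measure_ball_pos _ _ one_pos).ne'
    rwa [hfr] at this
  refine hball (le_antisymm ((measure_mono ?_).trans hle) bot_le)
  intro w hw
  have hw1 : ‖w‖ < 1 := by simpa using hw
  have hw2 : 0 ≤ 1 - ‖w‖ ^ 2 := by nlinarith [norm_nonneg w]
  refine ⟨(w : EuclideanSpace ℝ (Fin (n + 1))) + Real.sqrt (1 - ‖w‖ ^ 2) • v, ?_, ?_⟩
  · have hin : inner ℝ (w : EuclideanSpace ℝ (Fin (n + 1))) (Real.sqrt (1 - ‖w‖ ^ 2) • v) = 0 := by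
      rw [inner_smul_right, Submodule.mem_orthogonal_singleton_iff_inner_left.1 w.2, mul_zero]
    have hc : ‖(w : EuclideanSpace ℝ (Fin (n + 1)))‖ = ‖w‖ := rfl
    have := norm_add_sq_eq_norm_sq_add_norm_sq_of_inner_eq_zero _ _ hin
    rw [norm_smul, hv, mul_one, Real.norm_of_nonneg (Real.sqrt_nonneg _),
      Real.mul_self_sqrt hw2, hc] at this
    rw [mem_sphere_zero_iff_norm]
    nlinarith [norm_nonneg ((w : EuclideanSpace ℝ (Fin (n + 1))) + Real.sqrt (1 - ‖w‖ ^ 2) • v)]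
  · rw [map_add, map_smul, Submodule.orthogonalProjectionOnto_mem_subspace_eq_self]
    have : (ℝ ∙ v)ᗮ.orthogonalProjectionOnto v = 0 := by
      rw [Submodule.orthogonalProjectionOnto_eq_zero_iff, Submodule.orthogonal_orthogonal]
      exact Submodule.mem_span_singleton_self v
    rw [this, smul_zero, add_zero]

/-- Two finite measures on the unit sphere that are invariant under linear isometries are
proportional. Each has a density with respect to `μ₁ + μ₂`, which by the Besicovitch differentiation
theorem is a limit of ratios of measures of balls. By invariance these ratios do not depend on the
centre in the sphere, so both densities are constant. -/
theorem measure_unique_of_invariant {N : ℕ} (μ₁ μ₂ : Measure (EuclideanSpace ℝ (Fin N)))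
    [IsFiniteMeasure μ₁] [IsFiniteMeasure μ₂] (h₁0 : μ₁ ≠ 0)
    (hS₁ : μ₁ (Metric.sphere 0 1)ᶜ = 0) (hS₂ : μ₂ (Metric.sphere 0 1)ᶜ = 0)
    (hi₁ : ∀ e : EuclideanSpace ℝ (Fin N) ≃ₗᵢ[ℝ] EuclideanSpace ℝ (Fin N), μ₁.map e = μ₁)
    (hi₂ : ∀ e : EuclideanSpace ℝ (Fin N) ≃ₗᵢ[ℝ] EuclideanSpace ℝ (Fin N), μ₂.map e = μ₂) :
    ∃ c : ℝ≥0∞, μ₂ = c • μ₁ := by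
  set μ := μ₁ + μ₂ with hμ
  have hμ0 : μ ≠ 0 := by
    intro h; apply h₁0
    exact le_antisymm (by rw [← h]; exact Measure.le_add_right le_rfl) (Measure.zero_le _)
  have hSμ : ∀ᵐ x ∂μ, x ∈ Metric.sphere (0 : EuclideanSpace ℝ (Fin N)) 1 := by
    rw [ae_iff]; simp only [hμ, Measure.add_apply]
    exact (add_eq_zero.2 ⟨hS₁, hS₂⟩)
  have hball : ∀ ρ : Measure (EuclideanSpace ℝ (Fin N)),
      (∀ e : EuclideanSpace ℝ (Fin N) ≃ₗᵢ[ℝ] EuclideanSpace ℝ (Fin N), ρ.map e = ρ) →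
      ∀ x ∈ Metric.sphere (0 : EuclideanSpace ℝ (Fin N)) 1, ∀ y ∈ Metric.sphere
        (0 : EuclideanSpace ℝ (Fin N)) 1, ∀ r,
        ρ (Metric.closedBall x r) = ρ (Metric.closedBall y r) := by
    intro ρ hρ x hx y hy r
    have hxy : ‖x‖ = ‖y‖ := by simp_all
    -- the reflection in the hyperplane orthogonal to `x - y` exchanges `x` and `y`
    have he := Submodule.reflection_sub hxy
    set e := (ℝ ∙ (x - y))ᗮ.reflection
    conv_rhs => rw [← hρ e]
    rw [Measure.map_apply e.continuous.measurable Metric.isClosed_closedBall.measurableSet,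
      ← he, e.preimage_closedBall, e.symm_apply_apply]
  have key : ∀ ρ : Measure (EuclideanSpace ℝ (Fin N)), IsFiniteMeasure ρ → ρ ≪ μ →
      (∀ e : EuclideanSpace ℝ (Fin N) ≃ₗᵢ[ℝ] EuclideanSpace ℝ (Fin N), ρ.map e = ρ) →
      ∃ c : ℝ≥0∞, ρ = c • μ := by
    intro ρ hfin hac hρ
    have hμi : ∀ e : EuclideanSpace ℝ (Fin N) ≃ₗᵢ[ℝ] EuclideanSpace ℝ (Fin N), μ.map e = μ := by
      intro e
      rw [hμ, Measure.map_add _ _ e.continuous.measurable, hi₁, hi₂]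
    have hae := Besicovitch.ae_tendsto_rnDeriv ρ μ
    have : (ae μ).NeBot := ae_neBot.2 hμ0
    obtain ⟨x₀, hx₀, hx₀S⟩ := (hae.and hSμ).exists
    refine ⟨ρ.rnDeriv μ x₀, ?_⟩
    have hconst : ρ.rnDeriv μ =ᵐ[μ] fun _ => ρ.rnDeriv μ x₀ := by
      filter_upwards [hae, hSμ] with x hx hxS
      refine tendsto_nhds_unique hx ?_
      simpa only [hball ρ hρ x hxS x₀ hx₀S, hball μ hμi x hxS x₀ hx₀S] using hx₀
    have : SigmaFinite ρ := inferInstance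
    have : SFinite ρ := inferInstance
    have : SigmaFinite μ := inferInstance
    have := Measure.haveLebesgueDecomposition_of_sigmaFinite ρ μ
    conv_lhs => rw [← Measure.withDensity_rnDeriv_eq ρ μ hac, withDensity_congr_ae hconst,
      withDensity_const]
  obtain ⟨c₁, hc₁⟩ := key μ₁ inferInstance (Measure.absolutelyContinuous_of_le
    (Measure.le_add_right le_rfl)) hi₁
  obtain ⟨c₂, hc₂⟩ := key μ₂ inferInstance (Measure.absolutelyContinuous_of_le
    (Measure.le_add_left le_rfl)) hi₂
  have h10 : c₁ ≠ 0 := by rintro rfl; simp at hc₁; exact h₁0 hc₁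
  have h1t : c₁ ≠ ∞ := by
    rintro rfl
    have := measure_ne_top μ₁ univ
    rw [hc₁] at this
    apply this
    simp [ENNReal.top_mul, hμ0]
  refine ⟨c₂ / c₁, ?_⟩
  rw [hc₁, smul_smul, ENNReal.div_mul_cancel h10 h1t]
  exact hc₂

open scoped Pointwise in
/-- The cone measure of polar coordinates is a finite multiple of the surface measure `μH[N-1]`. The
factor is not computed: only its finiteness matters. -/
theorem toSphere_eq_smul_hausdorff (N : ℕ) (hN : 1 ≤ N) :
    ∃ c : ℝ≥0∞, c ≠ ∞ ∧ Measure.map Subtype.val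
        ((volume : Measure (EuclideanSpace ℝ (Fin N))).toSphere) =
      c • (μH[(N : ℝ) - 1] : Measure (EuclideanSpace ℝ (Fin N))).restrict (Metric.sphere 0 1) := by
  have : IsFiniteMeasure ((μH[(N : ℝ) - 1] : Measure (EuclideanSpace ℝ (Fin N))).restrict
      (Metric.sphere 0 1)) := ⟨by simpa using hausdorff_sphere_lt_top N hN⟩
  have hm : MeasurableSet (Metric.sphere (0 : EuclideanSpace ℝ (Fin N)) 1) :=
    Metric.isClosed_sphere.measurableSet
  have hmv : Measurable (Subtype.val : Metric.sphere (0 : EuclideanSpace ℝ (Fin N)) 1 → _) :=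
    measurable_subtype_coe
  have hne : (μH[(N : ℝ) - 1] : Measure (EuclideanSpace ℝ (Fin N))).restrict
      (Metric.sphere 0 1) ≠ 0 := by
    rw [Ne, Measure.restrict_eq_zero]; exact hausdorff_sphere_ne_zero N hN
  obtain ⟨c, hc⟩ := measure_unique_of_invariant
    ((μH[(N : ℝ) - 1] : Measure (EuclideanSpace ℝ (Fin N))).restrict (Metric.sphere 0 1))
    (Measure.map Subtype.val ((volume : Measure (EuclideanSpace ℝ (Fin N))).toSphere))
    hne
    (by rw [Measure.restrict_apply hm.compl]; simp)
    (by rw [Measure.map_apply hmv hm.compl]; simp)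
    (by
      intro e
      have hpre : e ⁻¹' (Metric.sphere (0 : EuclideanSpace ℝ (Fin N)) 1) = Metric.sphere 0 1 := by
        ext x; simp
      conv_lhs => rw [← hpre]
      rw [← Measure.restrict_map e.continuous.measurable hm,
        ← LinearIsometryEquiv.coe_toIsometryEquiv, IsometryEquiv.map_hausdorffMeasure])
    (by
      intro e
      ext A hA
      rw [Measure.map_apply e.continuous.measurable hA, Measure.map_apply hmv hA,
        Measure.map_apply hmv (e.continuous.measurable hA),
        Measure.toSphere_apply' _ (hmv hA),
        Measure.toSphere_apply' _ (hmv (e.continuous.measurable hA))]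
      conv_rhs => rw [← e.measurePreserving.measure_preimage_equiv (f := e.toMeasurableEquiv)]
      congr 2
      ext x
      simp only [Subtype.image_preimage_coe, mem_preimage, Set.mem_smul, mem_inter_iff]
      constructor
      · rintro ⟨r, hr, y, ⟨hy, hyA⟩, rfl⟩
        exact ⟨r, hr, e y, ⟨by simpa using hy, hyA⟩, (map_smul e r y).symm⟩
      · rintro ⟨r, hr, y, ⟨hy, hyA⟩, hxy⟩
        refine ⟨r, hr, e.symm y, ⟨by simpa using hy, by simpa using hyA⟩, ?_⟩
        apply e.injective
        rw [map_smul, e.apply_symm_apply]; exact hxy)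
  refine ⟨c, ?_, hc⟩
  rintro rfl
  have h1 := measure_ne_top (Measure.map Subtype.val
    ((volume : Measure (EuclideanSpace ℝ (Fin N))).toSphere)) univ
  rw [hc] at h1
  apply h1
  rw [Measure.smul_apply, smul_eq_mul, ENNReal.top_mul]
  rwa [Ne, Measure.measure_univ_eq_zero]

/-! ### Polar coordinates and first moments over shells -/

/-- The Euclidean space `ℝ^N`. -/
abbrev Sp (N : ℕ) := EuclideanSpace ℝ (Fin N)

/-- `Measure.volumeIoiPow n` is the radial factor `s ^ n ds` of polar coordinates, as a measure on
the subtype `Ioi 0`. -/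
theorem integrable_volumeIoiPow {n : ℕ} {b : ℝ → ℝ}
    (hb : IntegrableOn (fun y : ℝ => y ^ n * b y) (Ioi 0)) :
    Integrable (fun s : Ioi (0 : ℝ) => b s) (Measure.volumeIoiPow n) := by
  rw [integrableOn_iff_comap_subtypeVal measurableSet_Ioi] at hb
  rw [Measure.volumeIoiPow, integrable_withDensity_iff_integrable_smul']
  · refine hb.congr (.of_forall ?_)
    rintro ⟨x, hx : 0 < x⟩
    simp (disch := positivity) [ENNReal.toReal_ofReal]
  · fun_prop
  · simp

theorem integrableOn_radial_ball {N : ℕ} (hN : 1 ≤ N) (m : ℕ) {q : ℝ} (hq : -(N : ℝ) < m + q)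
    (r : ℝ) : IntegrableOn (fun z : Sp N => ‖z‖ ^ m * ‖z‖ ^ q) (Metric.ball 0 r) := by
  have : Nonempty (Fin N) := ⟨⟨0, hN⟩⟩
  rw [integrableOn_fun_norm_addHaar volume (f := fun y => y ^ m * y ^ q)]
  rcases le_or_gt r 0 with hr | hr
  · simp [Ioo_eq_empty (not_lt.2 hr)]
  have h1 : IntegrableOn (fun y : ℝ => y ^ ((N : ℝ) - 1 + m + q)) (Ioo 0 r) :=
    (intervalIntegral.integrableOn_Ioo_rpow_iff hr).2 (by linarith)
  refine h1.congr_fun ?_ measurableSet_Ioo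
  intro y hy
  have hy0 : 0 < y := hy.1
  simp only [smul_eq_mul, finrank_euclideanSpace, Fintype.card_fin]
  rw [Real.rpow_add hy0, Real.rpow_add hy0, Real.rpow_natCast, ← Nat.cast_one,
    ← Nat.cast_sub hN, Real.rpow_natCast, mul_assoc]

theorem integrableOn_radial_compl {N : ℕ} (hN : 1 ≤ N) {q : ℝ} (hq : q < -(N : ℝ))
    {r : ℝ} (hr : 0 < r) : IntegrableOn (fun z : Sp N => ‖z‖ ^ q) {z | r ≤ ‖z‖} := by
  have : Nonempty (Fin N) := ⟨⟨0, hN⟩⟩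
  have hm : MeasurableSet {z : Sp N | r ≤ ‖z‖} := measurableSet_le measurable_const measurable_norm
  rw [← integrable_indicator_iff hm]
  have h0 : (indicator {z : Sp N | r ≤ ‖z‖} fun z => ‖z‖ ^ q) =
      fun z : Sp N => (indicator (Ici r) fun y : ℝ => y ^ q) ‖z‖ := by
    ext z; simp [indicator]
  rw [h0, integrable_fun_norm_addHaar volume]
  have h1 : IntegrableOn (fun y : ℝ => y ^ ((N : ℝ) - 1 + q)) (Ioi (r / 2)) :=
    integrableOn_Ioi_rpow_of_lt (by linarith) (by positivity)
  have h2 : IntegrableOn (indicator (Ici r) fun y : ℝ => y ^ ((N : ℝ) - 1 + q)) (Ioi 0) := by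
    refine Integrable.integrableOn ?_
    rw [integrable_indicator_iff measurableSet_Ici]
    exact h1.mono_set (Ici_subset_Ioi.2 (by linarith))
  refine h2.congr_fun ?_ measurableSet_Ioi
  intro y hy
  have hy0 : 0 < y := hy
  simp only [smul_eq_mul, finrank_euclideanSpace, Fintype.card_fin, indicator]
  split_ifs
  · rw [Real.rpow_add hy0, ← Nat.cast_one, ← Nat.cast_sub hN, Real.rpow_natCast]
  · simp

/-- Holds for every `F`: if `F` is not integrable on the sphere, both sides may vanish by the
convention for Bochner integrals, consistently because the two measures are proportional. -/
theorem sphere_integral_bound (N : ℕ) (hN : 1 ≤ N) :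
    ∃ c : ℝ, 0 ≤ c ∧ ∀ F : Sp N → Sp N,
      ‖∫ σ : Metric.sphere (0 : Sp N) 1, F σ ∂(volume : Measure (Sp N)).toSphere‖ ≤
      c * ‖∫ σ in Metric.sphere (0 : Sp N) 1, F σ ∂(μH[(N : ℝ) - 1])‖ := by
  obtain ⟨c, hct, hc⟩ := toSphere_eq_smul_hausdorff N hN
  refine ⟨c.toReal, ENNReal.toReal_nonneg, fun F => ?_⟩
  rw [← (MeasurableEmbedding.subtype_coe
    Metric.isClosed_sphere.measurableSet).integral_map, hc, integral_smul_measure, norm_smul,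
    Real.norm_of_nonneg ENNReal.toReal_nonneg]

/-- First moments over shells in the case `α ≥ 1`. In polar coordinates the integral over the sphere
of radius `s` is at most a constant times `s ^ N * s ^ (-(N + α)) * s ^ ν = s ^ (ν - α)` by the
cancellation hypothesis, and `ν - α > -1`. The constant depends neither on `h` nor on `ε`. -/
theorem shell_moment_bound (N : ℕ) (hN : 1 ≤ N) (α ν τ r₀ : ℝ) (hαν : α - 1 < ν) (hr₀ : 0 < r₀) :
    ∃ C : ℝ, ∀ h : Sp N → ℝ,
      (∀ s, 0 < s → s < r₀ →
        ‖sphereVecInt N (fun σ => h (s • σ) * ‖s • σ‖ ^ ((N : ℝ) + α))‖ ≤ τ * s ^ ν) →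
      ∀ ε, 0 < ε → ‖∫ z in {z : Sp N | ε ≤ ‖z‖ ∧ ‖z‖ < r₀}, h z • z‖ ≤ C := by
  have : Nonempty (Fin N) := ⟨⟨0, hN⟩⟩
  obtain ⟨c, hc0, hc⟩ := sphere_integral_bound N hN
  set b : ℝ → ℝ := indicator (Ioo 0 r₀) fun s => s * (c * (s ^ (-((N : ℝ) + α)) * (|τ| * s ^ ν)))
    with hb
  have hb0 : ∀ s, 0 ≤ b s := by
    intro s; apply indicator_nonneg
    intro s hs
    have : 0 < s := hs.1
    positivity
  have hbint : Integrable (fun s : Ioi (0 : ℝ) => b s)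
      (Measure.volumeIoiPow (Module.finrank ℝ (Sp N) - 1)) := by
    apply integrable_volumeIoiPow
    have h1 : IntegrableOn (fun y : ℝ => (c * |τ|) * y ^ (ν - α)) (Ioo 0 r₀) :=
      ((intervalIntegral.integrableOn_Ioo_rpow_iff hr₀).2 (by linarith)).const_mul _
    have h2 : IntegrableOn (indicator (Ioo 0 r₀) fun y : ℝ => (c * |τ|) * y ^ (ν - α)) (Ioi 0) := by
      refine Integrable.integrableOn ?_
      rwa [integrable_indicator_iff measurableSet_Ioo]
    refine h2.congr_fun ?_ measurableSet_Ioi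
    intro y hy
    have hy0 : 0 < y := hy
    simp only [hb, indicator, finrank_euclideanSpace, Fintype.card_fin]
    split_ifs
    · have e1 : y ^ (ν - α) = y ^ (N - 1) * y * y ^ (-((N : ℝ) + α)) * y ^ ν := by
        rw [← pow_succ, Nat.sub_add_cancel hN, ← Real.rpow_natCast, ← Real.rpow_add hy0,
          ← Real.rpow_add hy0]
        congr 1; ring
      rw [e1]; ring
    · simp
  refine ⟨∫ s : Ioi (0 : ℝ), b s ∂(Measure.volumeIoiPow (Module.finrank ℝ (Sp N) - 1)), ?_⟩
  intro h hs ε hε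
  have hC0 : 0 ≤ ∫ s : Ioi (0 : ℝ), b s ∂(Measure.volumeIoiPow (Module.finrank ℝ (Sp N) - 1)) :=
    integral_nonneg fun s => hb0 s
  set F : Sp N → Sp N := indicator {z : Sp N | ε ≤ ‖z‖ ∧ ‖z‖ < r₀} fun z => h z • z with hF
  have hmA : MeasurableSet {z : Sp N | ε ≤ ‖z‖ ∧ ‖z‖ < r₀} :=
    (measurableSet_le measurable_const measurable_norm).inter
      (measurableSet_lt measurable_norm measurable_const)
  rw [← integral_indicator hmA]
  have e1 : ∫ z, F z = ∫ p : Metric.sphere (0 : Sp N) 1 × Ioi (0 : ℝ), F (p.2.1 • p.1.1)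
      ∂((volume : Measure (Sp N)).toSphere.prod
        (Measure.volumeIoiPow (Module.finrank ℝ (Sp N) - 1))) := by
    have h1 : ∫ z, F z = ∫ z : ({0}ᶜ : Set (Sp N)), F z.1 ∂(volume.comap Subtype.val) := by
      rw [integral_subtype_comap (measurableSet_singleton _).compl F, restrict_compl_singleton]
    rw [h1, ← (volume : Measure (Sp N)).measurePreserving_homeomorphUnitSphereProd.integral_comp
        (Homeomorph.measurableEmbedding _)]
    congr 1
    ext1 z
    congr 1
    have hz : ‖(z : Sp N)‖ ≠ 0 := norm_ne_zero_iff.2 z.2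
    simp [smul_smul, hz]
  rw [e1]
  by_cases hint : Integrable (fun p : Metric.sphere (0 : Sp N) 1 × Ioi (0 : ℝ) => F (p.2.1 • p.1.1))
      ((volume : Measure (Sp N)).toSphere.prod
        (Measure.volumeIoiPow (Module.finrank ℝ (Sp N) - 1)))
  swap
  -- without integrability the moment is `0` by convention
  · rw [integral_undef hint, norm_zero]; exact hC0
  rw [integral_prod_symm _ hint]
  refine norm_integral_le_of_norm_le hbint (.of_forall ?_)
  rintro ⟨s, hs0 : 0 < s⟩
  have hnorm : ∀ σ : Metric.sphere (0 : Sp N) 1, ‖s • (σ : Sp N)‖ = s := by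
    intro σ; simp [norm_smul, abs_of_pos hs0]
  by_cases hsA : ε ≤ s ∧ s < r₀
  · have e2 : ∀ σ : Metric.sphere (0 : Sp N) 1, F (s • (σ : Sp N)) =
        s • (h (s • (σ : Sp N)) • (σ : Sp N)) := by
      intro σ
      rw [hF, indicator_of_mem]
      · rw [smul_comm]
      · simpa only [mem_ofPred_eq, hnorm] using hsA
    simp only [e2]
    rw [integral_smul, norm_smul, Real.norm_of_nonneg hs0.le, hb,
      indicator_of_mem (show s ∈ Ioo 0 r₀ from ⟨hs0, hsA.2⟩)]
    refine mul_le_mul_of_nonneg_left ((hc (fun σ => h (s • σ) • σ)).trans ?_) hs0.le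
    refine mul_le_mul_of_nonneg_left ?_ hc0
    have hp : 0 < s ^ ((N : ℝ) + α) := Real.rpow_pos_of_pos hs0 _
    have e3 : sphereVecInt N (fun σ => h (s • σ) * ‖s • σ‖ ^ ((N : ℝ) + α)) =
        s ^ ((N : ℝ) + α) • ∫ σ in Metric.sphere (0 : Sp N) 1, h (s • σ) • σ ∂(μH[(N : ℝ) - 1]) := by
      rw [sphereVecInt, ← integral_smul]
      refine setIntegral_congr_fun Metric.isClosed_sphere.measurableSet ?_
      intro σ hσ
      simp only
      rw [hnorm ⟨σ, hσ⟩, smul_smul, mul_comm]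
    have h4 := hs s hs0 hsA.2
    rw [e3, norm_smul, Real.norm_of_nonneg hp.le] at h4
    rw [Real.rpow_neg hs0.le, ← div_eq_inv_mul, le_div_iff₀ hp, mul_comm]
    refine h4.trans ?_
    gcongr
    exact le_abs_self τ
  · have e2 : ∀ σ : Metric.sphere (0 : Sp N) 1, F (s • (σ : Sp N)) = 0 := by
      intro σ
      rw [hF, indicator_of_notMem]
      simpa only [mem_ofPred_eq, hnorm] using hsA
    simp only [e2, integral_zero, norm_zero]
    exact hb0 s

/-! ### The truncated operators -/

/-- Radial majorant `Λ(1 + |z|^ω)|z|^{-N-α}` of the kernel, with the product expanded. The value at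
`z = 0`, where `Real.rpow` of `0` is conventional, does not matter as the kernel is bounded by the
majorant only for `z ≠ 0`. -/
def kerMajorant (N : ℕ) (α ω Λ : ℝ) (z : Sp N) : ℝ :=
  Λ * (‖z‖ ^ (-((N : ℝ) + α)) + ‖z‖ ^ (ω - ((N : ℝ) + α)))

theorem kerMajorant_nonneg {N : ℕ} {α ω Λ : ℝ} (hΛ : 0 ≤ Λ) (z : Sp N) :
    0 ≤ kerMajorant N α ω Λ z := by
  unfold kerMajorant; positivity

theorem measurable_kerMajorant {N : ℕ} {α ω Λ : ℝ} : Measurable (kerMajorant N α ω Λ) := by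
  unfold kerMajorant; fun_prop

theorem integrableOn_kerMajorant_compl {N : ℕ} (hN : 1 ≤ N) {α ω Λ : ℝ} (hα : 0 < α) (hω : ω < α)
    {r : ℝ} (hr : 0 < r) : IntegrableOn (kerMajorant N α ω Λ) {z | r ≤ ‖z‖} :=
  ((integrableOn_radial_compl hN (by linarith) hr).add
    (integrableOn_radial_compl hN (by linarith) hr)).const_mul Λ

theorem integrableOn_kerMajorant_ball {N : ℕ} (hN : 1 ≤ N) {α ω Λ : ℝ} (m : ℕ) (hα : α < m)
    (hω : 0 ≤ ω) (r : ℝ) :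
    IntegrableOn (fun z => ‖z‖ ^ m * kerMajorant N α ω Λ z) (Metric.ball 0 r) := by
  have h := ((integrableOn_radial_ball hN m (q := -((N : ℝ) + α)) (by linarith) r).add
    (integrableOn_radial_ball hN m (q := ω - ((N : ℝ) + α)) (by linarith) r)).const_mul Λ
  refine h.congr (.of_forall fun z => ?_)
  simp only [kerMajorant, Pi.add_apply]
  ring

/-- Bound on the truncated operator applied to `g`, uniform in the point `x` and the truncation `ε`.
Here `G` plays the role of the derivative of `g`: on `ε ≤ |z| < r₀` the linear part of `g` is split
off and paired with the first moment of the kernel (`hV`), the remainder being quadratic; on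
`|z| ≥ r₀` the increment of `g` is bounded by the better of `2 B₀` and `B₁ |z|`. -/
theorem truncated_bound {N : ℕ} (hN : 1 ≤ N) {α ω Λ : ℝ} (hα0 : 0 < α) (hα2 : α < 2)
    (hω0 : 0 ≤ ω) (hωα : ω < α) (hΛ : 0 ≤ Λ)
    (κ : Sp N → Sp N → ℝ) (hκm : Measurable fun p : Sp N × Sp N => κ p.1 p.2)
    (hκ0 : ∀ x y, 0 ≤ κ x y)
    (hκ : ∀ x z, z ≠ 0 → κ x (x + z) ≤ kerMajorant N α ω Λ z)
    (r₀ C : ℝ) (hr₀ : 0 < r₀)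
    (hV : ∀ x ε, 0 < ε → ‖∫ z in {z : Sp N | ε ≤ ‖z‖ ∧ ‖z‖ < r₀}, κ x (x + z) • z‖ ≤ C)
    (g : Sp N → ℝ) (G : Sp N → Sp N →L[ℝ] ℝ) (hgm : Measurable g) (B₀ B₁ B₂ : ℝ)
    (h0 : ∀ x, |g x| ≤ B₀) (h1 : ∀ x z, |g x - g (x + z)| ≤ B₁ * ‖z‖) (hG : ∀ x, ‖G x‖ ≤ B₁)
    (h2 : ∀ x z, |g (x + z) - g x - G x z| ≤ B₂ * ‖z‖ ^ 2)
    (ε : ℝ) (hε : 0 < ε) (hεr : ε ≤ r₀) (x : Sp N) :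
    |∫ y in {y : Sp N | ε ≤ ‖x - y‖}, (g x - g y) * κ x y| ≤
      B₂ * (∫ z in Metric.ball 0 r₀, ‖z‖ ^ 2 * kerMajorant N α ω Λ z) + B₁ * C +
      ∫ z in {z : Sp N | r₀ ≤ ‖z‖}, min (2 * B₀) (B₁ * ‖z‖) * kerMajorant N α ω Λ z := by
  set J := kerMajorant N α ω Λ with hJ
  have hJ0 : ∀ z, 0 ≤ J z := kerMajorant_nonneg hΛ
  have hJm : Measurable J := measurable_kerMajorant
  have hB1 : 0 ≤ B₁ := (norm_nonneg _).trans (hG 0)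
  have hB0 : 0 ≤ B₀ := (abs_nonneg _).trans (h0 0)
  have hge : ∀ r : ℝ, MeasurableSet {z : Sp N | r ≤ ‖z‖} := fun r =>
    measurableSet_le measurable_const measurable_norm
  set A : Set (Sp N) := {z | ε ≤ ‖z‖ ∧ ‖z‖ < r₀} with hA
  have hmA : MeasurableSet A := (hge ε).inter (measurableSet_lt measurable_norm measurable_const)
  set h : Sp N → ℝ := fun z => κ x (x + z) with hh
  have hhm : Measurable h := hκm.comp (by fun_prop : Measurable fun z : Sp N => (x, x + z))
  have hhJ : ∀ z, ε ≤ ‖z‖ → |h z| ≤ J z := by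
    intro z hz
    rw [abs_of_nonneg (hκ0 _ _)]
    refine hκ x z ?_
    rintro rfl
    simp at hz; linarith
  have hJint : IntegrableOn J {z | ε ≤ ‖z‖} := integrableOn_kerMajorant_compl hN hα0 hωα hε
  have hdiff : ∀ z, |g x - g (x + z)| ≤ 2 * B₀ := by
    intro z
    have a1 := abs_le.1 (h0 x)
    have a2 := abs_le.1 (h0 (x + z))
    rw [abs_le]; constructor <;> linarith [a1.1, a1.2, a2.1, a2.2]
  -- translate to the variable `z = y - x`
  have etr : ∫ y in {y : Sp N | ε ≤ ‖x - y‖}, (g x - g y) * κ x y =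
      ∫ z in {z : Sp N | ε ≤ ‖z‖}, (g x - g (x + z)) * h z := by
    rw [← integral_indicator (measurableSet_le measurable_const (by fun_prop)),
      ← integral_indicator (hge ε),
      ← integral_add_left_eq_self (μ := (volume : Measure (Sp N))) _ x]
    congr 1
    ext z
    simp [indicator, hh]
  have hgint : IntegrableOn (fun z => (g x - g (x + z)) * h z) {z | ε ≤ ‖z‖} := by
    refine Integrable.mono' (hJint.const_mul (2 * B₀)) ?_ ?_
    · exact Measurable.aestronglyMeasurable (by fun_prop)
    · refine (ae_restrict_mem (hge ε)).mono fun z hz => ?_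
      rw [norm_mul, Real.norm_eq_abs, Real.norm_eq_abs]
      exact mul_le_mul (hdiff z) (hhJ z hz) (abs_nonneg _) (by positivity)
  have hunion : {z : Sp N | ε ≤ ‖z‖} = A ∪ {z : Sp N | r₀ ≤ ‖z‖} := by
    ext z; simp only [hA, mem_union, mem_ofPred_eq]
    constructor
    · intro hz
      rcases lt_or_ge ‖z‖ r₀ with h | h
      · exact Or.inl ⟨hz, h⟩
      · exact Or.inr h
    · rintro (h | h)
      · exact h.1
      · exact hεr.trans h
  have hAsub : A ⊆ {z : Sp N | ε ≤ ‖z‖} := fun z hz => hz.1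
  have hBsub : {z : Sp N | r₀ ≤ ‖z‖} ⊆ {z : Sp N | ε ≤ ‖z‖} := fun z hz => hεr.trans hz
  have hdisj : Disjoint A {z : Sp N | r₀ ≤ ‖z‖} := by
    rw [Set.disjoint_left]; intro z hz hz'
    exact absurd hz.2 (not_lt.2 hz')
  have hvint : IntegrableOn (fun z => h z • z) A := by
    refine Integrable.mono' ((hJint.mono_set hAsub).const_mul r₀) ?_ ?_
    · exact Measurable.aestronglyMeasurable (by fun_prop)
    · refine (ae_restrict_mem hmA).mono fun z hz => ?_
      rw [norm_smul, mul_comm, Real.norm_eq_abs]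
      exact mul_le_mul hz.2.le (hhJ z hz.1) (abs_nonneg _) hr₀.le
  have hGint : IntegrableOn (fun z => G x (h z • z)) A := (G x).integrable_comp hvint
  have esplit : ∫ z in A, (g x - g (x + z)) * h z =
      (∫ z in A, ((g x - g (x + z)) * h z + G x (h z • z))) - G x (∫ z in A, h z • z) := by
    rw [integral_add (hgint.mono_set hAsub) hGint, (G x).integral_comp_comm hvint]
    ring
  have b1 : |∫ z in A, ((g x - g (x + z)) * h z + G x (h z • z))| ≤
      B₂ * ∫ z in Metric.ball 0 r₀, ‖z‖ ^ 2 * J z := by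
    have hI := integrableOn_kerMajorant_ball (Λ := Λ) hN 2 (by exact_mod_cast hα2) hω0 r₀
    have hAball : A ⊆ Metric.ball 0 r₀ := fun z hz => by simpa using hz.2
    have hB2 : ∀ z : Sp N, 0 ≤ B₂ * ‖z‖ ^ 2 := fun z => (abs_nonneg _).trans (h2 0 z)
    rw [← integral_const_mul, ← Real.norm_eq_abs]
    refine (norm_integral_le_of_norm_le (g := fun z => B₂ * (‖z‖ ^ 2 * J z))
      ((hI.mono_set hAball).const_mul _) ?_).trans ?_
    · refine (ae_restrict_mem hmA).mono fun z hz => ?_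
      have e : (g x - g (x + z)) * h z + G x (h z • z) = -(g (x + z) - g x - G x z) * h z := by
        rw [map_smul, smul_eq_mul]; ring
      rw [e, norm_mul, norm_neg, ← mul_assoc]
      exact mul_le_mul (h2 x z) (hhJ z hz.1) (norm_nonneg _) (hB2 z)
    · refine setIntegral_mono_set (hI.const_mul _) (.of_forall fun z => ?_) hAball.eventuallyLE
      simp only [Pi.zero_apply, ← mul_assoc]
      exact mul_nonneg (hB2 z) (hJ0 z)
  have b2 : |G x (∫ z in A, h z • z)| ≤ B₁ * C :=
    ((G x).le_opNorm _).trans (mul_le_mul (hG x) (hV x ε hε) (norm_nonneg _) hB1)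
  have b3 : |∫ z in {z : Sp N | r₀ ≤ ‖z‖}, (g x - g (x + z)) * h z| ≤
      ∫ z in {z : Sp N | r₀ ≤ ‖z‖}, min (2 * B₀) (B₁ * ‖z‖) * J z := by
    rw [← Real.norm_eq_abs]
    refine norm_integral_le_of_norm_le ?_ ?_
    · refine Integrable.mono' ((hJint.mono_set hBsub).const_mul (2 * B₀)) ?_ ?_
      · exact Measurable.aestronglyMeasurable (by fun_prop)
      · refine .of_forall fun z => ?_
        rw [norm_mul, Real.norm_of_nonneg (hJ0 z), Real.norm_of_nonneg (by positivity)]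
        exact mul_le_mul_of_nonneg_right (min_le_left _ _) (hJ0 z)
    · refine (ae_restrict_mem (hge r₀)).mono fun z hz => ?_
      rw [norm_mul, Real.norm_eq_abs, Real.norm_eq_abs]
      exact mul_le_mul (le_min (hdiff z) (h1 x z)) (hhJ z (hBsub hz)) (abs_nonneg _) (by positivity)
  rw [etr, hunion, setIntegral_union hdisj (hge r₀) (hgint.mono_set hAsub)
    (hgint.mono_set hBsub), esplit]
  refine (abs_add_le _ _).trans (add_le_add ((abs_sub _ _).trans (add_le_add b1 b2)) b3)

/-- Symmetry `∫ (T_ε f) φ = ∫ f (T_ε φ)` of the truncated operator for `f` integrable and `φ` bounded.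
The kernel cut off at `|x - y| ≥ ε` is dominated by an integrable function of `x - y`, so all four
products `f φ k` are integrable on the product space; swapping the variables then exchanges the
two mixed terms. -/
theorem truncated_symm {N : ℕ} (hN : 1 ≤ N) {α ω Λ : ℝ} (hα0 : 0 < α)
    (hωα : ω < α)
    (κ : Sp N → Sp N → ℝ) (hκm : Measurable fun p : Sp N × Sp N => κ p.1 p.2)
    (hκ0 : ∀ x y, 0 ≤ κ x y) (hsymm : ∀ x y, κ x y = κ y x)
    (hκ : ∀ x z, z ≠ 0 → κ x (x + z) ≤ kerMajorant N α ω Λ z)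
    (f φ : Sp N → ℝ) (hfm : Measurable f) (hf : Integrable f) (hφm : Measurable φ) (B : ℝ)
    (hφ : ∀ x, |φ x| ≤ B) (ε : ℝ) (hε : 0 < ε) :
    Integrable (fun x => (∫ y in {y : Sp N | ε ≤ ‖x - y‖}, (f x - f y) * κ x y) * φ x) ∧
    ∫ x, (∫ y in {y : Sp N | ε ≤ ‖x - y‖}, (f x - f y) * κ x y) * φ x =
      ∫ x, f x * ∫ y in {y : Sp N | ε ≤ ‖x - y‖}, (φ x - φ y) * κ x y := by
  have hge : ∀ r : ℝ, MeasurableSet {z : Sp N | r ≤ ‖z‖} := fun r =>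
    measurableSet_le measurable_const measurable_norm
  have hB : 0 ≤ B := (abs_nonneg _).trans (hφ 0)
  set J : Sp N → ℝ := indicator {z | ε ≤ ‖z‖} (kerMajorant N α ω Λ) with hJ
  have hJint : Integrable J :=
    (integrableOn_kerMajorant_compl hN hα0 hωα hε).integrable_indicator (hge ε)
  set k : Sp N × Sp N → ℝ := indicator {p | ε ≤ ‖p.1 - p.2‖} fun p => κ p.1 p.2 with hk
  have hms : MeasurableSet {p : Sp N × Sp N | ε ≤ ‖p.1 - p.2‖} :=
    measurableSet_le measurable_const (by fun_prop)
  have hkm : Measurable k := hκm.indicator hms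
  have hksymm : ∀ x y, k (x, y) = k (y, x) := by
    intro x y
    simp only [hk, indicator, mem_ofPred_eq, norm_sub_rev x y, hsymm x y]
  have hkJ : ∀ x y, |k (x, y)| ≤ J (x - y) := by
    intro x y
    simp only [hk, hJ, indicator, mem_ofPred_eq]
    split_ifs with hxy
    · rw [abs_of_nonneg (hκ0 _ _)]
      have := hκ y (x - y) (by intro h0; rw [h0] at hxy; simp at hxy; linarith)
      rwa [add_sub_cancel, hsymm] at this
    · simp
  have hset : ∀ (g : Sp N → ℝ) x, ∫ y in {y : Sp N | ε ≤ ‖x - y‖}, (g x - g y) * κ x y =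
      ∫ y, (g x - g y) * k (x, y) := by
    intro g x
    rw [← integral_indicator (measurableSet_le measurable_const (by fun_prop))]
    congr 1; ext y
    simp only [hk, indicator, mem_ofPred_eq]
    split_ifs <;> simp
  have hbase : Integrable (fun p : Sp N × Sp N => B * (‖f p.2‖ * J (p.1 - p.2)))
      (volume.prod volume) :=
    ((hf.norm.convolution_integrand (ContinuousLinearMap.mul ℝ ℝ) hJint).const_mul B)
  have hQ : Integrable (fun p : Sp N × Sp N => f p.2 * φ p.1 * k p) (volume.prod volume) := by
    refine hbase.mono' (Measurable.aestronglyMeasurable (by fun_prop)) (.of_forall ?_)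
    rintro ⟨x, y⟩
    simp only [norm_mul]
    calc ‖f y‖ * ‖φ x‖ * ‖k (x, y)‖ ≤ ‖f y‖ * B * J (x - y) :=
          mul_le_mul (mul_le_mul_of_nonneg_left (hφ x) (norm_nonneg _)) (hkJ x y) (norm_nonneg _)
            (by positivity)
      _ = _ := by ring
  have hP' : Integrable (fun p : Sp N × Sp N => f p.2 * φ p.2 * k p) (volume.prod volume) := by
    refine hbase.mono' (Measurable.aestronglyMeasurable (by fun_prop)) (.of_forall ?_)
    rintro ⟨x, y⟩
    simp only [norm_mul]
    calc ‖f y‖ * ‖φ y‖ * ‖k (x, y)‖ ≤ ‖f y‖ * B * J (x - y) :=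
          mul_le_mul (mul_le_mul_of_nonneg_left (hφ y) (norm_nonneg _)) (hkJ x y) (norm_nonneg _)
            (by positivity)
      _ = _ := by ring
  have hP : Integrable (fun p : Sp N × Sp N => f p.1 * φ p.1 * k p) (volume.prod volume) := by
    refine hP'.swap.congr (.of_forall ?_)
    rintro ⟨x, y⟩
    simp [hksymm x y]
  have hQ' : Integrable (fun p : Sp N × Sp N => f p.1 * φ p.2 * k p) (volume.prod volume) := by
    refine hQ.swap.congr (.of_forall ?_)
    rintro ⟨x, y⟩
    simp [hksymm x y]
  have hQQ : ∫ p : Sp N × Sp N, f p.1 * φ p.2 * k p ∂(volume.prod volume) =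
      ∫ p : Sp N × Sp N, f p.2 * φ p.1 * k p ∂(volume.prod volume) := by
    rw [← integral_prod_swap]
    congr 1
    ext ⟨x, y⟩
    simp [hksymm x y]
  have e1 : (fun x => (∫ y in {y : Sp N | ε ≤ ‖x - y‖}, (f x - f y) * κ x y) * φ x) =
      fun x => ∫ y, (f x * φ x * k (x, y) - f y * φ x * k (x, y)) := by
    ext x
    rw [hset, ← integral_mul_const]
    congr 1; ext y; ring
  have e2 : (fun x => f x * ∫ y in {y : Sp N | ε ≤ ‖x - y‖}, (φ x - φ y) * κ x y) =
      fun x => ∫ y, (f x * φ x * k (x, y) - f x * φ y * k (x, y)) := by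
    ext x
    rw [hset, ← integral_const_mul]
    congr 1; ext y; ring
  refine ⟨?_, ?_⟩
  · rw [e1]; exact (hP.sub hQ).integral_prod_left
  · rw [e1, e2]
    have := integral_prod _ (hP.sub hQ)
    have h' := integral_prod _ (hP.sub hQ')
    simp only [Pi.sub_apply] at this h'
    rw [← this, ← h', integral_sub hP hQ, integral_sub hP hQ', hQQ]

/-! ### Cutoffs and the limiting argument -/

theorem taylor_bounds {N : ℕ} {g : Sp N → ℝ} (hg : ContDiff ℝ 2 g) {B₁ B₂ : ℝ}
    (h1 : ∀ x, ‖fderiv ℝ g x‖ ≤ B₁) (h2 : ∀ x, ‖iteratedFDeriv ℝ 2 g x‖ ≤ B₂) :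
    (∀ x z, |g x - g (x + z)| ≤ B₁ * ‖z‖) ∧
      ∀ x z, |g (x + z) - g x - fderiv ℝ g x z| ≤ B₂ * ‖z‖ ^ 2 := by
  have hd : Differentiable ℝ g := hg.differentiable (by norm_num)
  have hd' : Differentiable ℝ (fderiv ℝ g) :=
    (hg.fderiv_right (m := 1) (by norm_num)).differentiable (by norm_num)
  have h2' : ∀ x, ‖fderiv ℝ (fderiv ℝ g) x‖ ≤ B₂ := by
    intro x
    rw [← norm_iteratedFDeriv_one, norm_iteratedFDeriv_fderiv]
    exact h2 x
  have hB2 : 0 ≤ B₂ := (norm_nonneg _).trans (h2 0)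
  constructor
  · intro x z
    have := convex_univ.norm_image_sub_le_of_norm_fderiv_le (𝕜 := ℝ) (fun y _ => hd y)
      (fun y _ => h1 y) (mem_univ (x + z)) (mem_univ x)
    simpa using this
  · intro x z
    have hb : ∀ y ∈ Metric.closedBall x ‖z‖, ‖fderiv ℝ g y - fderiv ℝ g x‖ ≤ B₂ * ‖z‖ := by
      intro y hy
      refine (convex_univ.norm_image_sub_le_of_norm_fderiv_le (𝕜 := ℝ) (fun y _ => hd' y)
        (fun y _ => h2' y) (mem_univ x) (mem_univ y)).trans ?_
      gcongr
      simpa [dist_eq_norm_sub] using hy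
    have := (convex_closedBall x ‖z‖).norm_image_sub_le_of_norm_fderiv_le' (𝕜 := ℝ)
      (fun y _ => hd y) hb (x := x) (y := x + z) (by simp) (by simp [dist_eq_norm_sub])
    simp only [add_sub_cancel_left] at this
    rw [← Real.norm_eq_abs]
    refine this.trans (le_of_eq (by ring))

/-- A bump function, recorded with the estimates that make `truncated_bound` applicable to it and to
its dilates; `G` is its derivative. -/
theorem exists_cutoff (N : ℕ) : ∃ (φ : Sp N → ℝ) (G : Sp N → Sp N →L[ℝ] ℝ) (B₁ B₂ : ℝ),
    Continuous φ ∧ Integrable φ ∧ φ 0 = 1 ∧ (∀ x, |φ x| ≤ 1) ∧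
    (∀ x z, |φ x - φ (x + z)| ≤ B₁ * ‖z‖) ∧ (∀ x, ‖G x‖ ≤ B₁) ∧
    ∀ x z, |φ (x + z) - φ x - G x z| ≤ B₂ * ‖z‖ ^ 2 := by
  let b : ContDiffBump (0 : Sp N) := ⟨1, 2, one_pos, one_lt_two⟩
  have hb : ContDiff ℝ 2 (b : Sp N → ℝ) := b.contDiff
  have hc : HasCompactSupport (b : Sp N → ℝ) := b.hasCompactSupport
  obtain ⟨B₁, hB₁⟩ := (hb.continuous_fderiv (by norm_num)).bounded_above_of_compact_support
    (hc.fderiv (𝕜 := ℝ))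
  obtain ⟨B₂, hB₂⟩ := (hb.continuous_iteratedFDeriv (m := 2) (by norm_num)).bounded_above_of_compact_support
    (hc.iteratedFDeriv (𝕜 := ℝ) 2)
  obtain ⟨h1, h2⟩ := taylor_bounds hb hB₁ hB₂
  refine ⟨b, fderiv ℝ b, B₁, B₂, b.continuous, b.continuous.integrable_of_hasCompactSupport hc,
    ?_, ?_, h1, hB₁, h2⟩
  · exact b.one_of_mem_closedBall (by simp [b])
  · intro x
    rw [abs_of_nonneg b.nonneg]; exact b.le_one

/-- The mean zero property for a single symmetric kernel `κ` dominated by `kerMajorant`, given a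
uniform bound `C` on its first moments over the shells `ε ≤ |z| < r₀`. -/
theorem mean_zero_of_bounds {N : ℕ} (hN : 1 ≤ N) {α ω Λ : ℝ} (hα0 : 0 < α) (hα2 : α < 2)
    (hω0 : 0 ≤ ω) (hωα : ω < α) (hΛ : 0 ≤ Λ)
    (κ : Sp N → Sp N → ℝ) (hκm : Measurable fun p : Sp N × Sp N => κ p.1 p.2)
    (hκ0 : ∀ x y, 0 ≤ κ x y) (hsymm : ∀ x y, κ x y = κ y x)
    (hκ : ∀ x z, z ≠ 0 → κ x (x + z) ≤ kerMajorant N α ω Λ z)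
    (r₀ C : ℝ) (hr₀ : 0 < r₀)
    (hV : ∀ x ε, 0 < ε → ‖∫ z in {z : Sp N | ε ≤ ‖z‖ ∧ ‖z‖ < r₀}, κ x (x + z) • z‖ ≤ C)
    (f Tf : Sp N → ℝ) (hf : ContDiff ℝ 2 f) (hfL1 : Integrable f)
    (hfb : ∃ B : ℝ, ∀ x, |f x| ≤ B)
    (hfb1 : ∃ B : ℝ, ∀ x, ‖fderiv ℝ f x‖ ≤ B)
    (hfb2 : ∃ B : ℝ, ∀ x, ‖iteratedFDeriv ℝ 2 f x‖ ≤ B)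
    (hTf : ∀ x, Tendsto (fun ε : ℝ => ∫ y in {y : Sp N | ε ≤ ‖x - y‖}, (f x - f y) * κ x y)
      (nhdsWithin 0 (Ioi 0)) (nhds (Tf x))) :
    ∫ x, Tf x = 0 := by
  by_cases hTint : Integrable Tf
  swap
  · exact integral_undef hTint
  obtain ⟨F₀, hF₀⟩ := hfb
  obtain ⟨F₁, hF₁⟩ := hfb1
  obtain ⟨F₂, hF₂⟩ := hfb2
  obtain ⟨ht1, ht2⟩ := taylor_bounds hf hF₁ hF₂
  have hfm : Measurable f := hf.continuous.measurable
  obtain ⟨M, hM⟩ : ∃ M, ∀ ε, 0 < ε → ε ≤ r₀ → ∀ x,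
      |∫ y in {y : Sp N | ε ≤ ‖x - y‖}, (f x - f y) * κ x y| ≤ M :=
    ⟨_, fun ε hε hεr x => truncated_bound hN hα0 hα2 hω0 hωα hΛ κ hκm hκ0 hκ r₀ C hr₀ hV f
      (fderiv ℝ f) hfm F₀ F₁ F₂ hF₀ ht1 hF₁ ht2 ε hε hεr x⟩
  obtain ⟨φ, G, B₁, B₂, hφc, hφi, hφ0, hφ1, hL, hG, hT⟩ := exists_cutoff N
  set J := kerMajorant N α ω Λ with hJ
  have hJ0 : ∀ z, 0 ≤ J z := kerMajorant_nonneg hΛ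
  have hJint : IntegrableOn J {z | r₀ ≤ ‖z‖} := integrableOn_kerMajorant_compl hN hα0 hωα hr₀
  have hB1 : 0 ≤ B₁ := (norm_nonneg _).trans (hG 0)
  -- the inverse of the scale of the cutoff
  set δ : ℕ → ℝ := fun n => 1 / ((n : ℝ) + 1) with hδ
  have hδpos : ∀ n, 0 < δ n := fun n => by simp only [hδ]; positivity
  have hδlim : Tendsto δ atTop (nhds 0) := tendsto_one_div_add_atTop_nhds_zero_nat
  set φn : ℕ → Sp N → ℝ := fun n x => φ (δ n • x) with hφn
  have hφnc : ∀ n, Continuous (φn n) := fun n => hφc.comp (continuous_const_smul _)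
  have hφni : ∀ n, Integrable (φn n) := fun n => hφi.comp_smul (hδpos n).ne'
  have hφn1 : ∀ n x, |φn n x| ≤ 1 := fun n x => hφ1 _
  set η : ℕ → ℝ := fun n =>
    B₂ * δ n ^ 2 * (∫ z in Metric.ball 0 r₀, ‖z‖ ^ 2 * J z) + B₁ * δ n * C +
      ∫ z in {z : Sp N | r₀ ≤ ‖z‖}, min (2 * 1) (B₁ * δ n * ‖z‖) * J z with hη
  have hbound : ∀ n ε, 0 < ε → ε ≤ r₀ → ∀ x,
      |∫ y in {y : Sp N | ε ≤ ‖x - y‖}, (φn n x - φn n y) * κ x y| ≤ η n := by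
    intro n ε hε hεr x
    refine truncated_bound hN hα0 hα2 hω0 hωα hΛ κ hκm hκ0 hκ r₀ C hr₀ hV (φn n)
      (fun x => δ n • G (δ n • x)) (hφnc n).measurable 1 (B₁ * δ n) (B₂ * δ n ^ 2) (hφn1 n)
      ?_ ?_ ?_ ε hε hεr x
    · intro x z
      have := hL (δ n • x) (δ n • z)
      rw [norm_smul, Real.norm_of_nonneg (hδpos n).le, ← smul_add] at this
      rw [mul_assoc]; exact this
    · intro x
      rw [norm_smul, Real.norm_of_nonneg (hδpos n).le, mul_comm]
      exact mul_le_mul_of_nonneg_right (hG _) (hδpos n).le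
    · intro x z
      have := hT (δ n • x) (δ n • z)
      rw [norm_smul, Real.norm_of_nonneg (hδpos n).le, ← smul_add, map_smul, mul_pow] at this
      rw [mul_assoc]; exact this
  have hηlim : Tendsto η atTop (nhds 0) := by
    have l3 : Tendsto (fun n => ∫ z in {z : Sp N | r₀ ≤ ‖z‖}, min (2 * 1) (B₁ * δ n * ‖z‖) * J z)
        atTop (nhds (∫ z in {z : Sp N | r₀ ≤ ‖z‖}, (0 : ℝ))) := by
      refine tendsto_integral_of_dominated_convergence (fun z => 2 * J z) ?_
        (hJint.const_mul 2) ?_ ?_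
      · intro n
        have : Measurable J := measurable_kerMajorant
        exact Measurable.aestronglyMeasurable (by fun_prop)
      · intro n
        refine .of_forall fun z => ?_
        have := hδpos n
        rw [norm_mul, Real.norm_of_nonneg (hJ0 z), Real.norm_of_nonneg (by positivity)]
        refine mul_le_mul_of_nonneg_right ((min_le_left _ _).trans (by norm_num)) (hJ0 z)
      · refine .of_forall fun z => ?_
        have : Tendsto (fun n => min (2 * 1) (B₁ * δ n * ‖z‖) * J z) atTop
            (nhds (min (2 * 1) (B₁ * 0 * ‖z‖) * J z)) :=
          ((tendsto_const_nhds.min ((hδlim.const_mul B₁).mul_const _))).mul_const _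
        simpa using this
    have l1 := ((hδlim.pow 2).const_mul B₂).mul_const (∫ z in Metric.ball 0 r₀, ‖z‖ ^ 2 * J z)
    have l2 := (hδlim.const_mul B₁).mul_const C
    have := (l1.add l2).add l3
    simpa [hη] using this
  have hsmall : ∀ᶠ ε : ℝ in nhdsWithin 0 (Ioi 0), 0 < ε ∧ ε ≤ r₀ := by
    filter_upwards [Ioc_mem_nhdsGT hr₀] with ε hε using hε
  -- move `T_ε` onto the cutoff, bound it by `η n`, and let `ε → 0`
  have hpair : ∀ n, |∫ x, Tf x * φn n x| ≤ (∫ x, |f x|) * η n := by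
    intro n
    have hlim : Tendsto (fun ε : ℝ =>
        ∫ x, (∫ y in {y : Sp N | ε ≤ ‖x - y‖}, (f x - f y) * κ x y) * φn n x)
        (nhdsWithin 0 (Ioi 0)) (nhds (∫ x, Tf x * φn n x)) := by
      refine tendsto_integral_filter_of_dominated_convergence (fun x => M * |φn n x|) ?_ ?_
        ((hφni n).abs.const_mul M) ?_
      · filter_upwards [hsmall] with ε hε
        exact (truncated_symm hN hα0 hωα κ hκm hκ0 hsymm hκ f (φn n) hfm hfL1
          (hφnc n).measurable 1 (hφn1 n) ε hε.1).1.aestronglyMeasurable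
      · filter_upwards [hsmall] with ε hε
        refine .of_forall fun x => ?_
        rw [norm_mul]
        exact mul_le_mul_of_nonneg_right (hM ε hε.1 hε.2 x) (norm_nonneg _)
      · exact .of_forall fun x => (hTf x).mul_const _
    refine le_of_tendsto hlim.abs ?_
    filter_upwards [hsmall] with ε hε
    rw [(truncated_symm hN hα0 hωα κ hκm hκ0 hsymm hκ f (φn n) hfm hfL1
          (hφnc n).measurable 1 (hφn1 n) ε hε.1).2, ← integral_mul_const, ← Real.norm_eq_abs]
    refine norm_integral_le_of_norm_le (hfL1.abs.mul_const _) (.of_forall fun x => ?_)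
    rw [norm_mul]
    exact mul_le_mul_of_nonneg_left (hbound n ε hε.1 hε.2 x) (norm_nonneg _)
  have hlimT : Tendsto (fun n => ∫ x, Tf x * φn n x) atTop (nhds (∫ x, Tf x)) := by
    refine tendsto_integral_of_dominated_convergence (fun x => |Tf x|) ?_ hTint.abs ?_ ?_
    · exact fun n => hTint.aestronglyMeasurable.mul (hφnc n).aestronglyMeasurable
    · intro n
      refine .of_forall fun x => ?_
      rw [norm_mul]
      exact mul_le_of_le_one_right (norm_nonneg _) (hφn1 n x)
    · refine .of_forall fun x => ?_
      have h1 : Tendsto (fun n => φn n x) atTop (nhds (φ ((0 : ℝ) • x))) :=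
        (hφc.tendsto _).comp (hδlim.smul_const x)
      rw [zero_smul, hφ0] at h1
      simpa using h1.const_mul (Tf x)
  have hzero := le_of_tendsto_of_tendsto' hlimT.abs (hηlim.const_mul (∫ x, |f x|)) hpair
  rw [mul_zero] at hzero
  exact abs_nonpos_iff.1 hzero

/-- First moments over shells in the case `α < 1`, where no cancellation is needed since
`|z| ^ (1 - N - α)` is integrable near the origin. -/
theorem shell_moment_bound_of_lt_one {N : ℕ} (hN : 1 ≤ N) {α ω Λ : ℝ}
    (hα1 : α < 1) (hω0 : 0 ≤ ω) (hΛ : 0 ≤ Λ) (h : Sp N → ℝ) (hh0 : ∀ z, 0 ≤ h z)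
    (hh : ∀ z, z ≠ 0 → h z ≤ kerMajorant N α ω Λ z) (ε : ℝ) (hε : 0 < ε) :
    ‖∫ z in {z : Sp N | ε ≤ ‖z‖ ∧ ‖z‖ < 1}, h z • z‖ ≤
      ∫ z in Metric.ball 0 1, ‖z‖ ^ 1 * kerMajorant N α ω Λ z := by
  have hI := integrableOn_kerMajorant_ball (Λ := Λ) hN 1 (by exact_mod_cast hα1) hω0 1
  have hsub : {z : Sp N | ε ≤ ‖z‖ ∧ ‖z‖ < 1} ⊆ Metric.ball 0 1 := fun z hz => by simpa using hz.2
  have hmA : MeasurableSet {z : Sp N | ε ≤ ‖z‖ ∧ ‖z‖ < 1} :=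
    (measurableSet_le measurable_const measurable_norm).inter
      (measurableSet_lt measurable_norm measurable_const)
  refine (norm_integral_le_of_norm_le (hI.mono_set hsub) ?_).trans
    (setIntegral_mono_set hI (.of_forall fun z => ?_) hsub.eventuallyLE)
  · refine (ae_restrict_mem hmA).mono fun z hz => ?_
    rw [norm_smul, Real.norm_of_nonneg (hh0 z), mul_comm, pow_one]
    refine mul_le_mul_of_nonneg_left (hh z ?_) (norm_nonneg _)
    rintro rfl
    have := hz.1
    simp at this; linarith
  · exact mul_nonneg (by positivity) (kerMajorant_nonneg hΛ z)

/-- `T^K_t` has mean zero on `C²∩L¹` functions with bounded derivatives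
(Lemma 2.2 (II) of the paper): `∫ T^K_t(f) = 0`. -/
theorem pv_mean_zero
    (N : ℕ) (hN : 1 ≤ N)
    (α : ℝ) (hα0 : 0 < α) (hα2 : α < 2)
    (ζ : ℝ≥0∞) (hζ : 0 < ζ)
    (ω : ℝ) (hω0 : 0 ≤ ω) (hωα : ω < α)
    (Λ : ℝ) (hΛ : 1 ≤ Λ)
    (ν : ℝ) (s₀ : ℝ≥0∞) (τ : ℝ)
    (hcase : 1 ≤ α → α - 1 < ν ∧ ν < 1 ∧ 0 < s₀ ∧ 0 ≤ τ ∧ ν + ω < min (N : ℝ) α)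
    (T : ℝ≥0∞)
    (K : ℝ → EuclideanSpace ℝ (Fin N) → EuclideanSpace ℝ (Fin N) → ℝ)
    (hK : WeakStarKernel N T K α ζ ω Λ ν s₀ τ)
    (t : ℝ) (ht0 : 0 ≤ t) (htT : ENNReal.ofReal t ≤ T)
    (f Tf : EuclideanSpace ℝ (Fin N) → ℝ)
    (hf : ContDiff ℝ 2 f) (hfL1 : Integrable f)
    (hfb : ∃ B : ℝ, ∀ x, |f x| ≤ B)
    (hfb1 : ∃ B : ℝ, ∀ x, ‖fderiv ℝ f x‖ ≤ B)
    (hfb2 : ∃ B : ℝ, ∀ x, ‖iteratedFDeriv ℝ 2 f x‖ ≤ B)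
    (hTf : ∀ x, HasPVIntegral N K t f x (Tf x)) :
    ∫ x, Tf x = 0 := by
  have hker : ∀ x z : Sp N, z ≠ 0 → K t x (x + z) ≤ kerMajorant N α ω Λ z := by
    intro x z hz
    have hz0 : 0 < ‖z‖ := norm_pos_iff.2 hz
    have hu := hK.upper t x (x + z) ht0 htT (by simpa using hz)
    rw [sub_add_cancel_left, norm_neg] at hu
    rw [← le_div_iff₀ (Real.rpow_pos_of_pos hz0 _)] at hu
    refine hu.trans (le_of_eq ?_)
    rw [kerMajorant, Real.rpow_sub hz0, Real.rpow_neg hz0.le]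
    ring
  have hKm : Measurable fun p : Sp N × Sp N => K t p.1 p.2 :=
    hK.measurable.comp (measurable_const.prodMk measurable_id)
  obtain ⟨r₀, C, hr₀, hV⟩ : ∃ r₀ C : ℝ, 0 < r₀ ∧ ∀ x ε, 0 < ε →
      ‖∫ z in {z : Sp N | ε ≤ ‖z‖ ∧ ‖z‖ < r₀}, K t x (x + z) • z‖ ≤ C := by
    rcases lt_or_ge α 1 with hα1 | hα1
    · exact ⟨1, _, one_pos, fun x ε hε => shell_moment_bound_of_lt_one hN hα1 hω0
        (zero_le_one.trans hΛ) (fun z => K t x (x + z)) (fun z => hK.nonneg _ _ _) (hker x) ε hε⟩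
    · obtain ⟨hν, -, hs₀, -, -⟩ := hcase hα1
      obtain ⟨r, hr, hrs⟩ := ENNReal.lt_iff_exists_nnreal_btwn.1 hs₀
      have hr0 : 0 < (r : ℝ) := by exact_mod_cast hr
      obtain ⟨C, hC⟩ := shell_moment_bound N hN α ν τ r hν hr0
      refine ⟨r, C, hr0, fun x ε hε => hC (fun z => K t x (x + z)) ?_ ε hε⟩
      intro s hs hsr
      refine hK.cancel hα1 t x s ht0 htT hs (lt_trans ?_ hrs)
      rw [← ENNReal.ofReal_coe_nnreal]
      exact (ENNReal.ofReal_lt_ofReal_iff hr0).2 hsr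
  exact mean_zero_of_bounds hN hα0 hα2 hω0 hωα (zero_le_one.trans hΛ) (K t) hKm
    (hK.nonneg t) (fun x y => hK.symm t x y ht0 htT) hker r₀ C hr₀ hV f Tf hf hfL1 hfb hfb1 hfb2 hTf
end
end

section
/- Let N≥1 and let K:[0,T]×ℝ^N×ℝ^N→[0,∞) satisfy the weak-(*)-kernel condition. Suppose w is a smooth solution of ∂ₜw(t,x) + T^K_t(w(t,·))(x) = 0 on [0,T)×ℝ^N with w ∈ L^∞(0,T;(L¹∩L^∞)(ℝ^N)). Then for every 1 ≤ p ≤ ∞ and all 0 ≤ s < t < T, the L^p norm is non-increasing: ‖w(t,·)‖_{L^p(ℝ^N)} ≤ ‖w(s,·)‖_{L^p(ℝ^N)}. -/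
/-!
The argument is the entropy method. Let `η` be convex with derivative `β`. Formally, by the
symmetry of `K`,
`d/dt ∫ η(w) = -∫ β(w) T^K w = -1/2 ∬ (β(w x) - β(w y)) (w x - w y) K(t,x,y) dx dy ≤ 0`,
since `β` is monotone. Two points need care: the operator is only a pointwise principal value, and
`w` is not known to decay at infinity beyond being integrable and bounded.

* Principal value. Everything is done first for the truncation `|x - y| ≥ ε`, where Fubini applies
  (`energy_trunc`). To let `ε → 0` by dominated convergence (`energy_limit`) the truncated operators
  must be bounded uniformly in `ε`, locally in `x`. By a second order Taylor expansion
  (`truncated_bound`, `taylor_local`) this reduces to bounding the drift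
  `∫_{ε ≤ |z| < r} K(t,x,x+z) z dz` (`drift_bound`). For `α < 1` the drift converges absolutely;
  for `α ≥ 1` the cancellation condition is integrated in polar coordinates, where `s^(ν - α)` is
  integrable at `0` because `ν > α - 1`. The cancellation condition is stated with Hausdorff measure
  on the sphere and the polar coordinate formula uses the cone measure `toSphere`; both give equal
  mass to balls of equal radius, by rotation invariance, so they are proportional
  (`uniform_unique`, `hausdorff_eq_toSphere`).

* Behaviour at infinity. The entropy is localized by `ψ_R ^ 2` with a Lipschitz cutoff `ψ_R`. The
  commutator is at most `(1 / (2 c)) V_R ∫ β(w)²`, with `V_R = ∫ min(1, |z|²/R²) J(z) dz` and `J` the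
  radial majorant of the kernel, provided that `β` is strongly monotone with constant `c`
  (`energy_pointwise`). Since `V_R → 0` (`tendsto_commutator`), integrating in time (`time_step`) and
  letting `R → ∞` gives the decay for strongly convex entropies (`entropy_strong`); the general case
  `entropy_noninc` is the limit `δ → 0` of `η + δ u²`.

For `p < ∞` the entropy is `(u² + e)^(p/2) - e^(p/2)`, with `e → 0` at the end. For `p = ∞` it is
the squared distance to `[-M, M]` with `M = ‖w(s)‖_∞`: its integral vanishes at time `s`, hence at
every later time.
-/

open MeasureTheory Filter Set
open scoped ENNReal NNReal

noncomputable section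

/-! ### Uniformly distributed measures -/

/-- One half of `uniform_unique`. On an open set `U` the ratio `ν (U ∩ ball x r) / ν (ball x r)` tends
to `1` as `r → 0`; by Fatou and Fubini, `μ U` is at most the lower limit of
`μ (ball r) / ν (ball r)` times `ν U`. -/
theorem uniform_le_aux {X : Type*} [MetricSpace X] [MeasurableSpace X] [BorelSpace X]
    [SecondCountableTopology X]
    (μ ν : Measure X) [IsFiniteMeasure μ] [IsFiniteMeasure ν] (r : ℕ → ℝ) (g h : ℕ → ℝ≥0∞)
    (hr : Tendsto r atTop (nhds 0))
    (hg : ∀ n x, μ (Metric.ball x (r n)) = g n) (hh : ∀ n x, ν (Metric.ball x (r n)) = h n)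
    (hh0 : ∀ n, h n ≠ 0) (U : Set X) (hU : IsOpen U) :
    μ U ≤ liminf (fun n => g n / h n) atTop * ν U := by
  rcases isEmpty_or_nonempty X with hX | ⟨⟨x₀⟩⟩
  · simp [Set.eq_empty_of_isEmpty U]
  have hht : ∀ n, h n ≠ ∞ := fun n => by rw [← hh n x₀]; exact measure_ne_top _ _
  let D : ℕ → Set (X × X) := fun n => {p | p.2 ∈ U ∧ dist p.2 p.1 < r n}
  have hD : ∀ n, MeasurableSet (D n) := fun n =>
    ((hU.preimage continuous_snd).inter
      (isOpen_lt (continuous_snd.dist continuous_fst) continuous_const)).measurableSet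
  have hsec : ∀ n x, Prod.mk x ⁻¹' D n = U ∩ Metric.ball x (r n) := fun n x => by
    ext y; simp [D, Metric.mem_ball]
  have hmeas : ∀ n, Measurable fun x => ν (U ∩ Metric.ball x (r n)) := fun n => by
    simpa only [hsec] using measurable_measure_prodMk_left (ν := ν) (hD n)
  calc μ U = ∫⁻ x in U, 1 ∂μ := by simp
    _ ≤ ∫⁻ x in U, liminf (fun n => ν (U ∩ Metric.ball x (r n)) / h n) atTop ∂μ := by
        refine setLIntegral_mono' hU.measurableSet fun x hx => ?_
        obtain ⟨δ, hδ, hball⟩ := Metric.isOpen_iff.1 hU x hx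
        refine le_liminf_of_le (by isBoundedDefault) ?_
        filter_upwards [hr.eventually (gt_mem_nhds hδ)] with n hn
        rw [inter_eq_right.2 ((Metric.ball_subset_ball hn.le).trans hball), hh,
          ENNReal.div_self (hh0 n) (hht n)]
    _ ≤ liminf (fun n => ∫⁻ x in U, ν (U ∩ Metric.ball x (r n)) / h n ∂μ) atTop :=
        lintegral_liminf_le fun n => (hmeas n).div_const _
    _ ≤ liminf (fun n => g n / h n * ν U) atTop := by
        refine liminf_le_liminf (Eventually.of_forall fun n => ?_)
        simp only [div_eq_mul_inv]
        rw [lintegral_mul_const _ (hmeas n), mul_right_comm]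
        gcongr
        calc ∫⁻ x in U, ν (U ∩ Metric.ball x (r n)) ∂μ
            ≤ ∫⁻ x, ν (U ∩ Metric.ball x (r n)) ∂μ := setLIntegral_le_lintegral _ _
          _ = (μ.prod ν) (D n) := by rw [Measure.prod_apply (hD n)]; simp only [hsec]
          _ = ∫⁻ y, μ ((fun x => (x, y)) ⁻¹' D n) ∂ν := Measure.prod_apply_symm (hD n)
          _ ≤ ∫⁻ y, U.indicator (fun _ => g n) y ∂ν := by
              refine lintegral_mono fun y => ?_
              by_cases hy : y ∈ U
              · rw [indicator_of_mem hy, ← hg n y]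
                refine measure_mono fun x hx => ?_
                simpa [D, hy, Metric.mem_ball, dist_comm] using hx
              · have : (fun x => (x, y)) ⁻¹' D n = ∅ := by ext x; simp [D, hy]
                simp [this]
          _ = g n * ν U := by rw [lintegral_indicator_const hU.measurableSet]
    _ = liminf (fun n => g n / h n) atTop * ν U := by
        simp only [mul_comm _ (ν U)]
        exact ENNReal.liminf_const_mul_of_ne_top (f := atTop) (measure_ne_top ν U)

/-- Two nonzero finite measures that give equal mass to balls of equal radius are proportional. -/
theorem uniform_unique {X : Type*} [MetricSpace X] [MeasurableSpace X] [BorelSpace X]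
    [SecondCountableTopology X]
    (μ ν : Measure X) [IsFiniteMeasure μ] [IsFiniteMeasure ν]
    (hμ0 : μ ≠ 0) (hν0 : ν ≠ 0)
    (hμ : ∀ r x y, μ (Metric.ball x r) = μ (Metric.ball y r))
    (hν : ∀ r x y, ν (Metric.ball x r) = ν (Metric.ball y r)) :
    ∃ c : ℝ≥0∞, c ≠ 0 ∧ c ≠ ∞ ∧ μ = c • ν := by
  rcases isEmpty_or_nonempty X with hX | ⟨⟨x₀⟩⟩
  · exact absurd (Measure.eq_zero_of_isEmpty μ) hμ0
  have pos : ∀ (m : Measure X), m ≠ 0 → (∀ r x y, m (Metric.ball x r) = m (Metric.ball y r)) →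
      ∀ r > 0, m (Metric.ball x₀ r) ≠ 0 := by
    intro m hm0 hm r hr h0
    refine hm0 (Measure.measure_univ_eq_zero.1 ?_)
    refine measure_null_of_locally_null _ fun x _ => ⟨Metric.ball x r, ?_, by rw [hm r x x₀, h0]⟩
    exact mem_nhdsWithin_of_mem_nhds (Metric.ball_mem_nhds x hr)
  let r : ℕ → ℝ := fun n => 1 / ((n : ℝ) + 1)
  have hr : Tendsto r atTop (nhds 0) := tendsto_one_div_add_atTop_nhds_zero_nat
  have hrp : ∀ n, 0 < r n := fun n => by positivity
  let g : ℕ → ℝ≥0∞ := fun n => μ (Metric.ball x₀ (r n))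
  let h : ℕ → ℝ≥0∞ := fun n => ν (Metric.ball x₀ (r n))
  have A := uniform_le_aux μ ν r g h hr (fun n x => hμ _ _ _) (fun n x => hν _ _ _)
    (fun n => pos ν hν0 hν _ (hrp n))
  have B := uniform_le_aux ν μ r h g hr (fun n x => hν _ _ _) (fun n x => hμ _ _ _)
    (fun n => pos μ hμ0 hμ _ (hrp n))
  set a := liminf (fun n => g n / h n) atTop with ha
  set b := liminf (fun n => h n / g n) atTop with hb
  have hab : a * b ≤ 1 := by
    refine ENNReal.le_liminf_mul.trans ?_
    refine (liminf_le_liminf (Eventually.of_forall fun n => ?_)).trans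
      (liminf_const (1 : ℝ≥0∞)).le
    simp only [Pi.mul_apply, div_eq_mul_inv]
    calc g n * (h n)⁻¹ * (h n * (g n)⁻¹) = (g n * (g n)⁻¹) * (h n * (h n)⁻¹) := by ring
      _ ≤ 1 * 1 := mul_le_mul' (ENNReal.mul_inv_le_one _) (ENNReal.mul_inv_le_one _)
      _ = 1 := by simp
  have hU : ∀ U, IsOpen U → μ U = a * ν U := fun U hU => by
    refine le_antisymm (A U hU) ?_
    calc a * ν U ≤ a * (b * μ U) := by gcongr; exact B U hU
      _ = (a * b) * μ U := by ring
      _ ≤ 1 * μ U := by gcongr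
      _ = μ U := one_mul _
  have ha0 : a ≠ 0 := fun h0 => by
    have := hU univ isOpen_univ
    rw [h0, zero_mul] at this
    exact hμ0 (Measure.measure_univ_eq_zero.1 this)
  have hb0 : b ≠ 0 := fun h0 => by
    have := B univ isOpen_univ
    rw [h0, zero_mul] at this
    exact hν0 (Measure.measure_univ_eq_zero.1 (le_antisymm this zero_le))
  have hat : a ≠ ∞ := fun h0 => by
    rw [h0, ENNReal.top_mul hb0] at hab
    simp at hab
  refine ⟨a, ha0, hat, ?_⟩
  refine ext_of_generate_finite _ BorelSpace.measurable_eq isPiSystem_isOpen (fun U h => ?_) ?_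
  · simpa using hU U h
  · simpa using hU univ isOpen_univ

/-! ### Surface measure of the sphere -/

theorem normalize_lipschitz {E : Type*} [NormedAddCommGroup E] [NormedSpace ℝ E] :
    LipschitzOnWith 2 (fun x : E => ‖x‖⁻¹ • x) {x | 1 ≤ ‖x‖} := by
  refine LipschitzOnWith.of_dist_le_mul fun x hx y hy => ?_
  simp only [mem_ofPred_eq] at hx hy
  have hx0 : 0 < ‖x‖ := by linarith
  have hy0 : 0 < ‖y‖ := by linarith
  rw [dist_eq_norm, dist_eq_norm]
  have e : ‖x‖⁻¹ • x - ‖y‖⁻¹ • y = ‖x‖⁻¹ • (x - y) + (‖x‖⁻¹ * (‖y‖ - ‖x‖) * ‖y‖⁻¹) • y := by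
    have : ‖x‖⁻¹ * (‖y‖ - ‖x‖) * ‖y‖⁻¹ = ‖x‖⁻¹ - ‖y‖⁻¹ := by field_simp
    rw [this]; module
  rw [e]
  refine (norm_add_le _ _).trans ?_
  rw [norm_smul, norm_smul, norm_mul, norm_mul, norm_inv, norm_inv, norm_norm, norm_norm,
    mul_assoc (‖x‖⁻¹ * _), inv_mul_cancel₀ hy0.ne', mul_one]
  have h1 : ‖‖y‖ - ‖x‖‖ ≤ ‖x - y‖ := by
    rw [norm_sub_rev x y]; exact abs_norm_sub_norm_le y x
  have h2 : ‖x‖⁻¹ ≤ 1 := inv_le_one_of_one_le₀ hx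
  have h3 : (0:ℝ) ≤ ‖x‖⁻¹ := by positivity
  have := norm_nonneg (x - y)
  have := norm_nonneg (‖y‖ - ‖x‖)
  push_cast
  nlinarith

/-- The sphere is covered by the images of the faces of a cube under the radial projection, which is
Lipschitz there. -/
theorem hausdorff_sphere_lt_top_s12 (n : ℕ) :
    μH[(n : ℝ)] (Metric.sphere (0 : EuclideanSpace ℝ (Fin (n + 1))) 1) < ∞ := by
  let Q : Set (Fin n → ℝ) := Icc (fun _ => -1) (fun _ => 1)
  let ι : Fin (n + 1) → Bool → (Fin n → ℝ) → EuclideanSpace ℝ (Fin (n + 1)) :=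
    fun i b u => WithLp.toLp 2 (i.insertNth (if b then (1 : ℝ) else -1) u)
  have hι : ∀ i b, ∃ C, LipschitzWith C (ι i b) := by
    intro i b
    have h1 : LipschitzWith 1 (fun u : Fin n → ℝ =>
        (i.insertNth (if b then (1 : ℝ) else -1) u : Fin (n + 1) → ℝ)) := by
      refine LipschitzWith.of_dist_le_mul fun u v => ?_
      rw [NNReal.coe_one, one_mul, dist_pi_le_iff dist_nonneg]
      intro j
      refine Fin.succAboveCases i ?_ (fun k => ?_) j
      · simp
      · simpa using dist_le_pi_dist u v k
    exact ⟨_, (PiLp.lipschitzWith_toLp 2 (fun _ : Fin (n + 1) => ℝ)).comp h1⟩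
  have hιn : ∀ i b u, 1 ≤ ‖ι i b u‖ := by
    intro i b u
    have := PiLp.norm_apply_le (ι i b u) i
    refine le_trans ?_ this
    cases b <;> simp [ι]
  have hcov : Metric.sphere (0 : EuclideanSpace ℝ (Fin (n + 1))) 1 ⊆
      ⋃ i, ⋃ b, (fun u => ‖ι i b u‖⁻¹ • ι i b u) '' Q := by
    intro x hx
    have hx1 : ‖x‖ = 1 := by simpa using hx
    obtain ⟨i, hi⟩ := Finite.exists_max (fun j => |x j|)
    have hi0 : x i ≠ 0 := by
      intro h0
      have : x = 0 := by
        ext j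
        have := hi j
        rw [h0, abs_zero] at this
        simpa using this
      rw [this] at hx1; simp at hx1
    have hpos : 0 < |x i| := abs_pos.2 hi0
    refine mem_iUnion.2 ⟨i, mem_iUnion.2 ⟨decide (0 < x i), fun k => |x i|⁻¹ * x (i.succAbove k), ?_, ?_⟩⟩
    · have : ∀ k, |(|x i|⁻¹ * x (i.succAbove k))| ≤ 1 := fun k => by
        rw [abs_mul, abs_inv, abs_abs, inv_mul_le_iff₀ hpos, mul_one]; exact hi _
      exact ⟨fun k => (abs_le.1 (this k)).1, fun k => (abs_le.1 (this k)).2⟩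
    · have e : ι i (decide (0 < x i)) (fun k => |x i|⁻¹ * x (i.succAbove k)) = |x i|⁻¹ • x := by
        ext j
        refine Fin.succAboveCases i ?_ (fun k => ?_) j
        · rcases lt_or_gt_of_ne hi0 with h | h
          · simp [ι, h.not_gt, abs_of_neg h]; field_simp
          · simp [ι, h, abs_of_pos h]; field_simp
        · simp [ι]
      simp only [e]
      rw [norm_smul, hx1, mul_one, norm_inv, inv_inv, Real.norm_eq_abs, abs_abs, smul_smul,
        mul_inv_cancel₀ hpos.ne', one_smul]
  refine (measure_mono hcov).trans_lt ?_
  refine (measure_iUnion_le _).trans_lt ?_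
  rw [tsum_fintype]
  refine ENNReal.sum_lt_top.2 fun i _ => (measure_iUnion_le _).trans_lt ?_
  rw [tsum_fintype]
  refine ENNReal.sum_lt_top.2 fun b _ => ?_
  obtain ⟨C, hC⟩ := hι i b
  have hL := normalize_lipschitz.comp hC.lipschitzOnWith (s := Q) (fun u _ => hιn i b u)
  refine (hL.hausdorffMeasure_image_le (d := (n:ℝ)) (by positivity)).trans_lt ?_
  have : μH[(n : ℝ)] = (volume : Measure (Fin n → ℝ)) := by
    simpa using hausdorffMeasure_pi_real (ι := Fin n)
  rw [this]
  refine ENNReal.mul_lt_top ?_ isCompact_Icc.measure_lt_top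
  exact ENNReal.rpow_lt_top_of_nonneg (by positivity) ENNReal.coe_ne_top

/-- A coordinate projection is `1`-Lipschitz and maps the sphere onto a set that contains a ball of
positive Lebesgue measure. -/
theorem hausdorff_sphere_ne_zero_s12 (n : ℕ) :
    μH[(n : ℝ)] (Metric.sphere (0 : EuclideanSpace ℝ (Fin (n + 1))) 1) ≠ 0 := by
  intro h0
  let P : EuclideanSpace ℝ (Fin (n + 1)) → (Fin n → ℝ) := fun x i => x i.castSucc
  have hP : LipschitzWith 1 P := by
    refine LipschitzWith.of_dist_le_mul fun u v => ?_
    rw [NNReal.coe_one, one_mul, dist_pi_le_iff dist_nonneg]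
    intro j
    rw [dist_eq_norm, dist_eq_norm]
    exact PiLp.norm_apply_le (u - v) j.castSucc
  let Q : Set (Fin n → ℝ) := Metric.ball 0 (1 / ((n : ℝ) + 1))
  have hsub : Q ⊆ P '' (Metric.sphere (0 : EuclideanSpace ℝ (Fin (n + 1))) 1) := by
    intro u hu
    have hu' : ∀ i, |u i| < 1 / ((n : ℝ) + 1) := by
      have := (mem_ball_zero_iff.1 hu)
      rw [pi_norm_lt_iff (by positivity)] at this
      exact this
    have hs : ∑ i, u i ^ 2 ≤ 1 := by
      calc ∑ i, u i ^ 2 ≤ ∑ i : Fin n, 1 / ((n : ℝ) + 1) := by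
            refine Finset.sum_le_sum fun i _ => ?_
            rw [← sq_abs]
            have h1 := hu' i
            have h2 : 1 / ((n : ℝ) + 1) ≤ 1 := by
              rw [div_le_one (by positivity)]; linarith [(Nat.cast_nonneg n : (0:ℝ) ≤ n)]
            nlinarith [abs_nonneg (u i)]
        _ ≤ 1 := by
            simp only [Finset.sum_const, Finset.card_univ, Fintype.card_fin, nsmul_eq_mul]
            rw [mul_one_div, div_le_one (by positivity)]; linarith
    refine ⟨WithLp.toLp 2 (Fin.snoc (α := fun _ => ℝ) u (Real.sqrt (1 - ∑ i, u i ^ 2))), ?_, ?_⟩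
    · rw [mem_sphere_zero_iff_norm, EuclideanSpace.norm_eq, Fin.sum_univ_castSucc]
      simp [Real.sq_sqrt (sub_nonneg.2 hs)]
    · ext i; simp [P]
  have h1 := hP.hausdorffMeasure_image_le (d := (n:ℝ)) (by positivity)
    (Metric.sphere (0 : EuclideanSpace ℝ (Fin (n + 1))) 1)
  have : μH[(n : ℝ)] = (volume : Measure (Fin n → ℝ)) := by
    simpa using hausdorffMeasure_pi_real (ι := Fin n)
  rw [h0, mul_zero, this] at h1
  have h2 := (measure_mono hsub).trans h1
  exact (Metric.measure_ball_pos volume (0 : Fin n → ℝ) (by positivity)).ne'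
    (le_antisymm h2 zero_le)

open scoped Pointwise in
/-- On the unit sphere, Hausdorff measure and `toSphere` are proportional. -/
theorem hausdorff_eq_toSphere (n : ℕ) :
    ∃ c : ℝ≥0∞, c ≠ 0 ∧ c ≠ ∞ ∧
      (μH[(n : ℝ)] : Measure (Metric.sphere (0 : EuclideanSpace ℝ (Fin (n + 1))) 1)) =
        c • (volume : Measure (EuclideanSpace ℝ (Fin (n + 1)))).toSphere := by
  set E := EuclideanSpace ℝ (Fin (n + 1))
  have hu : (μH[(n : ℝ)] : Measure (Metric.sphere (0 : E) 1)) univ =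
      μH[(n : ℝ)] (Metric.sphere (0 : E) 1) := by
    rw [← (isometry_subtype_coe (s := Metric.sphere (0 : E) 1)).hausdorffMeasure_image
      (Or.inl (by positivity)) univ, image_univ, Subtype.range_coe]
  have : IsFiniteMeasure (μH[(n : ℝ)] : Measure (Metric.sphere (0 : E) 1)) :=
    ⟨by rw [hu]; exact hausdorff_sphere_lt_top_s12 n⟩
  -- a linear isometry of the space mapping one point of the sphere to another
  have hrot : ∀ x y : Metric.sphere (0 : E) 1, ∃ e : E ≃ₗᵢ[ℝ] E, e x = y := fun x y => by
    refine ⟨_, Submodule.reflection_sub (v := (x : E)) (w := (y : E)) ?_⟩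
    rw [norm_eq_of_mem_sphere x, norm_eq_of_mem_sphere y]
  have himg : ∀ (x y : Metric.sphere (0 : E) 1) (r : ℝ) (e : E ≃ₗᵢ[ℝ] E), e x = y →
      ((↑) '' Metric.ball y r : Set E) = e '' ((↑) '' Metric.ball x r) := by
    intro x y r e he
    rw [Subtype.image_ball, Subtype.image_ball]
    ext z
    constructor
    · rintro ⟨h1, h2⟩
      refine ⟨e.symm z, ⟨?_, ?_⟩, by simp⟩
      · rw [Metric.mem_ball] at h1 ⊢
        rw [← e.dist_map, he]; simpa using h1
      · simpa [e.symm.norm_map] using h2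
    · rintro ⟨u, ⟨h1, h2⟩, rfl⟩
      refine ⟨?_, ?_⟩
      · rw [Metric.mem_ball] at h1 ⊢
        rw [← he, e.dist_map]; exact h1
      · simpa [e.norm_map] using h2
  refine uniform_unique _ _ ?_ (Measure.toSphere_ne_zero _) (fun r x y => ?_) (fun r x y => ?_)
  · intro h
    refine hausdorff_sphere_ne_zero_s12 n ?_
    rw [← hu, h]; simp
  · obtain ⟨e, he⟩ := hrot x y
    have hs := fun A => (isometry_subtype_coe (s := Metric.sphere (0 : E) 1)).hausdorffMeasure_image
      (d := (n : ℝ)) (Or.inl (by positivity)) A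
    rw [← hs, ← hs, himg x y r e he, e.isometry.hausdorffMeasure_image (Or.inl (by positivity))]
  · obtain ⟨e, he⟩ := hrot x y
    rw [Measure.toSphere_apply' _ measurableSet_ball, Measure.toSphere_apply' _ measurableSet_ball]
    congr 1
    have : Ioo (0 : ℝ) 1 • ((↑) '' Metric.ball y r : Set E) =
        e.symm ⁻¹' (Ioo (0 : ℝ) 1 • ((↑) '' Metric.ball x r : Set E)) := by
      rw [himg x y r e he]
      ext z
      simp only [Set.mem_smul, mem_preimage]
      constructor
      · rintro ⟨a, ha, _, ⟨u, hu, rfl⟩, rfl⟩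
        exact ⟨a, ha, u, hu, by simp⟩
      · rintro ⟨a, ha, u, hu, h⟩
        refine ⟨a, ha, e u, ⟨u, hu, rfl⟩, ?_⟩
        rw [← map_smul, h]; simp
    rw [this]
    exact ((e.symm.measurePreserving).measure_preimage_emb
      e.symm.toHomeomorph.measurableEmbedding _).symm

/-- Comparison of the vector spherical integral with the one for `toSphere`. -/
theorem norm_toSphere_integral_le (n : ℕ) :
    ∃ C : ℝ, 0 ≤ C ∧ ∀ g : EuclideanSpace ℝ (Fin (n + 1)) → ℝ,
      ‖∫ σ, g σ • (σ : EuclideanSpace ℝ (Fin (n + 1)))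
        ∂(volume : Measure (EuclideanSpace ℝ (Fin (n + 1)))).toSphere‖ ≤
      C * ‖sphereVecInt (n + 1) g‖ := by
  obtain ⟨c, hc0, hct, hc⟩ := hausdorff_eq_toSphere n
  refine ⟨c.toReal⁻¹, by positivity, fun g => ?_⟩
  have hc' : 0 < c.toReal := ENNReal.toReal_pos hc0 hct
  have h1 : sphereVecInt (n + 1) g =
      ∫ σ : Metric.sphere (0 : EuclideanSpace ℝ (Fin (n + 1))) 1, g σ • (σ : EuclideanSpace ℝ (Fin (n + 1)))
        ∂(μH[(n : ℝ)]) := by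
    have hd : ((n + 1 : ℕ) : ℝ) - 1 = n := by push_cast; ring
    rw [sphereVecInt, hd, ← integral_subtype_comap Metric.isClosed_sphere.measurableSet
      (fun σ => g σ • σ)]
    congr 1
    refine Measure.ext fun A hA => ?_
    rw [Measure.comap_apply _ Subtype.val_injective
      (fun B hB => Metric.isClosed_sphere.measurableSet.subtype_image hB) _ hA,
      isometry_subtype_coe.hausdorffMeasure_image (Or.inl (by positivity))]
  rw [h1, hc, integral_smul_measure, norm_smul, Real.norm_of_nonneg hc'.le, ← mul_assoc,
    inv_mul_cancel₀ hc'.ne', one_mul]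

/-! ### Polar coordinates and the radial majorant -/

theorem integral_polar (n : ℕ) {F : Type*} [NormedAddCommGroup F] [NormedSpace ℝ F]
    (h : EuclideanSpace ℝ (Fin (n + 1)) → F) (hh : Integrable h) :
    ∫ z, h z = ∫ s in Ioi (0 : ℝ), s ^ n •
      ∫ σ, h (s • (σ : EuclideanSpace ℝ (Fin (n + 1))))
        ∂(volume : Measure (EuclideanSpace ℝ (Fin (n + 1)))).toSphere := by
  let μ : Measure (EuclideanSpace ℝ (Fin (n + 1))) := volume
  have hd : Module.finrank ℝ (EuclideanSpace ℝ (Fin (n + 1))) - 1 = n := by simp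
  have hmp := μ.measurePreserving_homeomorphUnitSphereProd
  rw [hd] at hmp
  let G : Metric.sphere (0 : EuclideanSpace ℝ (Fin (n + 1))) 1 × Ioi (0 : ℝ) → F :=
    fun p => h ((p.2 : ℝ) • (p.1 : EuclideanSpace ℝ (Fin (n + 1))))
  have hG : ∀ z : ({0}ᶜ : Set (EuclideanSpace ℝ (Fin (n + 1)))),
      G (homeomorphUnitSphereProd _ z) = h z := by
    intro z
    have hz : ‖(z : EuclideanSpace ℝ (Fin (n + 1)))‖ ≠ 0 := by
      exact norm_ne_zero_iff.2 z.2
    simp [G, smul_smul, mul_inv_cancel₀ hz]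
  have hint : Integrable G (μ.toSphere.prod (Measure.volumeIoiPow n)) := by
    rw [← hmp.integrable_comp_emb (Homeomorph.measurableEmbedding _)]
    have : G ∘ (homeomorphUnitSphereProd (EuclideanSpace ℝ (Fin (n + 1)))) = h ∘ (↑) := by
      ext z; exact hG z
    rw [this]
    exact (integrableOn_iff_comap_subtypeVal (measurableSet_singleton _).compl).1 hh.integrableOn
  calc ∫ z, h z = ∫ z : ({0}ᶜ : Set (EuclideanSpace ℝ (Fin (n + 1)))), h z ∂(μ.comap (↑)) := by
        rw [integral_subtype_comap (measurableSet_singleton _).compl h, restrict_compl_singleton]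
    _ = ∫ p, G p ∂(μ.toSphere.prod (Measure.volumeIoiPow n)) := by
        rw [← hmp.integral_comp (Homeomorph.measurableEmbedding _)]
        exact integral_congr_ae (Eventually.of_forall fun z => (hG z).symm)
    _ = ∫ s : Ioi (0 : ℝ), ∫ σ, G (σ, s) ∂μ.toSphere ∂(Measure.volumeIoiPow n) :=
        integral_prod_symm _ hint
    _ = _ := by
        simp only [Measure.volumeIoiPow, ENNReal.ofReal]
        rw [integral_withDensity_eq_integral_smul,
          integral_subtype_comap measurableSet_Ioi fun a : ℝ ↦ Real.toNNReal (a ^ n) •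
            ∫ σ, h (a • (σ : EuclideanSpace ℝ (Fin (n + 1)))) ∂μ.toSphere]
        · refine setIntegral_congr_fun measurableSet_Ioi fun x hx ↦ ?_
          simp only [NNReal.smul_def]
          rw [Real.coe_toNNReal _ (pow_nonneg (le_of_lt hx) _)]
        · exact (measurable_subtype_coe.pow_const _).real_toNNReal

/-- The radial majorant `Λ (1 + |z|^ω) |z|^{-N-α}` of the kernel. -/
def domKer (N : ℕ) (α ω Λ : ℝ) (z : EuclideanSpace ℝ (Fin N)) : ℝ :=
  Λ * (1 + ‖z‖ ^ ω) * ‖z‖ ^ (-((N : ℝ) + α))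

theorem domKer_nonneg {N : ℕ} {α ω Λ : ℝ} (hΛ : 1 ≤ Λ) (z : EuclideanSpace ℝ (Fin N)) :
    0 ≤ domKer N α ω Λ z := by
  have : 0 ≤ Λ := by linarith
  unfold domKer; positivity

theorem domKer_measurable (N : ℕ) (α ω Λ : ℝ) : Measurable (domKer N α ω Λ) := by
  unfold domKer; fun_prop

/-- Polar coordinates form of the integrability of `|z|^b` times the majorant near the origin. -/
theorem integrableOn_radial {m : ℕ} {α ω Λ b : ℝ} (hω0 : 0 ≤ ω) (hΛ : 1 ≤ Λ)
    (hb : α < b) :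
    IntegrableOn (fun s : ℝ => s ^ m • (s ^ b * (Λ * (1 + s ^ ω) * s ^ (-(((m + 1 : ℕ) : ℝ) + α))))) (Ioo 0 1) := by
  have hi : IntegrableOn (fun s : ℝ => 2 * Λ * s ^ (b - 1 - α)) (Ioo 0 1) :=
    ((intervalIntegral.integrableOn_Ioo_rpow_iff (s := b - 1 - α) one_pos).2 (by linarith)).const_mul _
  refine Integrable.mono' hi ?_ ?_
  · exact Measurable.aestronglyMeasurable (by fun_prop)
  · filter_upwards [ae_restrict_mem measurableSet_Ioo] with s hs
    have hs0 : 0 < s := hs.1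
    have e : s ^ m • (s ^ b * (Λ * (1 + s ^ ω) * s ^ (-(((m + 1 : ℕ) : ℝ) + α)))) =
        Λ * (1 + s ^ ω) * s ^ (b - 1 - α) := by
      have : s ^ (b - 1 - α) = s ^ (m : ℝ) * s ^ b * s ^ (-(((m + 1 : ℕ) : ℝ) + α)) := by
        rw [← Real.rpow_add hs0, ← Real.rpow_add hs0]; congr 1; push_cast; ring
      rw [this, Real.rpow_natCast, smul_eq_mul]; ring
    have h1 : s ^ ω ≤ 1 := Real.rpow_le_one hs0.le hs.2.le hω0
    rw [e, Real.norm_of_nonneg (by positivity)]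
    have : 0 ≤ s ^ (b - 1 - α) := by positivity
    have h3 : Λ * (1 + s ^ ω) ≤ 2 * Λ := by nlinarith
    gcongr

theorem domKer_integrable_min {N : ℕ} (hN : 1 ≤ N) {α ω Λ : ℝ} (hα2 : α < 2)
    (hω0 : 0 ≤ ω) (hωα : ω < α) (hΛ : 1 ≤ Λ) :
    Integrable (fun z : EuclideanSpace ℝ (Fin N) => min 1 (‖z‖ ^ 2) * domKer N α ω Λ z) := by
  obtain ⟨m, rfl⟩ : ∃ m, N = m + 1 := ⟨N - 1, by omega⟩
  have key := (integrable_fun_norm_addHaar (volume : Measure (EuclideanSpace ℝ (Fin (m + 1))))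
    (f := fun s : ℝ => min 1 (s ^ 2) * (Λ * (1 + s ^ ω) * s ^ (-(((m + 1 : ℕ) : ℝ) + α))))).2
  refine key ?_
  have hd : Module.finrank ℝ (EuclideanSpace ℝ (Fin (m + 1))) - 1 = m := by simp
  rw [hd]
  have hΛ0 : 0 ≤ Λ := by linarith
  have hsplit : Ioi (0 : ℝ) = Ioo 0 1 ∪ Ici 1 := by
    ext s; simp only [mem_Ioi, mem_union, mem_Ioo, mem_Ici]
    constructor
    · intro h; rcases lt_or_ge s 1 with h1 | h1
      · exact Or.inl ⟨h, h1⟩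
      · exact Or.inr h1
    · rintro (h | h)
      · exact h.1
      · linarith
  rw [hsplit]
  refine IntegrableOn.union ?_ ?_
  · refine (integrableOn_radial (m := m) (b := 2) hω0 hΛ hα2).congr_fun (fun s hs => ?_)
      measurableSet_Ioo
    have : s ^ 2 ≤ 1 := by nlinarith [hs.1, hs.2]
    simp [min_eq_right this]
  · rw [integrableOn_Ici_iff_integrableOn_Ioi]
    have hi : IntegrableOn (fun s : ℝ => 2 * Λ * s ^ (ω - 1 - α)) (Ioi 1) :=
      (integrableOn_Ioi_rpow_of_lt (by linarith) one_pos).const_mul _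
    refine Integrable.mono' hi (Measurable.aestronglyMeasurable (by fun_prop)) ?_
    filter_upwards [ae_restrict_mem measurableSet_Ioi] with s hs
    have hs1 : (1 : ℝ) ≤ s := le_of_lt hs
    have hs0 : 0 < s := by linarith
    have : (1 : ℝ) ≤ s ^ 2 := by nlinarith
    rw [min_eq_left this, one_mul, Real.norm_of_nonneg (by positivity)]
    have h1 : 1 ≤ s ^ ω := Real.one_le_rpow hs1 hω0
    have e : s ^ (ω - 1 - α) = s ^ ω * (s ^ m * s ^ (-(((m + 1 : ℕ) : ℝ) + α))) := by
      rw [← Real.rpow_natCast s m, ← Real.rpow_add hs0, ← Real.rpow_add hs0]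
      congr 1; push_cast; ring
    rw [e, smul_eq_mul]
    have h3 : 0 ≤ s ^ m * s ^ (-(((m + 1 : ℕ) : ℝ) + α)) := by positivity
    have h4 : Λ * (1 + s ^ ω) ≤ 2 * Λ * s ^ ω := by nlinarith
    calc s ^ m * (Λ * (1 + s ^ ω) * s ^ (-(((m + 1 : ℕ) : ℝ) + α)))
        = (Λ * (1 + s ^ ω)) * (s ^ m * s ^ (-(((m + 1 : ℕ) : ℝ) + α))) := by ring
      _ ≤ (2 * Λ * s ^ ω) * (s ^ m * s ^ (-(((m + 1 : ℕ) : ℝ) + α))) := by gcongr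
      _ = _ := by ring

theorem domKer_integrable_norm {N : ℕ} (hN : 1 ≤ N) {α ω Λ : ℝ} (hα1 : α < 1)
    (hω0 : 0 ≤ ω) (hΛ : 1 ≤ Λ) :
    IntegrableOn (fun z : EuclideanSpace ℝ (Fin N) => ‖z‖ * domKer N α ω Λ z)
      (Metric.ball 0 1) := by
  obtain ⟨m, rfl⟩ : ∃ m, N = m + 1 := ⟨N - 1, by omega⟩
  have key := (integrableOn_fun_norm_addHaar (volume : Measure (EuclideanSpace ℝ (Fin (m + 1))))
    (f := fun s : ℝ => s * (Λ * (1 + s ^ ω) * s ^ (-(((m + 1 : ℕ) : ℝ) + α)))) (r := 1)).2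
  refine key ?_
  have hd : Module.finrank ℝ (EuclideanSpace ℝ (Fin (m + 1))) - 1 = m := by simp
  rw [hd]
  simpa using integrableOn_radial (m := m) (b := 1) hω0 hΛ hα1

/-- The majorant is integrable away from the origin. -/
theorem domKer_integrableOn_compl {N : ℕ} (hN : 1 ≤ N) {α ω Λ : ℝ} (hα2 : α < 2)
    (hω0 : 0 ≤ ω) (hωα : ω < α) (hΛ : 1 ≤ Λ) {ε : ℝ} (hε : 0 < ε) :
    IntegrableOn (domKer N α ω Λ) {z : EuclideanSpace ℝ (Fin N) | ε ≤ ‖z‖} := by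
  have hm : 0 < min 1 (ε ^ 2) := by positivity
  have hi := ((domKer_integrable_min hN hα2 hω0 hωα hΛ).const_mul (min 1 (ε ^ 2))⁻¹).integrableOn
    (s := {z : EuclideanSpace ℝ (Fin N) | ε ≤ ‖z‖})
  refine Integrable.mono' hi (domKer_measurable N α ω Λ).aestronglyMeasurable ?_
  filter_upwards [ae_restrict_mem (measurableSet_le measurable_const measurable_norm)] with z hz
  have hz : ε ≤ ‖z‖ := hz
  rw [Real.norm_of_nonneg (domKer_nonneg hΛ z), ← mul_assoc]
  refine le_mul_of_one_le_left (domKer_nonneg hΛ z) ?_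
  rw [← div_eq_inv_mul, one_le_div hm]
  gcongr

/-! ### The drift term -/

theorem kernel_le_domKer {N : ℕ} {T : ℝ≥0∞}
    {K : ℝ → EuclideanSpace ℝ (Fin N) → EuclideanSpace ℝ (Fin N) → ℝ}
    {α : ℝ} {ζ : ℝ≥0∞} {ω Λ ν : ℝ} {s₀ : ℝ≥0∞} {τ : ℝ}
    (hK : WeakStarKernel N T K α ζ ω Λ ν s₀ τ) {t : ℝ} (ht : 0 ≤ t) (htT : ENNReal.ofReal t ≤ T)
    {x y : EuclideanSpace ℝ (Fin N)} (hxy : x ≠ y) :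
    K t x y ≤ domKer N α ω Λ (x - y) := by
  have hp : 0 < ‖x - y‖ := norm_pos_iff.2 (sub_ne_zero.2 hxy)
  rw [domKer, Real.rpow_neg hp.le, ← div_eq_mul_inv, le_div_iff₀ (by positivity)]
  exact hK.upper t x y ht htT hxy

theorem kernel_le_domKer' {N : ℕ} {T : ℝ≥0∞}
    {K : ℝ → EuclideanSpace ℝ (Fin N) → EuclideanSpace ℝ (Fin N) → ℝ}
    {α : ℝ} {ζ : ℝ≥0∞} {ω Λ ν : ℝ} {s₀ : ℝ≥0∞} {τ : ℝ}
    (hK : WeakStarKernel N T K α ζ ω Λ ν s₀ τ) {t : ℝ} (ht : 0 ≤ t) (htT : ENNReal.ofReal t ≤ T)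
    (x : EuclideanSpace ℝ (Fin N)) {z : EuclideanSpace ℝ (Fin N)} (hz : z ≠ 0) :
    K t x (x + z) ≤ domKer N α ω Λ z := by
  have := kernel_le_domKer hK ht htT (x := x) (y := x + z) (by simpa using hz)
  simpa [domKer] using this

/-- Uniform bound for the truncated drift `∫_{ε ≤ |z| < r} K(t,x,x+z) z dz`: the majorant has a
finite first moment near the origin when `α < 1`, and for `α ≥ 1` the cancellation condition is
integrated in polar coordinates. -/
theorem drift_bound {N : ℕ} (hN : 1 ≤ N) {α : ℝ} (hα2 : α < 2) {ζ : ℝ≥0∞}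
    {ω : ℝ} (hω0 : 0 ≤ ω) (hωα : ω < α) {Λ : ℝ} (hΛ : 1 ≤ Λ) {ν : ℝ} {s₀ : ℝ≥0∞} {τ : ℝ}
    (hcase : 1 ≤ α → α - 1 < ν ∧ 0 < s₀ ∧ 0 ≤ τ) {T : ℝ≥0∞}
    {K : ℝ → EuclideanSpace ℝ (Fin N) → EuclideanSpace ℝ (Fin N) → ℝ}
    (hK : WeakStarKernel N T K α ζ ω Λ ν s₀ τ) :
    ∃ r B : ℝ, 0 < r ∧ r ≤ 1 ∧ 0 ≤ B ∧ ∀ t, 0 ≤ t → ENNReal.ofReal t ≤ T →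
      ∀ (x : EuclideanSpace ℝ (Fin N)) (ε : ℝ), 0 < ε →
        ‖∫ z in {z : EuclideanSpace ℝ (Fin N) | ε ≤ ‖z‖ ∧ ‖z‖ < r}, K t x (x + z) • z‖ ≤ B := by
  have hmeasS : ∀ (ε r : ℝ), MeasurableSet {z : EuclideanSpace ℝ (Fin N) | ε ≤ ‖z‖ ∧ ‖z‖ < r} :=
    fun ε r => (measurableSet_le measurable_const measurable_norm).inter
      (measurableSet_lt measurable_norm measurable_const)
  have hmeasK : ∀ t x, Measurable fun z : EuclideanSpace ℝ (Fin N) => K t x (x + z) := fun t x =>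
    hK.measurable.comp (measurable_const.prodMk (measurable_const.prodMk (measurable_const_add x)))
  rcases lt_or_ge α 1 with hα1 | hα1
  · refine ⟨1, ∫ z in Metric.ball (0 : EuclideanSpace ℝ (Fin N)) 1, ‖z‖ * domKer N α ω Λ z,
      one_pos, le_rfl, ?_, fun t ht htT x ε hε => ?_⟩
    · exact integral_nonneg fun z => mul_nonneg (norm_nonneg _) (domKer_nonneg hΛ z)
    · have hi := domKer_integrable_norm hN hα1 hω0 hΛ
      have hsub : {z : EuclideanSpace ℝ (Fin N) | ε ≤ ‖z‖ ∧ ‖z‖ < 1} ⊆ Metric.ball 0 1 :=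
        fun z hz => by simpa using hz.2
      refine (norm_integral_le_of_norm_le (hi.mono_set hsub) ?_).trans ?_
      · filter_upwards [ae_restrict_mem (hmeasS ε 1)] with z hz
        have hz0 : z ≠ 0 := norm_pos_iff.1 (hε.trans_le hz.1)
        rw [norm_smul, Real.norm_of_nonneg (hK.nonneg _ _ _), mul_comm]
        gcongr
        exact kernel_le_domKer' hK ht htT x hz0
      · exact setIntegral_mono_set hi (Eventually.of_forall fun z =>
          mul_nonneg (norm_nonneg _) (domKer_nonneg hΛ z)) (Eventually.of_forall hsub)
  · obtain ⟨hν, hs₀, hτ⟩ := hcase hα1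
    obtain ⟨n, rfl⟩ : ∃ m, N = m + 1 := ⟨N - 1, by omega⟩
    obtain ⟨C, hC0, hC⟩ := norm_toSphere_integral_le n
    obtain ⟨r, hr0, hr1, hrs⟩ : ∃ r : ℝ, 0 < r ∧ r ≤ 1 ∧ ENNReal.ofReal r ≤ s₀ := by
      rcases eq_or_ne s₀ ∞ with h | h
      · exact ⟨1, one_pos, le_rfl, by simp [h]⟩
      · refine ⟨min 1 s₀.toReal, lt_min one_pos (ENNReal.toReal_pos hs₀.ne' h), min_le_left _ _, ?_⟩
        exact (ENNReal.ofReal_le_ofReal (min_le_right _ _)).trans ENNReal.ofReal_toReal_le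
    -- the cancellation condition bounds the spherical integral at radius `s` by `τ s^ν`; the factor
    -- `s^n * s * s^(-(n+1+α))` from polar coordinates leaves `s^(ν - α)`
    let b : ℝ → ℝ := (Iio r).indicator fun s => C * τ * s ^ (ν - α)
    have hb0 : ∀ s ∈ Ioi (0 : ℝ), 0 ≤ b s := fun s hs =>
      indicator_apply_nonneg fun _ => by have : 0 < s := hs; positivity
    have hbi : IntegrableOn b (Ioi 0) := by
      rw [IntegrableOn, integrable_indicator_iff measurableSet_Iio, IntegrableOn,
        Measure.restrict_restrict measurableSet_Iio, inter_comm, Ioi_inter_Iio]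
      exact ((intervalIntegral.integrableOn_Ioo_rpow_iff (s := ν - α) hr0).2
        (by linarith)).const_mul _
    refine ⟨r, ∫ s in Ioi (0 : ℝ), b s, hr0, hr1, setIntegral_nonneg measurableSet_Ioi hb0,
      fun t ht htT x ε hε => ?_⟩
    set S := {z : EuclideanSpace ℝ (Fin (n + 1)) | ε ≤ ‖z‖ ∧ ‖z‖ < r} with hS
    have hSi : IntegrableOn (fun z => K t x (x + z) • z) S := by
      have hi : IntegrableOn (fun z : EuclideanSpace ℝ (Fin (n + 1)) =>
          r * domKer (n + 1) α ω Λ z) S :=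
        ((domKer_integrableOn_compl hN hα2 hω0 hωα hΛ hε).mono_set fun z hz => hz.1).const_mul r
      refine Integrable.mono' hi ((hmeasK t x).smul measurable_id).aestronglyMeasurable ?_
      filter_upwards [ae_restrict_mem (hmeasS ε r)] with z hz
      have hz0 : z ≠ 0 := norm_pos_iff.1 (hε.trans_le hz.1)
      rw [norm_smul, Real.norm_of_nonneg (hK.nonneg _ _ _), mul_comm]
      have := hK.nonneg t x (x + z)
      gcongr
      · exact hz.2.le
      · exact kernel_le_domKer' hK ht htT x hz0
    have hSm : MeasurableSet S := hmeasS ε r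
    rw [← integral_indicator hSm, integral_polar n _ ((integrable_indicator_iff hSm).2 hSi)]
    refine norm_integral_le_of_norm_le hbi ?_
    filter_upwards [ae_restrict_mem measurableSet_Ioi] with s hs
    have hs : 0 < s := hs
    by_cases hsr : ε ≤ s ∧ s < r
    · have e : ∀ σ : Metric.sphere (0 : EuclideanSpace ℝ (Fin (n + 1))) 1,
          S.indicator (fun z => K t x (x + z) • z) (s • (σ : EuclideanSpace ℝ (Fin (n + 1)))) =
          (s * s ^ (-(((n + 1 : ℕ) : ℝ) + α))) •
            (kAssoc (n + 1) α K t x (s • (σ : EuclideanSpace ℝ (Fin (n + 1)))) •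
              (σ : EuclideanSpace ℝ (Fin (n + 1)))) := by
        intro σ
        have hn : ‖s • (σ : EuclideanSpace ℝ (Fin (n + 1)))‖ = s := by
          rw [norm_smul, norm_eq_of_mem_sphere σ, mul_one, Real.norm_of_nonneg hs.le]
        have hm : s • (σ : EuclideanSpace ℝ (Fin (n + 1))) ∈ S := by
          simp only [hS, mem_ofPred_eq, hn]; exact hsr
        rw [indicator_of_mem hm, kAssoc, hn, smul_smul, smul_smul, Real.rpow_neg hs.le]
        congr 1
        have : 0 < s ^ (((n + 1 : ℕ) : ℝ) + α) := by positivity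
        field_simp
      simp only [e]
      rw [integral_smul, smul_smul, norm_smul, Real.norm_of_nonneg (by positivity)]
      have h1 := hC (fun σ => kAssoc (n + 1) α K t x (s • σ))
      have h2 := hK.cancel hα1 t x s ht htT hs
        (((ENNReal.ofReal_lt_ofReal_iff hr0).2 hsr.2).trans_le hrs)
      have hbs : b s = C * τ * s ^ (ν - α) := indicator_of_mem (by exact hsr.2) _
      rw [hbs]
      have e2 : C * τ * s ^ (ν - α) =
          s ^ n * (s * s ^ (-(((n + 1 : ℕ) : ℝ) + α))) * (C * (τ * s ^ ν)) := by
        have : s ^ (ν - α) = s ^ (n : ℝ) * (s ^ (1 : ℝ) * s ^ (-(((n + 1 : ℕ) : ℝ) + α))) * s ^ ν := by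
          rw [← Real.rpow_add hs, ← Real.rpow_add hs, ← Real.rpow_add hs]
          congr 1; push_cast; ring
        rw [this, Real.rpow_natCast, Real.rpow_one]; ring
      rw [e2]
      gcongr
      exact h1.trans (by gcongr)
    · have e : ∀ σ : Metric.sphere (0 : EuclideanSpace ℝ (Fin (n + 1))) 1,
          S.indicator (fun z => K t x (x + z) • z)
            (s • (σ : EuclideanSpace ℝ (Fin (n + 1)))) = 0 := by
        intro σ
        refine indicator_of_notMem ?_ _
        simp only [hS, mem_ofPred_eq, norm_smul, norm_eq_of_mem_sphere σ, mul_one,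
          Real.norm_of_nonneg hs.le]
        exact hsr
      simp only [e, integral_zero, smul_zero, norm_zero]
      exact hb0 s hs

/-! ### Uniform bounds for the truncated operators -/

/-- Bound of the truncated operator at `x`, uniform in the truncation `ε`, from a sup bound, a
gradient bound and a second order Taylor bound of `f` at `x`. -/
theorem truncated_bound_s12 {E : Type*} [NormedAddCommGroup E] [InnerProductSpace ℝ E]
    [FiniteDimensional ℝ E] [MeasurableSpace E] [BorelSpace E] {μ : Measure E}
    [μ.IsAddHaarMeasure]
    {J κ : E → ℝ} (hJ0 : ∀ z, 0 ≤ J z)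
    (hJ : Integrable (fun z => min 1 (‖z‖ ^ 2) * J z) μ)
    (hκm : Measurable κ) (hκ0 : ∀ z, 0 ≤ κ z) (hκJ : ∀ z, z ≠ 0 → κ z ≤ J z)
    {r B : ℝ} (hr0 : 0 < r) (hr1 : r ≤ 1)
    {f : E → ℝ} (hf : Measurable f) {M₀ M₁ M₂ : ℝ} (hM₀ : ∀ y, |f y| ≤ M₀) (hM₂0 : 0 ≤ M₂)
    (x : E) (ℓ : E →L[ℝ] ℝ) (hℓ : ‖ℓ‖ ≤ M₁)
    (hT : ∀ z, ‖z‖ < r → |f (x + z) - f x - ℓ z| ≤ M₂ * ‖z‖ ^ 2)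
    {ε : ℝ} (hε : 0 < ε)
    (hB : ‖∫ z in {z | ε ≤ ‖z‖ ∧ ‖z‖ < r}, κ z • z ∂μ‖ ≤ B) :
    |∫ z in {z | ε ≤ ‖z‖}, (f x - f (x + z)) * κ z ∂μ| ≤
      (2 * M₀ / r ^ 2 + M₂) * (∫ z, min 1 (‖z‖ ^ 2) * J z ∂μ) + M₁ * B := by
  have hM₀0 : 0 ≤ M₀ := (abs_nonneg _).trans (hM₀ x)
  set A : Set E := {z | ε ≤ ‖z‖} with hA
  set S : Set E := {z | ε ≤ ‖z‖ ∧ ‖z‖ < r} with hS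
  have hAm : MeasurableSet A := measurableSet_le measurable_const measurable_norm
  have hSm : MeasurableSet S := hAm.inter (measurableSet_lt measurable_norm measurable_const)
  set c := 2 * M₀ / r ^ 2 + M₂ with hc
  have hc0 : 0 ≤ c := by positivity
  let D : E → ℝ := fun z => κ z * ℓ z
  -- the integrand after the linear part of `f` near `x` has been subtracted
  let R : E → ℝ := fun z => A.indicator (fun z => (f x - f (x + z)) * κ z) z + S.indicator D z
  have hDm : Measurable D := hκm.mul ℓ.continuous.measurable
  have hRm : Measurable R :=
    (((measurable_const.sub (hf.comp (measurable_const_add x))).mul hκm).indicator hAm).add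
      (hDm.indicator hSm)
  have hRb : ∀ z, ‖R z‖ ≤ c * (min 1 (‖z‖ ^ 2) * J z) := by
    intro z
    by_cases hz : z ∈ A
    · have hz0 : z ≠ 0 := norm_pos_iff.1 (hε.trans_le hz)
      have hk := hκJ z hz0
      have hk0 := hκ0 z
      by_cases hzr : ‖z‖ < r
      · have hzS : z ∈ S := ⟨hz, hzr⟩
        have h1 : ‖z‖ ^ 2 ≤ 1 := by nlinarith [norm_nonneg z]
        have e : R z = -((f (x + z) - f x - ℓ z) * κ z) := by
          simp only [R, D, indicator_of_mem hz, indicator_of_mem hzS]; ring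
        rw [e, norm_neg, norm_mul, Real.norm_eq_abs, Real.norm_of_nonneg hk0, min_eq_right h1]
        calc |f (x + z) - f x - ℓ z| * κ z ≤ (M₂ * ‖z‖ ^ 2) * J z := by
              gcongr; exact hT z hzr
          _ ≤ (c * ‖z‖ ^ 2) * J z := by
              have := hJ0 z
              gcongr
              rw [hc]; have : 0 ≤ 2 * M₀ / r ^ 2 := by positivity
              linarith
          _ = _ := by ring
      · have hzS : z ∉ S := fun h => hzr h.2
        have e : R z = (f x - f (x + z)) * κ z := by
          simp only [R, indicator_of_mem hz, indicator_of_notMem hzS]; ring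
        have hrz : r ≤ ‖z‖ := not_lt.1 hzr
        have hmin : r ^ 2 ≤ min 1 (‖z‖ ^ 2) :=
          le_min (by nlinarith) (by gcongr)
        have h2 : 2 * M₀ ≤ c * min 1 (‖z‖ ^ 2) := by
          calc 2 * M₀ = (2 * M₀ / r ^ 2) * r ^ 2 := by field_simp
            _ ≤ c * min 1 (‖z‖ ^ 2) := by
              gcongr
              rw [hc]; linarith
        rw [e, norm_mul, Real.norm_eq_abs, Real.norm_of_nonneg hk0, ← mul_assoc]
        have h3 : |f x - f (x + z)| ≤ 2 * M₀ := by
          have := abs_sub (f x) (f (x + z))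
          linarith [hM₀ x, hM₀ (x + z)]
        have := hJ0 z
        gcongr
        exact h3.trans h2
    · have hzS : z ∉ S := fun h => hz h.1
      have e : R z = 0 := by simp [R, indicator_of_notMem hz, indicator_of_notMem hzS]
      rw [e, norm_zero]
      have := hJ0 z
      positivity
  have hRi : Integrable R μ :=
    Integrable.mono' (hJ.const_mul c) hRm.aestronglyMeasurable (Eventually.of_forall hRb)
  have hm : 0 < min 1 (ε ^ 2) := by positivity
  have hSi : IntegrableOn (fun z => κ z • z) S μ := by
    refine Integrable.mono' ((hJ.const_mul (r * (min 1 (ε ^ 2))⁻¹)).integrableOn)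
      (hκm.smul measurable_id).aestronglyMeasurable ?_
    filter_upwards [ae_restrict_mem hSm] with z hz
    have hz0 : z ≠ 0 := norm_pos_iff.1 (hε.trans_le hz.1)
    rw [norm_smul, Real.norm_of_nonneg (hκ0 z)]
    have h1 : min 1 (ε ^ 2) ≤ min 1 (‖z‖ ^ 2) := by gcongr; exact hz.1
    have := hJ0 z
    have := hκ0 z
    calc κ z * ‖z‖ ≤ J z * r := by gcongr; exacts [hκJ z hz0, hz.2.le]
      _ = r * (min 1 (ε ^ 2))⁻¹ * (min 1 (ε ^ 2) * J z) := by field_simp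
      _ ≤ _ := by gcongr
  have hDi : IntegrableOn D S μ :=
    (ℓ.integrable_comp hSi).congr (Eventually.of_forall fun z => by simp [D])
  have hDint : ∫ z in S, D z ∂μ = ℓ (∫ z in S, κ z • z ∂μ) := by
    rw [← ℓ.integral_comp_comm hSi]
    simp [D]
  have hmain : ∫ z in A, (f x - f (x + z)) * κ z ∂μ = (∫ z, R z ∂μ) - ℓ (∫ z in S, κ z • z ∂μ) := by
    rw [← hDint, ← integral_indicator hSm, ← integral_sub hRi ((integrable_indicator_iff hSm).2 hDi),
      ← integral_indicator hAm]
    congr 1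
    ext z
    simp [R]
  rw [hmain]
  refine (abs_sub _ _).trans ?_
  gcongr
  · rw [← Real.norm_eq_abs, ← integral_const_mul]
    exact norm_integral_le_of_norm_le (hJ.const_mul c) (Eventually.of_forall hRb)
  · rw [← Real.norm_eq_abs]
    refine (ℓ.le_opNorm _).trans ?_
    have := norm_nonneg ℓ
    have : 0 ≤ M₁ := by linarith
    gcongr

/-- Local uniform second order Taylor bounds of a `C²` function. -/
theorem taylor_local {E : Type*} [NormedAddCommGroup E] [NormedSpace ℝ E] [ProperSpace E]
    {f : E → ℝ} (hf : ContDiff ℝ 2 f) (ρ : ℝ) :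
    ∃ M₁ M₂ : ℝ, 0 ≤ M₁ ∧ 0 ≤ M₂ ∧ ∀ x, ‖x‖ ≤ ρ → ‖fderiv ℝ f x‖ ≤ M₁ ∧
      ∀ z, ‖z‖ < 1 → |f (x + z) - f x - fderiv ℝ f x z| ≤ M₂ * ‖z‖ ^ 2 := by
  have h1 : ContDiff ℝ 1 (fderiv ℝ f) := hf.fderiv_right (by norm_num)
  have hc2 : Continuous (fun x => ‖fderiv ℝ (fderiv ℝ f) x‖) :=
    continuous_norm.comp (h1.continuous_fderiv (by norm_num))
  obtain ⟨M₁, hM₁⟩ := (isCompact_closedBall (0 : E) (ρ + 1)).exists_bound_of_continuousOn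
    h1.continuous.continuousOn
  obtain ⟨M₂, hM₂⟩ := (isCompact_closedBall (0 : E) (ρ + 1)).exists_bound_of_continuousOn
    hc2.continuousOn
  refine ⟨max M₁ 0, max M₂ 0, le_max_right _ _, le_max_right _ _, fun x hx => ⟨?_, fun z hz => ?_⟩⟩
  · exact (hM₁ x (by simpa using by linarith)).trans (le_max_left _ _)
  · have hsub : Metric.closedBall x ‖z‖ ⊆ Metric.closedBall 0 (ρ + 1) := by
      refine Metric.closedBall_subset_closedBall' ?_
      rw [dist_zero_right]; linarith
    have hcv : Convex ℝ (Metric.closedBall x ‖z‖) := convex_closedBall _ _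
    have hx' : x ∈ Metric.closedBall x ‖z‖ := Metric.mem_closedBall_self (norm_nonneg _)
    have hxz : x + z ∈ Metric.closedBall x ‖z‖ := by simp
    have hL : ∀ y ∈ Metric.closedBall x ‖z‖, ‖fderiv ℝ f y - fderiv ℝ f x‖ ≤ max M₂ 0 * ‖z‖ := by
      intro y hy
      have := hcv.norm_image_sub_le_of_norm_fderiv_le (𝕜 := ℝ) (f := fderiv ℝ f) (C := max M₂ 0)
        (fun w _ => (h1.differentiable (by norm_num)).differentiableAt)
        (fun w hw => ((le_abs_self _).trans (hM₂ w (hsub hw))).trans (le_max_left _ _)) hx' hy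
      refine this.trans ?_
      gcongr
      simpa [dist_eq_norm] using hy
    have := hcv.norm_image_sub_le_of_norm_hasFDerivWithin_le' (𝕜 := ℝ) (f := f)
      (f' := fderiv ℝ f) (φ := fderiv ℝ f x) (C := max M₂ 0 * ‖z‖)
      (fun y _ => ((hf.differentiable (by norm_num)).differentiableAt).hasFDerivAt.hasFDerivWithinAt)
      hL hx' hxz
    simpa [pow_two, mul_assoc] using this

/-! ### The localized energy estimate -/

/-- The algebraic inequality behind the localized energy estimate. -/
theorem energy_pointwise {c p q a b A B : ℝ} (hc : 0 < c)
    (h : c * (a - b) ^ 2 ≤ (a - b) * (A - B)) :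
    -(1 / (2 * c)) * ((p - q) ^ 2 * (A ^ 2 + B ^ 2)) ≤ (p ^ 2 * A - q ^ 2 * B) * (a - b) := by
  have h1 : (p ^ 2 * A - q ^ 2 * B) * (a - b) =
      (p ^ 2 + q ^ 2) / 2 * ((a - b) * (A - B)) + (p - q) * (p + q) / 2 * (A + B) * (a - b) := by
    ring
  have h2 : (p ^ 2 + q ^ 2) / 2 * (c * (a - b) ^ 2) ≤ (p ^ 2 + q ^ 2) / 2 * ((a - b) * (A - B)) := by
    gcongr
  have h3 : (p + q) ^ 2 / 4 * (c * (a - b) ^ 2) ≤ (p ^ 2 + q ^ 2) / 2 * (c * (a - b) ^ 2) := by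
    gcongr ?_ * _
    nlinarith [sq_nonneg (p - q)]
  have h4 : (p + q) ^ 2 / 4 * (c * (a - b) ^ 2) + (p - q) * (p + q) / 2 * (A + B) * (a - b)
      = (c * ((p + q) * (a - b)) + (p - q) * (A + B)) ^ 2 / (4 * c)
        - (p - q) ^ 2 * (A + B) ^ 2 / (4 * c) := by
    field_simp; ring
  have h5 : (p - q) ^ 2 * (A + B) ^ 2 / (4 * c) ≤ (1 / (2 * c)) * ((p - q) ^ 2 * (A ^ 2 + B ^ 2)) := by
    have : (1 / (2 * c)) * ((p - q) ^ 2 * (A ^ 2 + B ^ 2))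
        = (p - q) ^ 2 * (2 * (A ^ 2 + B ^ 2)) / (4 * c) := by field_simp; ring
    rw [this]
    gcongr
    nlinarith [sq_nonneg (A - B)]
  have h6 : 0 ≤ (c * ((p + q) * (a - b)) + (p - q) * (A + B)) ^ 2 / (4 * c) := by positivity
  linarith

/-- Localized energy estimate for the truncated operator. Symmetrizing the double integral turns
`∫ ψ² β(f) T_ε f` into a quadratic form which is nonnegative up to the commutator with the
cutoff `ψ`; the commutator is controlled by `V = ∫ φ J`. -/
theorem energy_trunc {E : Type*} [NormedAddCommGroup E] [InnerProductSpace ℝ E]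
    [FiniteDimensional ℝ E] [MeasurableSpace E] [BorelSpace E] {μ : Measure E}
    [μ.IsAddHaarMeasure]
    {k : E → E → ℝ} (hkm : Measurable (fun p : E × E => k p.1 p.2)) (hk0 : ∀ x y, 0 ≤ k x y)
    (hks : ∀ x y, k x y = k y x)
    {J : E → ℝ} (hJ0 : ∀ z, 0 ≤ J z) (hkJ : ∀ x y, x ≠ y → k x y ≤ J (x - y))
    {ε : ℝ} (hε : 0 < ε) (hJε : IntegrableOn J {z | ε ≤ ‖z‖} μ)
    {f : E → ℝ} (hfm : Measurable f) (hfi : Integrable f μ) {C : ℝ} (hfC : ∀ x, |f x| ≤ C)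
    {β : ℝ → ℝ} (hβm : Measurable β) {c Lb : ℝ} (hc : 0 < c) (hLb : 0 ≤ Lb)
    (hmono : ∀ a b, |a| ≤ C → |b| ≤ C → c * (a - b) ^ 2 ≤ (a - b) * (β a - β b))
    (hβL : ∀ a, |a| ≤ C → |β a| ≤ Lb * |a|)
    {ψ : E → ℝ} (hψm : Measurable ψ) (hψ0 : ∀ x, 0 ≤ ψ x) (hψ1 : ∀ x, ψ x ≤ 1)
    {φ : E → ℝ} (hφ0 : ∀ z, 0 ≤ φ z)
    (hψφ : ∀ x y, (ψ x - ψ y) ^ 2 ≤ φ (x - y)) (hφJ : Integrable (fun z => φ z * J z) μ) :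
    -(1 / (2 * c)) * ((∫ z, φ z * J z ∂μ) * (∫ x, β (f x) ^ 2 ∂μ)) ≤
      ∫ x, ψ x ^ 2 * β (f x) * (∫ y in {y | ε ≤ ‖x - y‖}, (f x - f y) * k x y ∂μ) ∂μ := by
  have hAm : MeasurableSet {z : E | ε ≤ ‖z‖} := measurableSet_le measurable_const measurable_norm
  set A : Set (E × E) := {p | ε ≤ ‖p.1 - p.2‖} with hA
  have hA2 : MeasurableSet A :=
    measurableSet_le measurable_const (measurable_fst.sub measurable_snd).norm
  set ke : E × E → ℝ := A.indicator (fun p => k p.1 p.2) with hke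
  have hkem : Measurable ke := hkm.indicator hA2
  set Je : E → ℝ := {z : E | ε ≤ ‖z‖}.indicator J with hJe
  have hJei : Integrable Je μ := hJε.integrable_indicator hAm
  have hke0 : ∀ p, 0 ≤ ke p := fun p => indicator_nonneg (fun p _ => hk0 _ _) p
  have hkeJe : ∀ p, ke p ≤ Je (p.1 - p.2) := by
    intro p
    by_cases hp : p ∈ A
    · have hp' : p.1 - p.2 ∈ {z : E | ε ≤ ‖z‖} := hp
      rw [hke, hJe, indicator_of_mem hp, indicator_of_mem hp']
      refine hkJ _ _ ?_
      rw [← sub_ne_zero]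
      exact norm_pos_iff.1 (hε.trans_le hp)
    · rw [hke, indicator_of_notMem hp]
      exact indicator_nonneg (fun p _ => hJ0 _) _
  have hkeJ : ∀ p, φ (p.1 - p.2) * ke p ≤ φ (p.1 - p.2) * J (p.1 - p.2) := by
    intro p
    refine mul_le_mul_of_nonneg_left ((hkeJe p).trans ?_) (hφ0 _)
    exact indicator_le_self' (fun _ _ => hJ0 _) _
  have hkes : ∀ p, ke p.swap = ke p := by
    intro p
    have : p.swap ∈ A ↔ p ∈ A := by simp [hA, norm_sub_rev]
    by_cases hp : p ∈ A
    · rw [hke, indicator_of_mem hp, indicator_of_mem (this.2 hp)]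
      exact hks _ _
    · rw [hke, indicator_of_notMem hp, indicator_of_notMem (fun h => hp (this.1 h))]
  have hC0 : 0 ≤ C := (abs_nonneg _).trans (hfC 0)
  have hg1 : ∀ x, |ψ x ^ 2 * β (f x)| ≤ Lb * |f x| := by
    intro x
    rw [abs_mul, abs_of_nonneg (sq_nonneg (ψ x))]
    calc ψ x ^ 2 * |β (f x)| ≤ 1 * |β (f x)| := by
          gcongr; exact pow_le_one₀ (hψ0 x) (hψ1 x)
      _ ≤ _ := by rw [one_mul]; exact hβL _ (hfC x)
  have hβf2 : ∀ x, β (f x) ^ 2 ≤ Lb ^ 2 * C * |f x| := by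
    intro x
    have h := hβL _ (hfC x)
    rw [← sq_abs (β (f x))]
    calc |β (f x)| ^ 2 ≤ (Lb * |f x|) ^ 2 := by gcongr
      _ = Lb ^ 2 * |f x| * |f x| := by ring
      _ ≤ Lb ^ 2 * C * |f x| := by gcongr; exact hfC x
  have hβi : Integrable (fun x => β (f x) ^ 2) μ := by
    refine Integrable.mono' (hfi.norm.const_mul (Lb ^ 2 * C))
      ((hβm.comp hfm).pow_const 2).aestronglyMeasurable (Eventually.of_forall fun x => ?_)
    rw [Real.norm_of_nonneg (sq_nonneg _)]
    exact hβf2 x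
  -- the integrand of a convolution: integrability on the product of `u(p₂) v(p₁ - p₂)`
  have hconv : ∀ u v : E → ℝ, Integrable u μ → Integrable v μ →
      Integrable (fun p : E × E => u p.2 * v (p.1 - p.2)) (μ.prod μ) := by
    intro u v hu hv
    exact hu.convolution_integrand (ContinuousLinearMap.mul ℝ ℝ) hv
  set G : E × E → ℝ := fun p => ψ p.1 ^ 2 * β (f p.1) * ((f p.1 - f p.2) * ke p) with hG
  have hf1 : Measurable (fun p : E × E => f p.1) := hfm.comp measurable_fst
  have hf2 : Measurable (fun p : E × E => f p.2) := hfm.comp measurable_snd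
  have hGm : Measurable G :=
    ((((hψm.comp measurable_fst).pow_const 2).mul (hβm.comp hf1))).mul
      ((hf1.sub hf2).mul hkem)
  have hJen : Integrable (fun z => Je (-z)) μ := hJei.comp_neg
  have hGi : Integrable G (μ.prod μ) := by
    have h1 := ((hconv (fun x => |f x|) (fun z => Je (-z)) hfi.norm hJen).swap).const_mul
      (Lb * (2 * C))
    refine Integrable.mono' h1 hGm.aestronglyMeasurable (Eventually.of_forall fun p => ?_)
    have e : -(p.2 - p.1) = p.1 - p.2 := by abel
    simp only [Function.comp_apply, Prod.fst_swap, Prod.snd_swap, e]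
    rw [hG]
    simp only [norm_mul, Real.norm_of_nonneg (hke0 p)]
    rw [← norm_mul]
    have h2 : ‖f p.1 - f p.2‖ ≤ 2 * C := by
      have := abs_sub (f p.1) (f p.2)
      rw [Real.norm_eq_abs]
      linarith [hfC p.1, hfC p.2]
    have := hke0 p
    calc ‖ψ p.1 ^ 2 * β (f p.1)‖ * (‖f p.1 - f p.2‖ * ke p)
        ≤ (Lb * |f p.1|) * (2 * C * Je (p.1 - p.2)) := by
          gcongr
          exacts [hg1 _, hkeJe p]
      _ = _ := by ring
  have hI : ∫ x, ψ x ^ 2 * β (f x) * (∫ y in {y | ε ≤ ‖x - y‖}, (f x - f y) * k x y ∂μ) ∂μ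
      = ∫ p, G p ∂(μ.prod μ) := by
    rw [integral_prod _ hGi]
    refine integral_congr_ae (Eventually.of_forall fun x => ?_)
    have hAx : MeasurableSet {y : E | ε ≤ ‖x - y‖} :=
      measurableSet_le measurable_const (measurable_const.sub measurable_id).norm
    simp only [hG]
    rw [integral_const_mul, ← integral_indicator hAx]
    congr 2
    ext y
    by_cases hy : ε ≤ ‖x - y‖
    · have h1 : (x, y) ∈ A := hy
      have h2 : y ∈ {y : E | ε ≤ ‖x - y‖} := hy
      rw [indicator_of_mem h2, hke, indicator_of_mem h1]
    · have h1 : (x, y) ∉ A := hy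
      have h2 : y ∉ {y : E | ε ≤ ‖x - y‖} := hy
      rw [indicator_of_notMem h2, hke, indicator_of_notMem h1, mul_zero]
  have hIs : ∫ p, G p.swap ∂(μ.prod μ) = ∫ p, G p ∂(μ.prod μ) := integral_prod_swap G
  have hφJn : Integrable (fun z => φ (-z) * J (-z)) μ := hφJ.comp_neg
  set H : E × E → ℝ := fun p => β (f p.2) ^ 2 * (φ (p.1 - p.2) * J (p.1 - p.2)) with hH
  set H' : E × E → ℝ := fun p => β (f p.1) ^ 2 * (φ (p.1 - p.2) * J (p.1 - p.2)) with hH'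
  have hHi : Integrable H (μ.prod μ) := hconv _ _ hβi hφJ
  have hHi' : Integrable H' (μ.prod μ) := by
    have := (hconv _ _ hβi hφJn).swap
    refine this.congr (Eventually.of_forall fun p => ?_)
    have e : -(p.2 - p.1) = p.1 - p.2 := by abel
    simp only [Function.comp_apply, Prod.fst_swap, Prod.snd_swap, e, hH']
  have hHint : ∫ p, H p ∂(μ.prod μ) = (∫ z, φ z * J z ∂μ) * (∫ x, β (f x) ^ 2 ∂μ) := by
    rw [integral_prod_symm _ hHi]
    simp only [hH, integral_const_mul]
    rw [mul_comm, ← integral_mul_const]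
    congr 1
    ext y
    congr 1
    exact integral_sub_right_eq_self (fun z => φ z * J z) y
  have hHint' : ∫ p, H' p ∂(μ.prod μ) = (∫ z, φ z * J z ∂μ) * (∫ x, β (f x) ^ 2 ∂μ) := by
    rw [integral_prod _ hHi']
    simp only [hH', integral_const_mul]
    rw [mul_comm, ← integral_mul_const]
    congr 1
    ext y
    congr 1
    exact integral_sub_left_eq_self (fun z => φ z * J z) μ y
  have hle : ∀ p, -(1 / (2 * c)) * (H p + H' p) ≤ G p + G p.swap := by
    intro p
    have h1 := energy_pointwise (p := ψ p.1) (q := ψ p.2) hc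
      (hmono (f p.1) (f p.2) (hfC _) (hfC _))
    have h2 := mul_le_mul_of_nonneg_right h1 (hke0 p)
    have e : G p + G p.swap = (ψ p.1 ^ 2 * β (f p.1) - ψ p.2 ^ 2 * β (f p.2)) * (f p.1 - f p.2)
        * ke p := by
      simp only [hG, hkes, Prod.fst_swap, Prod.snd_swap]; ring
    rw [e]
    refine le_trans ?_ h2
    have h3 : (ψ p.1 - ψ p.2) ^ 2 * ke p ≤ φ (p.1 - p.2) * J (p.1 - p.2) :=
      (mul_le_mul_of_nonneg_right (hψφ _ _) (hke0 p)).trans (hkeJ p)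
    have h4 : 0 ≤ 1 / (2 * c) := by positivity
    have h5 : (ψ p.1 - ψ p.2) ^ 2 * (β (f p.1) ^ 2 + β (f p.2) ^ 2) * ke p ≤ H p + H' p := by
      calc _ = (β (f p.1) ^ 2 + β (f p.2) ^ 2) * ((ψ p.1 - ψ p.2) ^ 2 * ke p) := by ring
        _ ≤ (β (f p.1) ^ 2 + β (f p.2) ^ 2) * (φ (p.1 - p.2) * J (p.1 - p.2)) := by gcongr
        _ = _ := by simp only [hH, hH']; ring
    nlinarith [mul_le_mul_of_nonneg_left h5 h4]
  have hfin := integral_mono ((hHi.add hHi').const_mul (-(1 / (2 * c)))) (hGi.add hGi.swap) hle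
  have e1 : ∫ p, (G + G ∘ Prod.swap) p ∂(μ.prod μ) = 2 * ∫ p, G p ∂(μ.prod μ) := by
    rw [integral_add' hGi hGi.swap]
    have : ∫ p, (G ∘ Prod.swap) p ∂(μ.prod μ) = ∫ p, G p ∂(μ.prod μ) := hIs
    rw [this]; ring
  have e2 : ∫ p, -(1 / (2 * c)) * (H + H') p ∂(μ.prod μ)
      = 2 * (-(1 / (2 * c)) * ((∫ z, φ z * J z ∂μ) * (∫ x, β (f x) ^ 2 ∂μ))) := by
    rw [integral_const_mul, integral_add' hHi hHi', hHint, hHint']; ring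
  rw [hI]
  have : ∫ p, -(1 / (2 * c)) * (H + H') p ∂(μ.prod μ) ≤ ∫ p, (G + G ∘ Prod.swap) p ∂(μ.prod μ) := hfin
  rw [e1, e2] at this
  linarith

theorem truncated_translate {E : Type*} [NormedAddCommGroup E] [InnerProductSpace ℝ E]
    [FiniteDimensional ℝ E] [MeasurableSpace E] [BorelSpace E] {μ : Measure E}
    [μ.IsAddHaarMeasure] (k : E → E → ℝ) (f : E → ℝ) (x : E) (ε : ℝ) :
    ∫ y in {y | ε ≤ ‖x - y‖}, (f x - f y) * k x y ∂μ
      = ∫ z in {z | ε ≤ ‖z‖}, (f x - f (x + z)) * k x (x + z) ∂μ := by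
  have h1 : MeasurableSet {y : E | ε ≤ ‖x - y‖} :=
    measurableSet_le measurable_const (measurable_const.sub measurable_id).norm
  have h2 : MeasurableSet {z : E | ε ≤ ‖z‖} := measurableSet_le measurable_const measurable_norm
  rw [← integral_indicator h1, ← integral_indicator h2, ← integral_add_left_eq_self _ x]
  congr 1
  ext z
  simp only [indicator, mem_ofPred_eq, sub_add_cancel_left, norm_neg]

/-- Localized energy estimate for the principal value operator, for a `C²` function `f`: the
truncations converge pointwise and are bounded on the support of the cutoff, uniformly in `ε`. -/
theorem energy_limit {E : Type*} [NormedAddCommGroup E] [InnerProductSpace ℝ E]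
    [FiniteDimensional ℝ E] [MeasurableSpace E] [BorelSpace E] {μ : Measure E}
    [μ.IsAddHaarMeasure]
    {k : E → E → ℝ} (hkm : Measurable (fun p : E × E => k p.1 p.2)) (hk0 : ∀ x y, 0 ≤ k x y)
    (hks : ∀ x y, k x y = k y x)
    {J : E → ℝ} (hJ0 : ∀ z, 0 ≤ J z) (hkJ : ∀ x y, x ≠ y → k x y ≤ J (x - y))
    (hkJ' : ∀ x z, z ≠ 0 → k x (x + z) ≤ J z)
    (hJε : ∀ ε, 0 < ε → IntegrableOn J {z | ε ≤ ‖z‖} μ)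
    (hJi : Integrable (fun z => min 1 (‖z‖ ^ 2) * J z) μ)
    {r B : ℝ} (hr0 : 0 < r) (hr1 : r ≤ 1)
    (hB : ∀ x ε, 0 < ε → ‖∫ z in {z | ε ≤ ‖z‖ ∧ ‖z‖ < r}, k x (x + z) • z ∂μ‖ ≤ B)
    {f : E → ℝ} (hf : ContDiff ℝ 2 f) (hfi : Integrable f μ) {C : ℝ} (hfC : ∀ x, |f x| ≤ C)
    {β : ℝ → ℝ} (hβm : Measurable β) {c Lb : ℝ} (hc : 0 < c) (hLb : 0 ≤ Lb)
    (hmono : ∀ a b, |a| ≤ C → |b| ≤ C → c * (a - b) ^ 2 ≤ (a - b) * (β a - β b))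
    (hβL : ∀ a, |a| ≤ C → |β a| ≤ Lb * |a|)
    {ψ : E → ℝ} (hψm : Measurable ψ) (hψ0 : ∀ x, 0 ≤ ψ x) (hψ1 : ∀ x, ψ x ≤ 1)
    {ρ : ℝ} (hψs : ∀ x, ρ < ‖x‖ → ψ x = 0)
    {φ : E → ℝ} (hφ0 : ∀ z, 0 ≤ φ z)
    (hψφ : ∀ x y, (ψ x - ψ y) ^ 2 ≤ φ (x - y)) (hφJ : Integrable (fun z => φ z * J z) μ)
    {L : E → ℝ} (hL : ∀ x, Tendsto (fun ε => ∫ y in {y | ε ≤ ‖x - y‖}, (f x - f y) * k x y ∂μ)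
      (nhdsWithin 0 (Ioi 0)) (nhds (L x))) :
    -(1 / (2 * c)) * ((∫ z, φ z * J z ∂μ) * (∫ x, β (f x) ^ 2 ∂μ)) ≤
      ∫ x, ψ x ^ 2 * β (f x) * L x ∂μ := by
  have hfm : Measurable f := hf.continuous.measurable
  have hC0 : 0 ≤ C := (abs_nonneg _).trans (hfC 0)
  obtain ⟨M₁, M₂, hM₁, hM₂, hTay⟩ := taylor_local hf ρ
  set M := (2 * C / r ^ 2 + M₂) * (∫ z, min 1 (‖z‖ ^ 2) * J z ∂μ) + M₁ * B with hM
  have hbound : ∀ x, ‖x‖ ≤ ρ → ∀ ε, 0 < ε →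
      |∫ y in {y | ε ≤ ‖x - y‖}, (f x - f y) * k x y ∂μ| ≤ M := by
    intro x hx ε hε
    rw [truncated_translate]
    exact truncated_bound_s12 (κ := fun z => k x (x + z)) hJ0 hJi
      (hkm.comp (measurable_const.prodMk (measurable_const_add x))) (fun z => hk0 _ _)
      (hkJ' x) hr0 hr1 hfm hfC hM₂ x (fderiv ℝ f x) (hTay x hx).1
      (fun z hz => (hTay x hx).2 z (hz.trans_le hr1)) hε (hB x ε hε)
  have htend : Tendsto (fun ε => ∫ x, ψ x ^ 2 * β (f x) *
      (∫ y in {y | ε ≤ ‖x - y‖}, (f x - f y) * k x y ∂μ) ∂μ) (nhdsWithin 0 (Ioi 0))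
      (nhds (∫ x, ψ x ^ 2 * β (f x) * L x ∂μ)) := by
    refine tendsto_integral_filter_of_dominated_convergence
      ((Metric.closedBall (0 : E) ρ).indicator fun _ => Lb * C * M) ?_ ?_ ?_ ?_
    · refine Eventually.of_forall fun ε => ?_
      refine (((hψm.pow_const 2).mul (hβm.comp hfm)).stronglyMeasurable.mul ?_).aestronglyMeasurable
      have hA2 : MeasurableSet {p : E × E | ε ≤ ‖p.1 - p.2‖} :=
        measurableSet_le measurable_const (measurable_fst.sub measurable_snd).norm
      have hm : Measurable ({p : E × E | ε ≤ ‖p.1 - p.2‖}.indicator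
          fun p => (f p.1 - f p.2) * k p.1 p.2) :=
        (((hfm.comp measurable_fst).sub (hfm.comp measurable_snd)).mul hkm).indicator hA2
      have := hm.stronglyMeasurable.integral_prod_right' (ν := μ)
      convert this using 2 with x
      have hAx : MeasurableSet {y : E | ε ≤ ‖x - y‖} :=
        measurableSet_le measurable_const (measurable_const.sub measurable_id).norm
      rw [← integral_indicator hAx]
      congr 1
    · filter_upwards [self_mem_nhdsWithin] with ε hε
      refine Eventually.of_forall fun x => ?_
      by_cases hx : ‖x‖ ≤ ρ
      · have hx' : x ∈ Metric.closedBall (0 : E) ρ := by simpa using hx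
        rw [indicator_of_mem hx', norm_mul, norm_mul, Real.norm_of_nonneg (sq_nonneg _)]
        have h1 : ψ x ^ 2 ≤ 1 := pow_le_one₀ (hψ0 x) (hψ1 x)
        have h2 : ‖β (f x)‖ ≤ Lb * C := (hβL _ (hfC x)).trans (by gcongr; exact hfC x)
        have h3 := hbound x hx ε hε
        calc _ ≤ 1 * (Lb * C) * M := by
              gcongr
              exact h3
          _ = _ := by ring
      · have hx' : x ∉ Metric.closedBall (0 : E) ρ := by simpa using hx
        rw [indicator_of_notMem hx', hψs x (not_le.1 hx)]
        simp
    · refine (integrable_indicator_iff measurableSet_closedBall).2 (integrableOn_const ?_)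
      exact (isCompact_closedBall _ _).measure_lt_top.ne
    · exact Eventually.of_forall fun x => (hL x).const_mul _
  refine ge_of_tendsto htend ?_
  filter_upwards [self_mem_nhdsWithin] with ε hε
  exact energy_trunc hkm hk0 hks hJ0 hkJ hε (hJε ε hε) hfm hfi hfC hβm hc hLb hmono hβL hψm hψ0 hψ1
    hφ0 hψφ hφJ

/-! ### Time evolution and cutoffs -/

/-- Growth of a localized entropy `∫ χ η(w)` over a time step, from a bound on its formal time
derivative at interior times. -/
theorem time_step {E : Type*} [NormedAddCommGroup E] [InnerProductSpace ℝ E]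
    [FiniteDimensional ℝ E] [MeasurableSpace E] [BorelSpace E] {μ : Measure E}
    [μ.IsAddHaarMeasure] {w D : ℝ → E → ℝ} {s t : ℝ} (hst : s < t)
    (hcont : ContinuousOn (fun p : ℝ × E => w p.1 p.2) (Icc s t ×ˢ univ))
    (hdiff : ContDiffOn ℝ 1 (fun p : ℝ × E => w p.1 p.2) (Ioo s t ×ˢ univ))
    (hD : ∀ τ ∈ Ioo s t, ∀ x, HasDerivAt (fun τ => w τ x) (D τ x) τ)
    {η β : ℝ → ℝ} (hη : ∀ u, HasDerivAt η (β u) u) (hβ : Continuous β)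
    {C : ℝ} (hC : ∀ τ ∈ Icc s t, ∀ x, |w τ x| ≤ C)
    {χ : E → ℝ} (hχ : Continuous χ) {ρ : ℝ} (hχs : ∀ x, ρ < ‖x‖ → χ x = 0)
    {e : ℝ} (he : ∀ τ ∈ Ioo s t, ∫ x, χ x * β (w τ x) * D τ x ∂μ ≤ e) :
    ∫ x, χ x * η (w t x) ∂μ ≤ ∫ x, χ x * η (w s x) ∂μ + e * (t - s) := by
  have hηc : Continuous η := continuous_iff_continuousAt.2 fun u => (hη u).continuousAt
  have hopen : IsOpen (Ioo s t ×ˢ (univ : Set E)) := isOpen_Ioo.prod isOpen_univ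
  have hcs : ∀ g : E → ℝ, HasCompactSupport (fun x => χ x * g x) := fun g =>
    HasCompactSupport.intro (isCompact_closedBall (0 : E) ρ) fun x hx => by
      rw [hχs x (by simpa using hx), zero_mul]
  have hwx : ∀ τ ∈ Icc s t, Continuous (w τ) := fun τ hτ => by
    have h : Continuous fun x : E => ((τ, x) : ℝ × E) := by fun_prop
    exact (hcont.comp_continuous h fun x => ⟨hτ, mem_univ _⟩ :)
  have hDcont : ContinuousOn (fun p : ℝ × E => D p.1 p.2) (Ioo s t ×ˢ univ) := by
    have h1 : ContinuousOn (fun p : ℝ × E => fderiv ℝ (fun p : ℝ × E => w p.1 p.2) p (1, 0))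
        (Ioo s t ×ˢ univ) :=
      (hdiff.continuousOn_fderiv_of_isOpen hopen le_rfl).clm_apply continuousOn_const
    refine h1.congr fun p hp => ?_
    have hp' := ((hdiff.differentiableOn one_ne_zero).differentiableAt
      (hopen.mem_nhds hp)).hasFDerivAt
    have h2 : HasDerivAt (fun τ : ℝ => ((τ, p.2) : ℝ × E)) (1, 0) p.1 :=
      (hasDerivAt_id p.1).prodMk (hasDerivAt_const p.1 p.2)
    have h3 := hp'.comp_hasDerivAt p.1 h2
    exact (hD p.1 hp.1 p.2).unique h3
  -- uniform bounds of `η` and `β` on the range of `w`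
  obtain ⟨Mη, hMη⟩ := (isCompact_Icc (a := -C) (b := C)).exists_bound_of_continuousOn
    hηc.continuousOn
  obtain ⟨Mβ, hMβ⟩ := (isCompact_Icc (a := -C) (b := C)).exists_bound_of_continuousOn
    hβ.continuousOn
  set F : ℝ → ℝ := fun τ => ∫ x, χ x * η (w τ x) ∂μ with hF
  have hχi : ∀ M : ℝ, Integrable (fun x => ‖χ x‖ * M) μ := fun M =>
    ((hχ.integrable_of_hasCompactSupport (μ := μ) (by simpa using hcs fun _ => 1)).norm).mul_const M
  have hFc : ContinuousOn F (Icc s t) := by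
    refine continuousOn_of_dominated (bound := fun x => ‖χ x‖ * Mη) ?_ ?_ (hχi _) ?_
    · exact fun τ hτ => (hχ.mul (hηc.comp (hwx τ hτ))).aestronglyMeasurable
    · intro τ hτ
      refine Eventually.of_forall fun x => ?_
      rw [norm_mul]
      gcongr
      exact hMη _ (abs_le.1 (hC τ hτ x))
    · refine Eventually.of_forall fun x => ?_
      refine continuousOn_const.mul (hηc.comp_continuousOn ?_)
      have h : ContinuousOn (fun τ : ℝ => ((τ, x) : ℝ × E)) (Icc s t) := by fun_prop
      exact hcont.comp h fun τ hτ => ⟨hτ, mem_univ _⟩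
  have hFd : ∀ τ ∈ Ioo s t, HasDerivAt F (∫ x, χ x * β (w τ x) * D τ x ∂μ) τ := by
    intro τ hτ
    obtain ⟨δ, hδ, hδs⟩ := Metric.nhds_basis_closedBall.mem_iff.1 (isOpen_Ioo.mem_nhds hτ)
    have hcomp : IsCompact (Metric.closedBall τ δ ×ˢ Metric.closedBall (0 : E) ρ) :=
      (isCompact_closedBall _ _).prod (isCompact_closedBall _ _)
    obtain ⟨MD, hMD⟩ := hcomp.exists_bound_of_continuousOn
      (hDcont.mono (prod_mono hδs (subset_univ _)))
    refine (hasDerivAt_integral_of_dominated_loc_of_deriv_le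
      (F := fun τ x => χ x * η (w τ x)) (F' := fun τ x => χ x * β (w τ x) * D τ x)
      (bound := fun x => ‖χ x‖ * (Mβ * MD))
      (Metric.closedBall_mem_nhds τ hδ) ?_ ?_ ?_ ?_ (hχi _) ?_).2
    · filter_upwards [isOpen_Ioo.mem_nhds hτ] with τ' hτ'
      exact (hχ.mul (hηc.comp (hwx τ' (Ioo_subset_Icc_self hτ')))).aestronglyMeasurable
    · exact (hχ.mul (hηc.comp (hwx τ (Ioo_subset_Icc_self hτ)))).integrable_of_hasCompactSupport
        (hcs _)
    · have h : Continuous fun x : E => ((τ, x) : ℝ × E) := by fun_prop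
      have h' : Continuous (D τ) := hDcont.comp_continuous h fun x => ⟨hτ, mem_univ _⟩
      exact ((hχ.mul (hβ.comp (hwx τ (Ioo_subset_Icc_self hτ)))).mul h').aestronglyMeasurable
    · refine Eventually.of_forall fun x τ' hτ' => ?_
      by_cases hx : ‖x‖ ≤ ρ
      · have h1 := hMD (τ', x) ⟨hτ', by simpa using hx⟩
        have h2 := hMβ _ (abs_le.1 (hC τ' (Ioo_subset_Icc_self (hδs hτ')) x))
        have h3 : 0 ≤ Mβ := (norm_nonneg _).trans h2
        rw [norm_mul, norm_mul, mul_assoc]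
        gcongr
      · rw [hχs x (not_le.1 hx)]; simp
    · refine Eventually.of_forall fun x τ' hτ' => ?_
      have := ((hη (w τ' x)).comp τ' (hD τ' (hδs hτ') x)).const_mul (χ x)
      simpa [mul_assoc, Function.comp_def] using this
  have := (convex_Icc s t).image_sub_le_mul_sub_of_deriv_le hFc
    (fun τ hτ => (hFd τ (by simpa using hτ)).differentiableAt.differentiableWithinAt)
    (C := e) (fun τ hτ => by
      rw [interior_Icc] at hτ
      rw [(hFd τ hτ).deriv]; exact he τ hτ)
    s (left_mem_Icc.2 hst.le) t (right_mem_Icc.2 hst.le) hst.le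
  simp only [hF] at this
  linarith

/-- Radial cutoff, equal to `1` on the ball of radius `R` and to `0` off the ball of
radius `2 R`. -/
def cutoff {E : Type*} [NormedAddCommGroup E] (R : ℝ) (x : E) : ℝ := max 0 (min 1 (2 - ‖x‖ / R))

theorem cutoff_continuous {E : Type*} [NormedAddCommGroup E] (R : ℝ) :
    Continuous (cutoff R : E → ℝ) := by
  unfold cutoff; fun_prop

theorem cutoff_nonneg {E : Type*} [NormedAddCommGroup E] (R : ℝ) (x : E) : 0 ≤ cutoff R x :=
  le_max_left _ _

theorem cutoff_le_one {E : Type*} [NormedAddCommGroup E] (R : ℝ) (x : E) : cutoff R x ≤ 1 :=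
  max_le zero_le_one (min_le_left _ _)

theorem cutoff_eq_zero {E : Type*} [NormedAddCommGroup E] {R : ℝ} (hR : 0 < R) {x : E}
    (hx : 2 * R < ‖x‖) : cutoff R x = 0 := by
  have : 2 < ‖x‖ / R := by rwa [lt_div_iff₀ hR]
  exact max_eq_left ((min_le_right _ _).trans (by linarith))

theorem cutoff_eq_one {E : Type*} [NormedAddCommGroup E] {R : ℝ} (hR : 0 < R) {x : E}
    (hx : ‖x‖ ≤ R) : cutoff R x = 1 := by
  have : ‖x‖ / R ≤ 1 := by rwa [div_le_one hR]
  rw [cutoff, min_eq_left (by linarith), max_eq_right zero_le_one]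

theorem cutoff_sub_sq {E : Type*} [NormedAddCommGroup E] {R : ℝ} (hR : 0 < R) (x y : E) :
    (cutoff R x - cutoff R y) ^ 2 ≤ min 1 (‖x - y‖ ^ 2 / R ^ 2) := by
  rw [← sq_abs]
  refine le_min ?_ ?_
  · refine pow_le_one₀ (abs_nonneg _) (abs_le.2 ⟨?_, ?_⟩) <;>
      linarith [cutoff_nonneg R x, cutoff_nonneg R y, cutoff_le_one R x, cutoff_le_one R y]
  · rw [← div_pow]
    gcongr
    have h1 : |cutoff R x - cutoff R y| ≤ |(2 - ‖x‖ / R) - (2 - ‖y‖ / R)| := by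
      unfold cutoff
      refine (abs_max_sub_max_le_max _ _ _ _).trans ?_
      refine max_le (by simp) ((abs_min_sub_min_le_max _ _ _ _).trans ?_)
      simp
    refine h1.trans ?_
    have : (2 - ‖x‖ / R) - (2 - ‖y‖ / R) = (‖y‖ - ‖x‖) / R := by ring
    rw [this, abs_div, abs_of_pos hR]
    gcongr
    rw [norm_sub_rev]
    exact abs_norm_sub_norm_le _ _

/-- The commutator with the cutoff is negligible as the cutoff radius tends to infinity. -/
theorem tendsto_commutator {E : Type*} [NormedAddCommGroup E] [InnerProductSpace ℝ E]
    [FiniteDimensional ℝ E] [MeasurableSpace E] [BorelSpace E] {μ : Measure E}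
    {J : E → ℝ} (hJm : Measurable J) (hJ0 : ∀ z, 0 ≤ J z)
    (hJi : Integrable (fun z => min 1 (‖z‖ ^ 2) * J z) μ) :
    (∀ R : ℝ, 1 ≤ R → Integrable (fun z => min 1 (‖z‖ ^ 2 / R ^ 2) * J z) μ) ∧
    Tendsto (fun R : ℝ => ∫ z, min 1 (‖z‖ ^ 2 / R ^ 2) * J z ∂μ) atTop (nhds 0) := by
  have hm : ∀ R : ℝ, AEStronglyMeasurable (fun z => min 1 (‖z‖ ^ 2 / R ^ 2) * J z) μ := fun R => by
    have : Measurable fun z : E => min 1 (‖z‖ ^ 2 / R ^ 2) := by fun_prop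
    exact (this.mul hJm).aestronglyMeasurable
  have hb : ∀ R : ℝ, 1 ≤ R → ∀ z, ‖min 1 (‖z‖ ^ 2 / R ^ 2) * J z‖ ≤ min 1 (‖z‖ ^ 2) * J z := by
    intro R hR z
    have h0 := hJ0 z
    rw [Real.norm_of_nonneg (by positivity)]
    gcongr
    exact div_le_self (by positivity) (one_le_pow₀ hR)
  refine ⟨fun R hR => hJi.mono' (hm R) (Eventually.of_forall (hb R hR)), ?_⟩
  have : (0 : ℝ) = ∫ z : E, (0 : ℝ) ∂μ := by simp
  rw [this]
  refine tendsto_integral_filter_of_dominated_convergence _ (Eventually.of_forall hm) ?_ hJi ?_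
  · filter_upwards [eventually_ge_atTop (1 : ℝ)] with R hR
    exact Eventually.of_forall (hb R hR)
  · refine Eventually.of_forall fun z => ?_
    have h1 : Tendsto (fun R : ℝ => ‖z‖ ^ 2 / R ^ 2) atTop (nhds 0) :=
      tendsto_const_nhds.div_atTop (tendsto_pow_atTop two_ne_zero)
    have h2 := ((tendsto_const_nhds (x := (1 : ℝ))).min h1).mul_const (J z)
    simpa using h2

/-! ### Decay of entropies -/

theorem solution_slice {N : ℕ} {T : ℝ≥0∞} {w : ℝ → EuclideanSpace ℝ (Fin N) → ℝ}
    (hsmooth : SmoothOnDomain N T w) {C : ℝ}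
    (hC : ∀ t, 0 ≤ t → ENNReal.ofReal t < T →
      (∫⁻ x, ENNReal.ofReal |w t x| ≤ ENNReal.ofReal C) ∧ ∀ x, |w t x| ≤ C)
    {t : ℝ} (ht : 0 ≤ t) (htT : ENNReal.ofReal t < T) :
    ContDiff ℝ 2 (w t) ∧ Integrable (w t) ∧ ∫ x, |w t x| ≤ C := by
  have h1 : ContDiff ℝ 2 (w t) := by
    have h : ContDiff ℝ 2 fun x : EuclideanSpace ℝ (Fin N) => (t, x) := by fun_prop
    have h2 : ContDiffOn ℝ 2 (fun p : ℝ × EuclideanSpace ℝ (Fin N) => w p.1 p.2)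
        {p : ℝ × EuclideanSpace ℝ (Fin N) | 0 ≤ p.1 ∧ ENNReal.ofReal p.1 < T} :=
      ContDiffOn.of_le hsmooth (WithTop.coe_le_coe.2 (le_top : (2 : ℕ∞) ≤ ⊤))
    exact h2.comp_contDiff h fun x => ⟨ht, htT⟩
  have hC0 : 0 ≤ C := (abs_nonneg _).trans ((hC t ht htT).2 0)
  have h2 : Integrable (w t) := by
    refine ⟨h1.continuous.aestronglyMeasurable, ?_⟩
    rw [hasFiniteIntegral_iff_norm]
    exact (hC t ht htT).1.trans_lt ENNReal.ofReal_lt_top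
  refine ⟨h1, h2, ?_⟩
  rw [integral_eq_lintegral_of_nonneg_ae (Eventually.of_forall fun x => abs_nonneg _)
    h1.continuous.abs.aestronglyMeasurable]
  exact ENNReal.toReal_le_of_le_ofReal hC0 (hC t ht htT).1

/-- Decay of `∫ η(w)` for an entropy `η` whose derivative `β` is strongly monotone. The strong
monotonicity absorbs the commutator produced by the cutoff. -/
theorem entropy_strong
    {N : ℕ} (hN : 1 ≤ N) {α : ℝ} (hα2 : α < 2) {ζ : ℝ≥0∞}
    {ω : ℝ} (hω0 : 0 ≤ ω) (hωα : ω < α) {Λ : ℝ} (hΛ : 1 ≤ Λ) {ν : ℝ} {s₀ : ℝ≥0∞} {τ : ℝ}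
    (hcase : 1 ≤ α → α - 1 < ν ∧ 0 < s₀ ∧ 0 ≤ τ) {T : ℝ≥0∞}
    {K : ℝ → EuclideanSpace ℝ (Fin N) → EuclideanSpace ℝ (Fin N) → ℝ}
    (hK : WeakStarKernel N T K α ζ ω Λ ν s₀ τ)
    {w : ℝ → EuclideanSpace ℝ (Fin N) → ℝ} (hsmooth : SmoothOnDomain N T w)
    {C : ℝ} (hC : ∀ t, 0 ≤ t → ENNReal.ofReal t < T →
      (∫⁻ x, ENNReal.ofReal |w t x| ≤ ENNReal.ofReal C) ∧ ∀ x, |w t x| ≤ C)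
    (hsol : IsLinSolution N T K w)
    {η β : ℝ → ℝ} (hη : ∀ u, HasDerivAt η (β u) u) (hβ : Continuous β) {c Lb : ℝ} (hc : 0 < c)
    (hLb : 0 ≤ Lb)
    (hmono : ∀ a b, |a| ≤ C → |b| ≤ C → c * (a - b) ^ 2 ≤ (a - b) * (β a - β b))
    (hβL : ∀ a, |a| ≤ C → |β a| ≤ Lb * |a|)
    (hηL : ∀ a, |a| ≤ C → |η a| ≤ Lb * |a|)
    {s t : ℝ} (hs : 0 ≤ s) (hst : s < t) (htT : ENNReal.ofReal t < T) :
    ∫ x, η (w t x) ≤ ∫ x, η (w s x) := by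
  have hηc : Continuous η := continuous_iff_continuousAt.2 fun u => (hη u).continuousAt
  have hdom : ∀ a ∈ Icc s t, 0 ≤ a ∧ ENNReal.ofReal a < T := fun a ha =>
    ⟨hs.trans ha.1, (ENNReal.ofReal_le_ofReal ha.2).trans_lt htT⟩
  have hC0 : 0 ≤ C := (abs_nonneg _).trans ((hC t (hs.trans hst.le) htT).2 0)
  obtain ⟨r, B, hr0, hr1, -, hB⟩ := drift_bound hN hα2 hω0 hωα hΛ hcase hK
  have hJ0 := domKer_nonneg (N := N) (α := α) (ω := ω) hΛ
  have hJi := domKer_integrable_min hN hα2 hω0 hωα hΛ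
  obtain ⟨hφJ, hV⟩ := tendsto_commutator (domKer_measurable N α ω Λ) hJ0 hJi
  have hL : ∀ a x, ∃ L : ℝ, 0 ≤ a → ENNReal.ofReal a < T → HasPVIntegral N K a (w a) x L ∧
      HasDerivWithinAt (fun s => w s x) (-L) (Set.Ici 0) a := by
    intro a x
    by_cases h : 0 ≤ a ∧ ENNReal.ofReal a < T
    · obtain ⟨L, hL⟩ := hsol a x h.1 h.2
      exact ⟨L, fun _ _ => hL⟩
    · exact ⟨0, fun h1 h2 => (h ⟨h1, h2⟩).elim⟩
  -- `L a x` is the principal value at time `a`, so that `∂ₜ w = -L` on the time domain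
  choose L hL using hL
  set V : ℝ → ℝ := fun R => ∫ z, min 1 (‖z‖ ^ 2 / R ^ 2) * domKer N α ω Λ z with hVdef
  -- an upper bound for `∫ β(w)²`, from the sup bound and the `L¹` bound of `w`
  set A := Lb ^ 2 * C * C with hA
  have hsub : Icc s t ×ˢ (univ : Set (EuclideanSpace ℝ (Fin N))) ⊆
      {p : ℝ × EuclideanSpace ℝ (Fin N) | 0 ≤ p.1 ∧ ENNReal.ofReal p.1 < T} :=
    fun p hp => hdom p.1 hp.1
  have hstep : ∀ R : ℝ, 1 ≤ R → ∫ x, cutoff R x ^ 2 * η (w t x) ≤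
      (∫ x, cutoff R x ^ 2 * η (w s x)) + (1 / (2 * c)) * (V R * A) * (t - s) := by
    intro R hR
    have hR0 : 0 < R := by linarith
    refine time_step (D := fun a x => -L a x) (β := β) (ρ := 2 * R) hst
      (ContDiffOn.continuousOn (hsmooth.mono hsub))
      (ContDiffOn.of_le (hsmooth.mono ((prod_mono Ioo_subset_Icc_self subset_rfl).trans hsub))
        (by exact_mod_cast le_top)) ?_ hη hβ
      (fun a ha x => (hC a (hdom a ha).1 (hdom a ha).2).2 x)
      (χ := fun x => cutoff R x ^ 2) ((cutoff_continuous R).pow 2)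
      (fun x hx => by simp [cutoff_eq_zero hR0 hx]) ?_
    · intro a ha x
      have ha' := hdom a (Ioo_subset_Icc_self ha)
      exact (hL a x ha'.1 ha'.2).2.hasDerivAt (Ici_mem_nhds (hs.trans_lt ha.1))
    · intro a ha
      have ha' := hdom a (Ioo_subset_Icc_self ha)
      obtain ⟨hw2, hwi, hw1⟩ := solution_slice hsmooth hC ha'.1 ha'.2
      have hwC := (hC a ha'.1 ha'.2).2
      have hen := energy_limit (μ := volume) (k := K a) (J := domKer N α ω Λ)
        (φ := fun z => min 1 (‖z‖ ^ 2 / R ^ 2)) (ψ := cutoff R) (ρ := 2 * R) (L := L a)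
        (hK.measurable.comp (measurable_const.prodMk measurable_id)) (hK.nonneg a)
        (fun x y => hK.symm a x y ha'.1 ha'.2.le) hJ0
        (fun x y hxy => kernel_le_domKer hK ha'.1 ha'.2.le hxy)
        (fun x z hz => kernel_le_domKer' hK ha'.1 ha'.2.le x hz)
        (fun ε hε => domKer_integrableOn_compl hN hα2 hω0 hωα hΛ hε) hJi hr0 hr1
        (hB a ha'.1 ha'.2.le) hw2 hwi hwC hβ.measurable hc hLb hmono hβL
        (cutoff_continuous R).measurable (cutoff_nonneg R) (cutoff_le_one R)
        (fun x hx => cutoff_eq_zero hR0 hx) (fun z => by positivity) (cutoff_sub_sq hR0)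
        (hφJ R hR) (fun x => (hL a x ha'.1 ha'.2).1)
      have hβ2 : ∫ x, β (w a x) ^ 2 ≤ A := by
        calc ∫ x, β (w a x) ^ 2 ≤ ∫ x, Lb ^ 2 * C * |w a x| := by
              refine integral_mono_of_nonneg (Eventually.of_forall fun x => sq_nonneg _)
                (hwi.abs.const_mul _) (Eventually.of_forall fun x => ?_)
              have h := hβL _ (hwC x)
              have hx := hwC x
              simp only
              rw [← sq_abs (β (w a x))]
              calc |β (w a x)| ^ 2 ≤ (Lb * |w a x|) ^ 2 := by gcongr
                _ = Lb ^ 2 * |w a x| * |w a x| := by ring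
                _ ≤ Lb ^ 2 * C * |w a x| := by gcongr
          _ = Lb ^ 2 * C * ∫ x, |w a x| := integral_const_mul _ _
          _ ≤ A := by rw [hA]; gcongr
      have hV0 : 0 ≤ V R := integral_nonneg fun z => by
        have := hJ0 z
        positivity
      have h2 : (1 / (2 * c)) * (V R * ∫ x, β (w a x) ^ 2) ≤ (1 / (2 * c)) * (V R * A) := by
        gcongr
      have h3 : ∫ x, cutoff R x ^ 2 * β (w a x) * -L a x
          = -∫ x, cutoff R x ^ 2 * β (w a x) * L a x := by
        rw [← integral_neg]; congr 1; ext x; ring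
      rw [h3]
      simp only [hVdef] at h2 ⊢
      linarith
  have hlim : ∀ a ∈ Icc s t, Tendsto (fun R : ℝ => ∫ x, cutoff R x ^ 2 * η (w a x)) atTop
      (nhds (∫ x, η (w a x))) := by
    intro a ha
    obtain ⟨hw2, hwi, -⟩ := solution_slice hsmooth hC (hdom a ha).1 (hdom a ha).2
    have hwC := (hC a (hdom a ha).1 (hdom a ha).2).2
    refine tendsto_integral_filter_of_dominated_convergence (fun x => Lb * |w a x|) ?_ ?_
      (hwi.abs.const_mul _) ?_
    · exact Eventually.of_forall fun R =>
        (((cutoff_continuous R).pow 2).mul (hηc.comp hw2.continuous)).aestronglyMeasurable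
    · refine Eventually.of_forall fun R => Eventually.of_forall fun x => ?_
      rw [norm_mul, Real.norm_of_nonneg (sq_nonneg _)]
      calc _ ≤ 1 * ‖η (w a x)‖ := by
            gcongr; exact pow_le_one₀ (cutoff_nonneg R x) (cutoff_le_one R x)
        _ ≤ _ := by rw [one_mul]; exact hηL _ (hwC x)
    · refine Eventually.of_forall fun x => ?_
      refine tendsto_const_nhds.congr' ?_
      filter_upwards [eventually_ge_atTop ‖x‖, eventually_gt_atTop 0] with R h1 h2
      rw [cutoff_eq_one h2 h1]; ring
  have hlim2 := (hlim s (left_mem_Icc.2 hst.le)).add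
    (((hV.mul_const A).const_mul (1 / (2 * c))).mul_const (t - s))
  have := le_of_tendsto_of_tendsto (hlim t (right_mem_Icc.2 hst.le)) hlim2
    (by filter_upwards [eventually_ge_atTop (1 : ℝ)] with R hR using hstep R hR)
  simpa using this

/-- Decay of `∫ η(w)` for a convex entropy `η`, obtained from the strongly convex
entropies `η + δ u²`. -/
theorem entropy_noninc
    {N : ℕ} (hN : 1 ≤ N) {α : ℝ} (hα2 : α < 2) {ζ : ℝ≥0∞}
    {ω : ℝ} (hω0 : 0 ≤ ω) (hωα : ω < α) {Λ : ℝ} (hΛ : 1 ≤ Λ) {ν : ℝ} {s₀ : ℝ≥0∞} {τ : ℝ}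
    (hcase : 1 ≤ α → α - 1 < ν ∧ 0 < s₀ ∧ 0 ≤ τ) {T : ℝ≥0∞}
    {K : ℝ → EuclideanSpace ℝ (Fin N) → EuclideanSpace ℝ (Fin N) → ℝ}
    (hK : WeakStarKernel N T K α ζ ω Λ ν s₀ τ)
    {w : ℝ → EuclideanSpace ℝ (Fin N) → ℝ} (hsmooth : SmoothOnDomain N T w)
    {C : ℝ} (hC : ∀ t, 0 ≤ t → ENNReal.ofReal t < T →
      (∫⁻ x, ENNReal.ofReal |w t x| ≤ ENNReal.ofReal C) ∧ ∀ x, |w t x| ≤ C)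
    (hsol : IsLinSolution N T K w)
    {η β : ℝ → ℝ} (hη : ∀ u, HasDerivAt η (β u) u) (hβ : Continuous β) {Lb : ℝ}
    (hLb : 0 ≤ Lb) (hmono : Monotone β)
    (hβL : ∀ a, |a| ≤ C → |β a| ≤ Lb * |a|)
    (hηL : ∀ a, |a| ≤ C → |η a| ≤ Lb * |a|)
    {s t : ℝ} (hs : 0 ≤ s) (hst : s < t) (htT : ENNReal.ofReal t < T) :
    ∫ x, η (w t x) ≤ ∫ x, η (w s x) := by
  have hηc : Continuous η := continuous_iff_continuousAt.2 fun u => (hη u).continuousAt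
  have hsT : ENNReal.ofReal s < T := (ENNReal.ofReal_le_ofReal hst.le).trans_lt htT
  have ht : 0 ≤ t := hs.trans hst.le
  have hC0 : 0 ≤ C := (abs_nonneg _).trans ((hC t ht htT).2 0)
  have hint : ∀ a, 0 ≤ a → ENNReal.ofReal a < T → Integrable (fun x => η (w a x)) ∧
      Integrable (fun x => w a x ^ 2) := by
    intro a ha haT
    obtain ⟨hw2, hwi, -⟩ := solution_slice hsmooth hC ha haT
    have hwC := (hC a ha haT).2
    refine ⟨(hwi.abs.const_mul Lb).mono' (hηc.comp hw2.continuous).aestronglyMeasurable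
      (Eventually.of_forall fun x => hηL _ (hwC x)),
      (hwi.abs.const_mul C).mono' (hw2.continuous.pow 2).aestronglyMeasurable
      (Eventually.of_forall fun x => ?_)⟩
    rw [Real.norm_of_nonneg (sq_nonneg _), ← sq_abs, pow_two]
    gcongr
    exact hwC x
  have hδ : ∀ δ : ℝ, 0 < δ → (∫ x, η (w t x)) + δ * (∫ x, w t x ^ 2) ≤
      (∫ x, η (w s x)) + δ * (∫ x, w s x ^ 2) := by
    intro δ hδ
    have h := entropy_strong hN hα2 hω0 hωα hΛ hcase hK hsmooth hC hsol
      (η := fun u => η u + δ * u ^ 2) (β := fun u => β u + 2 * δ * u) (c := 2 * δ)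
      (Lb := Lb + 2 * δ + δ * C)
      (fun u => by
        have := (hη u).add ((hasDerivAt_pow 2 u).const_mul δ)
        exact this.congr_deriv (by push_cast; ring))
      (by fun_prop) (by positivity) (by positivity)
      (fun a b _ _ => by
        have h1 : 0 ≤ (a - b) * (β a - β b) := by
          rcases le_total a b with hab | hab
          · exact mul_nonneg_of_nonpos_of_nonpos (by linarith) (by linarith [hmono hab])
          · exact mul_nonneg (by linarith) (by linarith [hmono hab])
        nlinarith)
      (fun a ha => by
        refine (abs_add_le _ _).trans ?_
        rw [abs_mul (2 * δ), abs_of_pos (by positivity : 0 < 2 * δ)]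
        have h1 := hβL a ha
        have h2 : 0 ≤ δ * C * |a| := by positivity
        linarith)
      (fun a ha => by
        refine (abs_add_le _ _).trans ?_
        rw [abs_mul δ, abs_of_pos hδ, abs_pow, pow_two]
        have h1 := hηL a ha
        have h2 : δ * (|a| * |a|) ≤ δ * (C * |a|) := by gcongr
        have h3 : 0 ≤ 2 * δ * |a| := by positivity
        linarith)
      hs hst htT
    obtain ⟨ht1, ht2⟩ := hint t ht htT
    obtain ⟨hs1, hs2⟩ := hint s hs hsT
    rwa [integral_add ht1 (ht2.const_mul δ), integral_add hs1 (hs2.const_mul δ),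
      integral_const_mul, integral_const_mul] at h
  have hl : ∀ a b : ℝ, Tendsto (fun δ : ℝ => a + δ * b) (nhdsWithin 0 (Ioi 0)) (nhds a) := by
    intro a b
    have : Tendsto (fun δ : ℝ => a + δ * b) (nhds 0) (nhds (a + 0 * b)) :=
      (by fun_prop : Continuous fun δ : ℝ => a + δ * b).tendsto 0
    simpa using this.mono_left nhdsWithin_le_nhds
  exact le_of_tendsto_of_tendsto (hl _ _) (hl _ _)
    (by filter_upwards [self_mem_nhdsWithin] with δ h using hδ δ h)

/-! ### Entropies for the Lebesgue norms -/

theorem hasDerivAt_posPart_sq (v : ℝ) :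
    HasDerivAt (fun v : ℝ => max v 0 ^ 2) (2 * max v 0) v := by
  have hne : ∀ y : ℝ, y ≠ 0 → HasDerivAt (fun v : ℝ => max v 0 ^ 2) (2 * max y 0) y := by
    intro y hy
    rcases lt_or_gt_of_ne hy with h | h
    · rw [max_eq_right h.le, mul_zero]
      refine (hasDerivAt_const y (0 : ℝ)).congr_of_eventuallyEq ?_
      filter_upwards [Iio_mem_nhds h] with z hz
      rw [max_eq_right (le_of_lt hz)]; norm_num
    · rw [max_eq_left h.le]
      refine ((hasDerivAt_pow 2 y).congr_deriv (by norm_num)).congr_of_eventuallyEq ?_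
      filter_upwards [Ioi_mem_nhds h] with z hz
      rw [max_eq_left (le_of_lt hz)]
  by_cases hv : v = 0
  · subst hv
    exact hasDerivAt_of_hasDerivAt_of_ne (f := fun v : ℝ => max v 0 ^ 2) (g := fun v => 2 * max v 0)
      hne (by fun_prop) (by fun_prop)
  · exact hne v hv

/-- The squared distance to `[-M, M]`, a convex entropy that detects `|u| ≤ M`. -/
def distEntropy (M u : ℝ) : ℝ := max (u - M) 0 ^ 2 + max (-u - M) 0 ^ 2

/-- The derivative of `distEntropy M`. -/
def distEntropyDeriv (M u : ℝ) : ℝ := 2 * max (u - M) 0 - 2 * max (-u - M) 0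

theorem distEntropy_hasDerivAt (M u : ℝ) :
    HasDerivAt (distEntropy M) (distEntropyDeriv M u) u := by
  have h1 := (hasDerivAt_posPart_sq (u - M)).comp u ((hasDerivAt_id u).sub_const M)
  have h2 := (hasDerivAt_posPart_sq (-u - M)).comp u ((hasDerivAt_id u).neg.sub_const M)
  exact (h1.add h2).congr_deriv (by unfold distEntropyDeriv; ring)

theorem distEntropyDeriv_mono (M : ℝ) : Monotone (distEntropyDeriv M) := by
  intro a b hab
  unfold distEntropyDeriv
  have h1 : max (a - M) 0 ≤ max (b - M) 0 := by gcongr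
  have h2 : max (-b - M) 0 ≤ max (-a - M) 0 := by gcongr
  linarith

theorem distEntropy_nonneg (M u : ℝ) : 0 ≤ distEntropy M u := by
  unfold distEntropy; positivity

theorem distEntropy_eq_zero_iff {M u : ℝ} : distEntropy M u = 0 ↔ |u| ≤ M := by
  unfold distEntropy
  rw [add_eq_zero_iff_of_nonneg (sq_nonneg _) (sq_nonneg _), pow_eq_zero_iff two_ne_zero,
    pow_eq_zero_iff two_ne_zero, max_eq_right_iff, max_eq_right_iff, abs_le]
  constructor <;> rintro ⟨h1, h2⟩ <;> constructor <;> linarith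

theorem distEntropy_posPart_le {M u : ℝ} (hM : 0 ≤ M) :
    max (u - M) 0 ≤ |u| ∧ max (-u - M) 0 ≤ |u| :=
  ⟨max_le (by linarith [le_abs_self u]) (abs_nonneg _),
    max_le (by linarith [neg_abs_le u]) (abs_nonneg _)⟩

theorem distEntropyDeriv_abs_le {M u : ℝ} (hM : 0 ≤ M) : |distEntropyDeriv M u| ≤ 2 * |u| := by
  obtain ⟨h1, h2⟩ := distEntropy_posPart_le (u := u) hM
  have h3 := le_max_right (u - M) 0
  have h4 := le_max_right (-u - M) 0
  unfold distEntropyDeriv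
  rw [abs_le]
  constructor <;> linarith

theorem distEntropy_abs_le {M u : ℝ} (hM : 0 ≤ M) : |distEntropy M u| ≤ 2 * |u| ^ 2 := by
  obtain ⟨h1, h2⟩ := distEntropy_posPart_le (u := u) hM
  rw [abs_of_nonneg (distEntropy_nonneg M u)]
  unfold distEntropy
  have : max (u - M) 0 ^ 2 ≤ |u| ^ 2 := by gcongr
  have : max (-u - M) 0 ^ 2 ≤ |u| ^ 2 := by gcongr
  linarith

/-- A smooth convex approximation of `|u|^q`, normalized to vanish at the origin. -/
def powEntropy (q e u : ℝ) : ℝ := (u ^ 2 + e) ^ (q / 2) - e ^ (q / 2)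

/-- The derivative of `powEntropy q e`. -/
def powEntropyDeriv (q e u : ℝ) : ℝ := q * u * (u ^ 2 + e) ^ (q / 2 - 1)

theorem powEntropy_hasDerivAt {e : ℝ} (q : ℝ) (he : 0 < e) (u : ℝ) :
    HasDerivAt (powEntropy q e) (powEntropyDeriv q e u) u := by
  have hpos : 0 < u ^ 2 + e := by positivity
  have h1 : HasDerivAt (fun u : ℝ => u ^ 2 + e) (2 * u) u :=
    ((hasDerivAt_pow 2 u).add_const e).congr_deriv (by norm_num)
  exact ((h1.rpow_const (p := q / 2) (Or.inl hpos.ne')).sub_const (e ^ (q / 2))).congr_deriv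
    (by unfold powEntropyDeriv; ring)

theorem powEntropyDeriv_continuous {e : ℝ} (q : ℝ) (he : 0 < e) :
    Continuous (powEntropyDeriv q e) := by
  unfold powEntropyDeriv
  refine (continuous_const.mul continuous_id).mul (Continuous.rpow_const (by fun_prop) fun u => ?_)
  exact Or.inl (by positivity)

theorem powEntropyDeriv_mono {q e : ℝ} (hq : 1 ≤ q) (he : 0 < e) :
    Monotone (powEntropyDeriv q e) := by
  have hd : ∀ u, HasDerivAt (powEntropyDeriv q e)
      (q * (u ^ 2 + e) ^ (q / 2 - 1 - 1) * ((q - 1) * u ^ 2 + e)) u := by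
    intro u
    have hpos : 0 < u ^ 2 + e := by positivity
    have h1 : HasDerivAt (fun u : ℝ => u ^ 2 + e) (2 * u) u :=
      ((hasDerivAt_pow 2 u).add_const e).congr_deriv (by norm_num)
    have h2 := (h1.rpow_const (p := q / 2 - 1) (Or.inl hpos.ne'))
    have h3 := ((hasDerivAt_id u).const_mul q).mul h2
    refine h3.congr_deriv ?_
    have e1 : (u ^ 2 + e) ^ (q / 2 - 1) = (u ^ 2 + e) ^ (q / 2 - 1 - 1) * (u ^ 2 + e) := by
      rw [← Real.rpow_add_one hpos.ne']; ring_nf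
    simp only [id]
    rw [e1]; ring
  refine monotone_of_deriv_nonneg (fun u => (hd u).differentiableAt) fun u => ?_
  rw [(hd u).deriv]
  have : 0 ≤ q - 1 := by linarith
  have : 0 ≤ q := by linarith
  positivity

/-- The derivative of the approximate power is bounded uniformly in `e ≤ 1`. -/
theorem powEntropyDeriv_abs_le {q e C u : ℝ} (hq : 1 ≤ q) (he : 0 < e) (he1 : e ≤ 1)
    (hu : |u| ≤ C) : |powEntropyDeriv q e u| ≤ q * (C ^ 2 + 1) ^ ((q - 1) / 2) := by
  have hpos : 0 < u ^ 2 + e := by positivity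
  have hq0 : 0 ≤ q := by linarith
  unfold powEntropyDeriv
  rw [abs_mul, abs_mul, abs_of_nonneg hq0, abs_of_nonneg (Real.rpow_nonneg hpos.le _), mul_assoc]
  gcongr
  have h1 : |u| ≤ (u ^ 2 + e) ^ (1 / 2 : ℝ) := by
    rw [← Real.sqrt_eq_rpow]
    exact Real.abs_le_sqrt (by linarith)
  calc |u| * (u ^ 2 + e) ^ (q / 2 - 1)
      ≤ (u ^ 2 + e) ^ (1 / 2 : ℝ) * (u ^ 2 + e) ^ (q / 2 - 1) := by gcongr
    _ = (u ^ 2 + e) ^ ((q - 1) / 2) := by rw [← Real.rpow_add hpos]; ring_nf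
    _ ≤ (C ^ 2 + 1) ^ ((q - 1) / 2) := by
      have : u ^ 2 ≤ C ^ 2 := by rw [← sq_abs]; gcongr
      gcongr

theorem powEntropy_abs_le {q e C u : ℝ} (hq : 1 ≤ q) (he : 0 < e) (he1 : e ≤ 1)
    (hu : |u| ≤ C) : |powEntropy q e u| ≤ q * (C ^ 2 + 1) ^ ((q - 1) / 2) * |u| := by
  have hC0 : 0 ≤ C := (abs_nonneg u).trans hu
  have h := (convex_Icc (-C) C).norm_image_sub_le_of_norm_hasDerivWithin_le
    (f := powEntropy q e) (f' := powEntropyDeriv q e) (C := q * (C ^ 2 + 1) ^ ((q - 1) / 2))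
    (fun v _ => (powEntropy_hasDerivAt q he v).hasDerivWithinAt)
    (fun v hv => powEntropyDeriv_abs_le hq he he1 (abs_le.2 hv))
    (x := 0) (y := u) ⟨by linarith, hC0⟩ (abs_le.1 hu)
  have h0 : powEntropy q e 0 = 0 := by simp [powEntropy]
  simpa [h0] using h

theorem powEntropyDeriv_linear {q e : ℝ} (C : ℝ) (he : 0 < e) :
    ∃ M : ℝ, 0 ≤ M ∧ ∀ u, |u| ≤ C → |powEntropyDeriv q e u| ≤ M * |u| := by
  have hc : Continuous fun u : ℝ => q * (u ^ 2 + e) ^ (q / 2 - 1) :=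
    continuous_const.mul (Continuous.rpow_const (by fun_prop) fun u => Or.inl (by positivity))
  obtain ⟨M, hM⟩ := (isCompact_Icc (a := -C) (b := C)).exists_bound_of_continuousOn hc.continuousOn
  refine ⟨max M 0, le_max_right _ _, fun u hu => ?_⟩
  have h := (hM u (abs_le.1 hu)).trans (le_max_left M 0)
  have e1 : powEntropyDeriv q e u = q * (u ^ 2 + e) ^ (q / 2 - 1) * u := by
    unfold powEntropyDeriv; ring
  rw [e1, abs_mul]
  gcongr
  exact h

theorem powEntropy_tendsto {q : ℝ} (hq : 1 ≤ q) (u : ℝ) :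
    Tendsto (fun e => powEntropy q e u) (nhdsWithin 0 (Ioi 0)) (nhds (|u| ^ q)) := by
  have hq2 : 0 ≤ q / 2 := by linarith
  have hc : Continuous fun e : ℝ => powEntropy q e u := by
    unfold powEntropy
    exact (Continuous.rpow_const (by fun_prop) fun _ => Or.inr hq2).sub
      (Continuous.rpow_const (by fun_prop) fun _ => Or.inr hq2)
  have h := (hc.tendsto 0).mono_left (nhdsWithin_le_nhds (s := Ioi 0))
  have e0 : powEntropy q 0 u = |u| ^ q := by
    unfold powEntropy
    rw [Real.zero_rpow (by linarith), add_zero, sub_zero, ← sq_abs, ← Real.rpow_natCast,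
      ← Real.rpow_mul (abs_nonneg u)]
    congr 1
    push_cast; ring
  rwa [e0] at h

/-- Non-increasing `L^p` norms (Lemma 2.3 (II) of the paper): for a smooth
solution `w` and any `1 ≤ p ≤ ∞`, `‖w(t,·)‖_{L^p} ≤ ‖w(s,·)‖_{L^p}` for `s < t`. -/
theorem Lp_norm_nonincreasing
    (N : ℕ) (hN : 1 ≤ N)
    (α : ℝ) (hα0 : 0 < α) (hα2 : α < 2)
    (ζ : ℝ≥0∞) (hζ : 0 < ζ)
    (ω : ℝ) (hω0 : 0 ≤ ω) (hωα : ω < α)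
    (Λ : ℝ) (hΛ : 1 ≤ Λ)
    (ν : ℝ) (s₀ : ℝ≥0∞) (τ : ℝ)
    (hcase : 1 ≤ α → α - 1 < ν ∧ ν < 1 ∧ 0 < s₀ ∧ 0 ≤ τ ∧ ν + ω < min (N : ℝ) α)
    (T : ℝ≥0∞)
    (K : ℝ → EuclideanSpace ℝ (Fin N) → EuclideanSpace ℝ (Fin N) → ℝ)
    (hK : WeakStarKernel N T K α ζ ω Λ ν s₀ τ)
    (w : ℝ → EuclideanSpace ℝ (Fin N) → ℝ)
    (hsmooth : SmoothOnDomain N T w)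
    (hbdd : BddL1Linfty N T w)
    (hsol : IsLinSolution N T K w) :
    ∀ p : ℝ≥0∞, 1 ≤ p →
      ∀ s t : ℝ, 0 ≤ s → s < t → ENNReal.ofReal t < T →
        eLpNorm (w t) p volume ≤ eLpNorm (w s) p volume := by
  intro p hp s t hs hst htT
  have hcase' : 1 ≤ α → α - 1 < ν ∧ 0 < s₀ ∧ 0 ≤ τ := fun h =>
    ⟨(hcase h).1, (hcase h).2.2.1, (hcase h).2.2.2.1⟩
  obtain ⟨C, hC⟩ := hbdd
  have hsT : ENNReal.ofReal s < T := (ENNReal.ofReal_le_ofReal hst.le).trans_lt htT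
  have ht : 0 ≤ t := hs.trans hst.le
  have hC0 : 0 ≤ C := (abs_nonneg _).trans ((hC t ht htT).2 0)
  rcases eq_or_ne p ∞ with rfl | hp'
  · have hfin : eLpNorm (w s) ∞ volume ≠ ∞ := by
      rw [eLpNorm_exponent_top]
      exact ((eLpNormEssSup_le_of_ae_bound
        (Eventually.of_forall (hC s hs hsT).2)).trans_lt ENNReal.ofReal_lt_top).ne
    set M := (eLpNorm (w s) ∞ volume).toReal with hM
    have hM0 : 0 ≤ M := ENNReal.toReal_nonneg
    have hsM : ∀ᵐ x, |w s x| ≤ M := by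
      filter_upwards [ae_le_eLpNormEssSup (f := w s) (μ := volume)] with x hx
      rw [← eLpNorm_exponent_top] at hx
      exact ENNReal.toReal_mono hfin hx
    have hmain := entropy_noninc hN hα2 hω0 hωα hΛ hcase' hK hsmooth hC hsol
      (η := distEntropy M) (β := distEntropyDeriv M) (Lb := 2 + 2 * C)
      (distEntropy_hasDerivAt M) (by unfold distEntropyDeriv; fun_prop) (by positivity)
      (distEntropyDeriv_mono M)
      (fun a _ => (distEntropyDeriv_abs_le hM0).trans (by gcongr; linarith))
      (fun a ha => (distEntropy_abs_le hM0).trans (by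
        nlinarith [abs_nonneg a, mul_le_mul_of_nonneg_right ha (abs_nonneg a)]))
      hs hst htT
    have hs0 : ∫ x, distEntropy M (w s x) = 0 := by
      refine integral_eq_zero_of_ae ?_
      filter_upwards [hsM] with x hx using distEntropy_eq_zero_iff.2 hx
    obtain ⟨hwt2, hwti, -⟩ := solution_slice hsmooth hC ht htT
    have hηc : Continuous (distEntropy M) :=
      continuous_iff_continuousAt.2 fun u => (distEntropy_hasDerivAt M u).continuousAt
    have hti : Integrable fun x => distEntropy M (w t x) := by
      refine (hwti.abs.const_mul (2 * C)).mono' (hηc.comp hwt2.continuous).aestronglyMeasurable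
        (Eventually.of_forall fun x => (distEntropy_abs_le hM0).trans ?_)
      have := mul_le_mul_of_nonneg_right ((hC t ht htT).2 x) (abs_nonneg (w t x))
      nlinarith
    have ht0 : ∫ x, distEntropy M (w t x) = 0 :=
      le_antisymm (hmain.trans hs0.le) (integral_nonneg fun x => distEntropy_nonneg _ _)
    rw [integral_eq_zero_iff_of_nonneg (fun x => distEntropy_nonneg _ _) hti] at ht0
    have htM : ∀ᵐ x, ‖w t x‖ ≤ M := by
      filter_upwards [ht0] with x hx using distEntropy_eq_zero_iff.1 hx
    calc eLpNorm (w t) ∞ volume ≤ ENNReal.ofReal M := by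
          rw [eLpNorm_exponent_top]; exact eLpNormEssSup_le_of_ae_bound htM
      _ = eLpNorm (w s) ∞ volume := ENNReal.ofReal_toReal hfin
  · have hp0 : p ≠ 0 := (zero_lt_one.trans_le hp).ne'
    set q := p.toReal with hqdef
    have hq : 1 ≤ q := by
      have := ENNReal.toReal_mono hp' hp
      simpa using this
    set B := q * (C ^ 2 + 1) ^ ((q - 1) / 2) with hB
    have hB0 : 0 ≤ B := by positivity
    have hsmall : ∀ᶠ e : ℝ in nhdsWithin 0 (Ioi 0), 0 < e ∧ e ≤ 1 := by
      filter_upwards [Ioc_mem_nhdsGT (zero_lt_one (α := ℝ))] with e he using he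
    have hle : ∀ e : ℝ, 0 < e → e ≤ 1 →
        ∫ x, powEntropy q e (w t x) ≤ ∫ x, powEntropy q e (w s x) := by
      intro e he he1
      obtain ⟨M, hM0, hM⟩ := powEntropyDeriv_linear (q := q) C he
      exact entropy_noninc hN hα2 hω0 hωα hΛ hcase' hK hsmooth hC hsol
        (Lb := M + B) (powEntropy_hasDerivAt q he) (powEntropyDeriv_continuous q he)
        (by positivity) (powEntropyDeriv_mono hq he)
        (fun a ha => (hM a ha).trans (by gcongr; linarith))
        (fun a ha => (powEntropy_abs_le hq he he1 ha).trans (by gcongr; linarith))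
        hs hst htT
    have hlim : ∀ a, 0 ≤ a → ENNReal.ofReal a < T →
        Tendsto (fun e => ∫ x, powEntropy q e (w a x)) (nhdsWithin 0 (Ioi 0))
          (nhds (∫ x, ‖w a x‖ ^ q)) ∧ MemLp (w a) p := by
      intro a ha haT
      obtain ⟨hw2, hwi, -⟩ := solution_slice hsmooth hC ha haT
      have hwC := (hC a ha haT).2
      constructor
      · refine tendsto_integral_filter_of_dominated_convergence (fun x => B * |w a x|) ?_ ?_
          (hwi.abs.const_mul _) (Eventually.of_forall fun x => powEntropy_tendsto hq _)
        · filter_upwards [hsmall] with e he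
          have hc : Continuous (powEntropy q e) := continuous_iff_continuousAt.2 fun u =>
            (powEntropy_hasDerivAt q he.1 u).continuousAt
          exact (hc.comp hw2.continuous).aestronglyMeasurable
        · filter_upwards [hsmall] with e he
          exact Eventually.of_forall fun x => powEntropy_abs_le hq he.1 he.2 (hwC x)
      · rw [← integrable_norm_rpow_iff hw2.continuous.aestronglyMeasurable hp0 hp']
        refine (hwi.abs.const_mul B).mono' ?_ (Eventually.of_forall fun x => ?_)
        · exact (hw2.continuous.norm.rpow_const
            fun _ => Or.inr (by linarith)).aestronglyMeasurable
        · rw [Real.norm_of_nonneg (by positivity)]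
          refine le_of_tendsto (powEntropy_tendsto hq (w a x)) ?_
          filter_upwards [hsmall] with e he
          exact (le_abs_self _).trans (powEntropy_abs_le hq he.1 he.2 (hwC x))
    obtain ⟨hlt, hmt⟩ := hlim t ht htT
    obtain ⟨hls, hms⟩ := hlim s hs hsT
    have hfin := le_of_tendsto_of_tendsto hlt hls
      (by filter_upwards [hsmall] with e he using hle e he.1 he.2)
    rw [hmt.eLpNorm_eq_integral_rpow_norm hp0 hp', hms.eLpNorm_eq_integral_rpow_norm hp0 hp']
    gcongr

end
end
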